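/- arXiv:2601.20018 — 3 statements merged into one kernel-verified Lean document; each statement's English description precedes it below -/
import Mathlib

section
/- There exists a universal constant K > 0 such that the following holds. Let N ≥ 20 and let W = [w(i,j,k,ℓ)] ∈ R^{N×N×N×N} be a fixed tensor, and let Q_w := Σ_{i,j∈[N]} w(i,j,π(i),π(j)). Define B_a := N · max_{i,j∈[N]} |a_w(i,j)|, V_a := N Σ_{i,j∈[N]} a_w(i,j)², B_d := max_{σ∈S_N} ‖ [ d_w(i,j,σ(i),σ(j)) ]_{i,j∈[N]} ‖_op, ξ_w(i,k) := d_w(i,i,k,k) − (1/N) Σ_{k'=1}^N d_w(i,i,k',k') − (1/N) Σ_{i'=1}^N d_w(i',i',k,k) + (1/N²) Σ_{i',k'∈[N]} d_w(i',i',k',k'), and V_d := (1/N) Σ_{i,k∈[N]} ξ_w(i,k)² + (1/N²) Σ_{i,j,k,ℓ∈[N]} d_w(i,j,k,ℓ)², and assume V_a + B_a > 0 and V_d + B_d > 0. Then for every t > 0: P( Q_w − E[Q_w] ≥ t ) ≤ exp( − K t² / ( V_a + B_a t ) ) + exp( − K t² / ( V_d + B_d t ) ). -/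
open scoped BigOperators Classical

/-- Spectral (operator) norm of a real matrix. -/
noncomputable def opNorm {m n : ℕ} (M : Matrix (Fin m) (Fin n) ℝ) : ℝ :=
  ‖LinearMap.toContinuousLinearMap (Matrix.toEuclideanLin M)‖

/-- Expectation of `f` under the uniform distribution on `S_N`. -/
noncomputable def permExp (N : ℕ) (f : Equiv.Perm (Fin N) → ℝ) : ℝ :=
  (∑ σ : Equiv.Perm (Fin N), f σ) / (Nat.factorial N : ℝ)

/-- Probability of an event under the uniform distribution on `S_N`. -/
noncomputable def permProb (N : ℕ) (p : Equiv.Perm (Fin N) → Prop) : ℝ :=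
  ((Finset.univ.filter p).card : ℝ) / (Nat.factorial N : ℝ)

/-- The single-indexed part `a_w` of the Hoeffding-type decomposition. -/
noncomputable def aw (N : ℕ) (w : Fin N → Fin N → Fin N → Fin N → ℝ) (i j : Fin N) : ℝ :=
  (∑ j', ∑ l', w i j' j l') / (N : ℝ) ^ 2
    - (∑ j', ∑ k', ∑ l', w i j' k' l') / (N : ℝ) ^ 3
    - (∑ i', ∑ j', ∑ l', w i' j' j l') / (N : ℝ) ^ 3
    + (∑ i', ∑ j', ∑ k', ∑ l', w i' j' k' l') / (N : ℝ) ^ 4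
    + (∑ i', ∑ k', w i' i k' j) / (N : ℝ) ^ 2
    - (∑ i', ∑ k', ∑ l', w i' i k' l') / (N : ℝ) ^ 3
    - (∑ i', ∑ j', ∑ k', w i' j' k' j) / (N : ℝ) ^ 3
    + (∑ i', ∑ j', ∑ k', ∑ l', w i' j' k' l') / (N : ℝ) ^ 4

/-- The degenerate part `d_w` of the Hoeffding-type decomposition. -/
noncomputable def dw (N : ℕ) (w : Fin N → Fin N → Fin N → Fin N → ℝ)
    (i j k l : Fin N) : ℝ :=
  w i j k l
    - (∑ j', ∑ k', ∑ l', w i j' k' l') / (N : ℝ) ^ 3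
    - (∑ i', ∑ k', ∑ l', w i' j k' l') / (N : ℝ) ^ 3
    - (∑ i', ∑ j', ∑ l', w i' j' k l') / (N : ℝ) ^ 3
    - (∑ i', ∑ j', ∑ k', w i' j' k' l) / (N : ℝ) ^ 3
    + (∑ k', ∑ l', w i j k' l') / (N : ℝ) ^ 2
    + (∑ j', ∑ l', w i j' k l') / (N : ℝ) ^ 2
    + (∑ j', ∑ k', w i j' k' l) / (N : ℝ) ^ 2
    + (∑ i', ∑ l', w i' j k l') / (N : ℝ) ^ 2
    + (∑ i', ∑ k', w i' j k' l) / (N : ℝ) ^ 2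
    + (∑ i', ∑ j', w i' j' k l) / (N : ℝ) ^ 2
    - (∑ l', w i j k l') / (N : ℝ)
    - (∑ k', w i j k' l) / (N : ℝ)
    - (∑ j', w i j' k l) / (N : ℝ)
    - (∑ i', w i' j k l) / (N : ℝ)
    + (∑ i', ∑ j', ∑ k', ∑ l', w i' j' k' l') / (N : ℝ) ^ 4

/-! Random transpositions satisfy a modified logarithmic Sobolev inequality (induction on the size,
by conditioning on one value `σ i`). With Herbst's argument it gives a Bernstein bound for any
statistic whose one-sided squared gradient has suitable exponential moments.

The Hoeffding projection splits the statistic into a linear part `∑ i, H(i, σ i)` and a degenerate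
quadratic part. The squared gradient of the linear part is dominated by a sum `∑ a, q(a, σ a)` with
`0 ≤ q`, which is self-bounding, so its exponential moments follow from the same inequality. The
squared gradient of the quadratic part is dominated by `∑ a, (∑ i, e(a, i, σ a, σ i)) ^ 2`. A random
two-colouring of the indices decouples `a` from `i`. Given the values on one colour class, the
statistic is again self-bounding; its conditional mean is a statistic of the same kind for an
averaged tensor, whose norm contracts as soon as the indices `i` range over a block of density at
most `1 / 128`, so one can induct.

The norm needed for this is that of `[e(a, i, σ a, ρ i)]` with two different permutations `σ` and
`ρ`. It is controlled by the case `σ = ρ`: after colouring positions and values, `σ` on the rows and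
`ρ` on the columns are values of a single permutation. -/

open Equiv

section Expect

variable {ι κ : Type*} [Fintype ι] [Fintype κ]

lemma expect_comp_equiv (e : ι ≃ κ) (f : κ → ℝ) : 𝔼 i, f (e i) = 𝔼 j, f j :=
  Fintype.expect_equiv e _ _ fun _ => rfl

lemma expect_univ_le_expect {f g : ι → ℝ} (h : ∀ i, f i ≤ g i) : 𝔼 i, f i ≤ 𝔼 i, g i :=
  Finset.expect_le_expect fun i _ => h i

variable [Nonempty ι]

lemma expect_univ_pos {f : ι → ℝ} (h : ∀ i, 0 < f i) : 0 < 𝔼 i, f i :=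
  Finset.expect_pos (fun i _ => h i) Finset.univ_nonempty

lemma convexOn_map_expect_le {s : Set ℝ} {φ : ℝ → ℝ} (hφ : ConvexOn ℝ s φ) {f : ι → ℝ}
    (hf : ∀ i, f i ∈ s) : φ (𝔼 i, f i) ≤ 𝔼 i, φ (f i) := by
  have h := hφ.map_sum_le (t := Finset.univ) (w := fun _ => (Fintype.card ι : ℝ)⁻¹) (p := f)
    (fun _ _ => by positivity) (by simp) (fun i _ => hf i)
  simpa only [Fintype.expect_eq_sum_div_card, div_eq_inv_mul, smul_eq_mul, Finset.mul_sum] using h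

lemma exp_expect_le (f : ι → ℝ) : Real.exp (𝔼 i, f i) ≤ 𝔼 i, Real.exp (f i) :=
  convexOn_map_expect_le convexOn_exp fun _ => Set.mem_univ _

lemma sq_expect_le (f : ι → ℝ) : (𝔼 i, f i) ^ 2 ≤ 𝔼 i, f i ^ 2 :=
  convexOn_map_expect_le even_two.convexOn_pow fun _ => Set.mem_univ _

lemma expect_log_le {f : ι → ℝ} (hf : ∀ i, 0 < f i) :
    𝔼 i, Real.log (f i) ≤ Real.log (𝔼 i, f i) := by
  rw [Real.le_log_iff_exp_le (expect_univ_pos hf)]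
  simpa only [Real.exp_log (hf _)] using exp_expect_le fun i => Real.log (f i)

end Expect

section Entropy

variable {ι : Type*} [Fintype ι]

/-- The summand `(x - y) (log x - log y)` of the Jeffreys divergence (the symmetrised
Kullback–Leibler divergence); it is the density of the Dirichlet form of `G` and `log G`. -/
noncomputable def jeffreys (x y : ℝ) : ℝ := (x - y) * (Real.log x - Real.log y)

/-- The entropy functional `𝔼 G log G - (𝔼 G) log (𝔼 G)` for the uniform distribution on `ι`. -/
noncomputable def entropy (G : ι → ℝ) : ℝ :=
  𝔼 i, G i * Real.log (G i) - (𝔼 i, G i) * Real.log (𝔼 i, G i)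

lemma jeffreys_self (x : ℝ) : jeffreys x x = 0 := by simp [jeffreys]

lemma jeffreys_comm (x y : ℝ) : jeffreys x y = jeffreys y x := by unfold jeffreys; ring

lemma jeffreys_nonneg {x y : ℝ} (hx : 0 < x) (hy : 0 < y) : 0 ≤ jeffreys x y := by
  unfold jeffreys
  rcases le_total x y with h | h
  · exact mul_nonneg_of_nonpos_of_nonpos (sub_nonpos.2 h) (sub_nonpos.2 (Real.log_le_log hx h))
  · exact mul_nonneg (sub_nonneg.2 h) (sub_nonneg.2 (Real.log_le_log hy h))

lemma exp_sub_exp_le (x y : ℝ) : Real.exp x - Real.exp y ≤ (x - y) * Real.exp x := by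
  have h := mul_le_mul_of_nonneg_left (Real.add_one_le_exp (y - x)) (Real.exp_pos x).le
  rw [← Real.exp_add, add_sub_cancel] at h
  linarith

lemma jeffreys_exp_le (x y : ℝ) :
    jeffreys (Real.exp x) (Real.exp y) ≤
      max (x - y) 0 ^ 2 * Real.exp x + max (y - x) 0 ^ 2 * Real.exp y := by
  wlog hxy : y ≤ x generalizing x y
  · rw [jeffreys_comm, add_comm]
    exact this y x (not_le.1 hxy).le
  have h := mul_le_mul_of_nonneg_right (exp_sub_exp_le x y) (sub_nonneg.2 hxy)
  rw [jeffreys, Real.log_exp, Real.log_exp, max_eq_left (sub_nonneg.2 hxy),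
    max_eq_right (sub_nonpos.2 hxy)]
  linarith

variable [Nonempty ι]

lemma log_sum_inequality {x y : ι → ℝ} (hx : ∀ i, 0 < x i) (hy : ∀ i, 0 < y i) :
    (𝔼 i, x i) * (Real.log (𝔼 i, x i) - Real.log (𝔼 i, y i)) ≤
      𝔼 i, x i * (Real.log (x i) - Real.log (y i)) := by
  have hX := expect_univ_pos hx
  have hY := expect_univ_pos hy
  set X := 𝔼 i, x i
  set Y := 𝔼 i, y i
  have tangent (i : ι) : x i * (Real.log X - Real.log Y) + (x i - y i * (X / Y)) ≤
      x i * (Real.log (x i) - Real.log (y i)) := by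
    have hr : 0 < y i * X / (x i * Y) := div_pos (mul_pos (hy i) hX) (mul_pos (hx i) hY)
    have h := mul_le_mul_of_nonneg_left (Real.log_le_sub_one_of_pos hr) (hx i).le
    rw [Real.log_div (mul_pos (hy i) hX).ne' (mul_pos (hx i) hY).ne',
      Real.log_mul (hy i).ne' hX.ne', Real.log_mul (hx i).ne' hY.ne'] at h
    have hxr : x i * (y i * X / (x i * Y)) = y i * (X / Y) := by
      have := (hx i).ne'
      field_simp
    linarith
  have h := expect_univ_le_expect tangent
  rw [Finset.expect_add_distrib, Finset.expect_sub_distrib, ← Finset.expect_mul,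
    ← Finset.expect_mul] at h
  change X * _ + (X - Y * (X / Y)) ≤ _ at h
  rwa [mul_div_cancel₀ _ hY.ne', sub_self, add_zero] at h

lemma jeffreys_expect_le {x y : ι → ℝ} (hx : ∀ i, 0 < x i) (hy : ∀ i, 0 < y i) :
    jeffreys (𝔼 i, x i) (𝔼 i, y i) ≤ 𝔼 i, jeffreys (x i) (y i) := by
  have hsplit : 𝔼 i, jeffreys (x i) (y i) = 𝔼 i, x i * (Real.log (x i) - Real.log (y i)) +
      𝔼 i, y i * (Real.log (y i) - Real.log (x i)) := by
    rw [← Finset.expect_add_distrib]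
    exact Finset.expect_congr rfl fun i _ => by unfold jeffreys; ring
  have hxy := log_sum_inequality hx hy
  have hyx := log_sum_inequality hy hx
  rw [hsplit, jeffreys]
  linarith

-- The Donsker–Varadhan duality between entropy and exponential moments.
lemma expect_mul_le_entropy_add {G : ι → ℝ} (hG : ∀ i, 0 < G i) (v : ι → ℝ) :
    𝔼 i, v i * G i ≤ entropy G + (𝔼 i, G i) * Real.log (𝔼 i, Real.exp (v i)) := by
  have h := log_sum_inequality hG fun i => Real.exp_pos (v i)
  simp only [Real.log_exp, mul_sub, Finset.expect_sub_distrib] at h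
  simp only [entropy, mul_comm (v _)]
  linarith

lemma entropy_const (c : ℝ) : entropy (fun _ : ι => c) = 0 := by
  simp [entropy]

lemma entropy_le_half_expect_jeffreys {g : ι → ℝ} (hg : ∀ i, 0 < g i) :
    entropy g ≤ (𝔼 k, 𝔼 l, jeffreys (g k) (g l)) / 2 := by
  have hcov : 𝔼 k, 𝔼 l, jeffreys (g k) (g l) =
      2 * (𝔼 k, g k * Real.log (g k) - (𝔼 k, g k) * 𝔼 k, Real.log (g k)) := by
    have hexpand (k l : ι) : jeffreys (g k) (g l) = g k * Real.log (g k) + g l * Real.log (g l) -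
        g k * Real.log (g l) - Real.log (g k) * g l := by unfold jeffreys; ring
    simp only [hexpand, Finset.expect_sub_distrib, Finset.expect_add_distrib, ← Finset.mul_expect,
      ← Finset.expect_mul, Fintype.expect_const]
    ring
  have h := mul_le_mul_of_nonneg_left (expect_log_le hg) (expect_univ_pos hg).le
  rw [hcov, entropy]
  linarith

end Entropy

section ModifiedLogSobolev

variable {α : Type*} [DecidableEq α]

lemma ofSubtype_ne_apply_self (i : α) (ρ : Perm {x // x ≠ i}) : Perm.ofSubtype ρ i = i :=
  Perm.ofSubtype_apply_of_not_mem ρ (by simp)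

lemma exists_ofSubtype_ne_eq {i : α} {σ : Perm α} (hσ : σ i = i) :
    ∃ ρ : Perm {x // x ≠ i}, Perm.ofSubtype ρ = σ := by
  have hne (x : α) : σ x ≠ i ↔ x ≠ i := by
    rw [← hσ, σ.injective.ne_iff, hσ]
  exact ⟨σ.subtypePerm hne, Perm.ofSubtype_subtypePerm _ fun x hx h => hx (h ▸ hσ)⟩

variable [Fintype α]

lemma expect_mul_right (τ : Perm α) (F : Perm α → ℝ) : 𝔼 σ, F (σ * τ) = 𝔼 σ, F σ :=
  expect_comp_equiv (Equiv.mulRight τ) F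

lemma expect_perm_apply (i : α) (φ : α → ℝ) : 𝔼 σ : Perm α, φ (σ i) = 𝔼 k, φ k := by
  have : Nonempty α := ⟨i⟩
  have hmove (k : α) : 𝔼 σ : Perm α, φ (σ k) = 𝔼 σ : Perm α, φ (σ i) := by
    rw [← expect_mul_right (swap i k)]
    simp
  calc 𝔼 σ : Perm α, φ (σ i) = 𝔼 k, 𝔼 σ : Perm α, φ (σ k) := by
        simp only [hmove, Fintype.expect_const]
    _ = 𝔼 k, φ k := by
        rw [Finset.expect_comm]
        simp only [expect_comp_equiv _ φ, Fintype.expect_const]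

lemma expect_expect_mul_ofSubtype (p : α → Prop) [DecidablePred p] (F : Perm α → ℝ) :
    𝔼 σ, 𝔼 ρ : Perm {x // p x}, F (σ * Perm.ofSubtype ρ) = 𝔼 σ, F σ := by
  rw [Finset.expect_comm]
  simp only [expect_mul_right, Fintype.expect_const]

/-- The conditional expectation of `G σ` given `σ i = k`, for uniform `σ`: the permutations with
`σ i = k` are the products of `swap i k` with a permutation of the points other than `i`. -/
noncomputable def fiberMean (i : α) (G : Perm α → ℝ) (k : α) : ℝ :=
  𝔼 ρ : Perm {x // x ≠ i}, G (swap i k * Perm.ofSubtype ρ)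

/-- The Dirichlet form of `G` and `log G` for right multiplication by the transposition
`swap a b`. -/
noncomputable def swapEnergy (G : Perm α → ℝ) (a b : α) : ℝ :=
  𝔼 σ, jeffreys (G σ) (G (σ * swap a b))

variable {G : Perm α → ℝ}

lemma expect_mul_ofSubtype (i : α) (G : Perm α → ℝ) (σ : Perm α) :
    𝔼 ρ : Perm {x // x ≠ i}, G (σ * Perm.ofSubtype ρ) = fiberMean i G (σ i) := by
  obtain ⟨τ, hτ⟩ := exists_ofSubtype_ne_eq (i := i) (σ := (swap i (σ i))⁻¹ * σ) (by simp)
  have hσ : σ = swap i (σ i) * Perm.ofSubtype τ := by simp [hτ]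
  calc 𝔼 ρ : Perm {x // x ≠ i}, G (σ * Perm.ofSubtype ρ)
      = 𝔼 ρ, G (swap i (σ i) * Perm.ofSubtype (τ * ρ)) := by
        simp only [map_mul, ← mul_assoc, ← hσ]
    _ = fiberMean i G (σ i) := expect_comp_equiv (Equiv.mulLeft τ)
        fun ρ => G (swap i (σ i) * Perm.ofSubtype ρ)

lemma fiberMean_pos (hG : ∀ σ, 0 < G σ) (i k : α) : 0 < fiberMean i G k :=
  expect_univ_pos fun _ => hG _

lemma swapEnergy_nonneg (hG : ∀ σ, 0 < G σ) (a b : α) : 0 ≤ swapEnergy G a b :=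
  Finset.expect_nonneg fun _ _ => jeffreys_nonneg (hG _) (hG _)

lemma swapEnergy_self (G : Perm α → ℝ) (a : α) : swapEnergy G a a = 0 := by
  simp [swapEnergy, swap_self, ← Perm.one_def, jeffreys_self]

lemma swapEnergy_comm (G : Perm α → ℝ) (a b : α) : swapEnergy G a b = swapEnergy G b a := by
  rw [swapEnergy, swap_comm, swapEnergy]

lemma entropy_eq_expect_entropy_add (i : α) (G : Perm α → ℝ) :
    entropy G = 𝔼 σ, entropy (fun ρ : Perm {x // x ≠ i} => G (σ * Perm.ofSubtype ρ)) +
      entropy (fiberMean i G) := by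
  simp only [entropy, Finset.expect_sub_distrib, expect_mul_ofSubtype i G,
    expect_expect_mul_ofSubtype _ fun σ => G σ * Real.log (G σ)]
  rw [expect_perm_apply i fun k => fiberMean i G k * Real.log (fiberMean i G k),
    ← expect_expect_mul_ofSubtype (· ≠ i) G]
  simp only [expect_mul_ofSubtype, expect_perm_apply i (fiberMean i G)]
  ring

-- Given `σ i = k`, multiplying `σ` on the left by `swap k l` couples the fibres over `k` and `l`;
-- this is the same as a right multiplication by `swap i j` with `j = σ⁻¹ l`.
lemma expect_jeffreys_fiberMean_le (hG : ∀ σ, 0 < G σ) (i : α) :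
    𝔼 k, 𝔼 l, jeffreys (fiberMean i G k) (fiberMean i G l) ≤ 𝔼 j, swapEnergy G i j := by
  have hcouple (σ : Perm α) (l : α) : jeffreys (fiberMean i G (σ i)) (fiberMean i G l) ≤
      𝔼 ρ : Perm {x // x ≠ i}, jeffreys (G (σ * Perm.ofSubtype ρ))
        (G (swap ((σ * Perm.ofSubtype ρ) i) l * (σ * Perm.ofSubtype ρ))) := by
    have hl : l = (swap (σ i) l * σ) i := by simp
    conv_lhs => rw [hl, ← expect_mul_ofSubtype, ← expect_mul_ofSubtype]
    simpa [ofSubtype_ne_apply_self, mul_assoc] using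
      jeffreys_expect_le (fun ρ => hG (σ * Perm.ofSubtype ρ)) fun ρ => hG _
  calc 𝔼 k, 𝔼 l, jeffreys (fiberMean i G k) (fiberMean i G l)
      = 𝔼 σ : Perm α, 𝔼 l, jeffreys (fiberMean i G (σ i)) (fiberMean i G l) :=
        (expect_perm_apply i _).symm
    _ ≤ 𝔼 σ : Perm α, 𝔼 l, 𝔼 ρ : Perm {x // x ≠ i}, jeffreys (G (σ * Perm.ofSubtype ρ))
          (G (swap ((σ * Perm.ofSubtype ρ) i) l * (σ * Perm.ofSubtype ρ))) :=
        expect_univ_le_expect fun σ => expect_univ_le_expect fun l => hcouple σ l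
    _ = 𝔼 σ : Perm α, 𝔼 l, jeffreys (G σ) (G (swap (σ i) l * σ)) := by
        rw [Finset.expect_comm]
        simp_rw [fun l => expect_expect_mul_ofSubtype (· ≠ i)
          fun σ => jeffreys (G σ) (G (swap (σ i) l * σ))]
        rw [Finset.expect_comm]
    _ = 𝔼 j, swapEnergy G i j := by
        simp only [swapEnergy]
        rw [Finset.expect_comm (f := fun j σ => jeffreys (G σ) (G (σ * swap i j)))]
        refine Finset.expect_congr rfl fun σ _ => ?_
        rw [← expect_comp_equiv σ]
        simp [Equiv.mul_swap_eq_swap_mul]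

lemma entropy_le_expect_entropy_add (hG : ∀ σ, 0 < G σ) (i : α) :
    entropy G ≤ 𝔼 σ, entropy (fun ρ : Perm {x // x ≠ i} => G (σ * Perm.ofSubtype ρ)) +
      (𝔼 j, swapEnergy G i j) / 2 := by
  have : Nonempty α := ⟨i⟩
  rw [entropy_eq_expect_entropy_add i G]
  have h₁ := entropy_le_half_expect_jeffreys (fiberMean_pos hG i)
  have h₂ := expect_jeffreys_fiberMean_le hG i
  linarith

variable (α) in
/-- The modified logarithmic Sobolev inequality for the random transposition walk on `Perm α`. -/
def ModifiedLogSobolev : Prop :=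
  ∀ G : Perm α → ℝ, (∀ σ, 0 < G σ) →
    Fintype.card α * entropy G ≤ (∑ a, ∑ b, swapEnergy G a b) / 2

lemma sum_sum_subtype_ne (i : α) (D : α → α → ℝ) :
    ∑ a : {x // x ≠ i}, ∑ b : {x // x ≠ i}, D a b =
      ∑ a, ∑ b, D a b - ∑ b, D i b - ∑ a, D a i + D i i := by
  have h (f : α → ℝ) : ∑ a : {x // x ≠ i}, f a = ∑ a, f a - f i := by
    rw [← Finset.sum_erase_eq_sub (Finset.mem_univ i)]
    exact (Finset.sum_subtype (Finset.univ.erase i) (by simp) f).symm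
  simp only [h, h fun a => ∑ b, D a b - D a i, Finset.sum_sub_distrib]
  ring

lemma sum_sum_swapEnergy_subtype_ne (G : Perm α → ℝ) (i : α) :
    𝔼 σ, ∑ a : {x // x ≠ i}, ∑ b : {x // x ≠ i},
        swapEnergy (fun ρ : Perm {x // x ≠ i} => G (σ * Perm.ofSubtype ρ)) a b =
      ∑ a, ∑ b, swapEnergy G a b - 2 * ∑ j, swapEnergy G i j := by
  have hpair (a b : {x // x ≠ i}) :
      𝔼 σ, swapEnergy (fun ρ : Perm {x // x ≠ i} => G (σ * Perm.ofSubtype ρ)) a b =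
        swapEnergy G a b := by
    simp only [swapEnergy, map_mul, Perm.ofSubtype_swap_eq, ← mul_assoc]
    exact expect_expect_mul_ofSubtype _ fun σ => jeffreys (G σ) (G (σ * swap (a : α) b))
  simp only [Finset.expect_sum_comm, hpair, sum_sum_subtype_ne, swapEnergy_self,
    swapEnergy_comm G _ i]
  ring

lemma ModifiedLogSobolev.card_sub_one_mul_expect_entropy_le {i : α}
    (h : ModifiedLogSobolev {x // x ≠ i})
    (hG : ∀ σ, 0 < G σ) :
    ((Fintype.card α : ℝ) - 1) *
        𝔼 σ, entropy (fun ρ : Perm {x // x ≠ i} => G (σ * Perm.ofSubtype ρ)) ≤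
      (∑ a, ∑ b, swapEnergy G a b) / 2 - ∑ j, swapEnergy G i j := by
  have hcard : (Fintype.card {x // x ≠ i} : ℝ) = Fintype.card α - 1 := by
    have : 1 ≤ Fintype.card α := Fintype.card_pos_iff.2 ⟨i⟩
    simp [Fintype.card_subtype_compl, Nat.cast_sub this]
  have hfib := expect_univ_le_expect fun σ : Perm α =>
    h (fun ρ => G (σ * Perm.ofSubtype ρ)) fun _ => hG _
  rw [← Finset.mul_expect, ← Finset.expect_div, sum_sum_swapEnergy_subtype_ne, hcard] at hfib
  linarith

lemma ModifiedLogSobolev.of_subtype_ne [Nontrivial α]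
    (h : ∀ i : α, ModifiedLogSobolev {x // x ≠ i}) : ModifiedLogSobolev α := by
  intro G hG
  set n : ℝ := (Fintype.card α : ℝ) with hn
  have hn1 : 0 < n - 1 := by
    have : 1 < Fintype.card α := Fintype.one_lt_card
    rify at this
    linarith
  have hn0 : 0 < n := by linarith
  set T := ∑ a, ∑ b, swapEnergy G a b with hT
  have hbound (i : α) :
      (n - 1) * entropy G ≤ T / 2 - (n + 1) / (2 * n) * ∑ j, swapEnergy G i j := by
    have h₁ := mul_le_mul_of_nonneg_left (entropy_le_expect_entropy_add hG i) hn1.le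
    have h₂ := (h i).card_sub_one_mul_expect_entropy_le hG
    rw [Fintype.expect_eq_sum_div_card (swapEnergy G i), ← hn] at h₁
    have h₃ : (n + 1) / (2 * n) * ∑ j, swapEnergy G i j =
        ∑ j, swapEnergy G i j - (n - 1) * ((∑ j, swapEnergy G i j) / n / 2) := by
      field_simp
      ring
    linarith
  have hsum := Finset.sum_le_sum fun i (_ : i ∈ Finset.univ) => hbound i
  simp only [Finset.sum_sub_distrib, Finset.sum_const, Finset.card_univ, nsmul_eq_mul, ← hn,
    ← Finset.mul_sum, ← hT] at hsum
  have hcancel : n * (T / 2) - (n + 1) / (2 * n) * T ≤ (n - 1) * (T / 2) := by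
    have : 0 ≤ T := Finset.sum_nonneg fun a _ => Finset.sum_nonneg fun b _ =>
      swapEnergy_nonneg hG a b
    have : n * (T / 2) - (n + 1) / (2 * n) * T = (n - 1) * (T / 2) - T / (2 * n) := by
      field_simp
      ring
    have : 0 ≤ T / (2 * n) := by positivity
    linarith
  nlinarith

lemma ModifiedLogSobolev.of_subsingleton [Subsingleton α] : ModifiedLogSobolev α := by
  intro G hG
  have hconst : G = fun _ => G 1 := funext fun σ => by rw [Subsingleton.elim σ 1]
  rw [show entropy G = 0 by rw [hconst, entropy_const], mul_zero]
  have := Finset.sum_nonneg fun a (_ : a ∈ Finset.univ) =>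
    Finset.sum_nonneg fun b (_ : b ∈ Finset.univ) => swapEnergy_nonneg hG a b
  linarith

theorem modifiedLogSobolev (α : Type*) [Fintype α] [DecidableEq α] : ModifiedLogSobolev α := by
  suffices ∀ [DecidableEq α], ModifiedLogSobolev α from this
  refine Fintype.induction_subsingleton_or_nontrivial
    (P := fun β _ => ∀ [DecidableEq β], ModifiedLogSobolev β) α
    (fun β _ _ _ => .of_subsingleton) fun β _ _ ih _ => ?_
  exact .of_subtype_ne fun i => ih _ (Fintype.card_subtype_lt (x := i) (by simp))

/-- The one-sided carré du champ of the random transposition walk: the mean, over all pairs, of the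
squared decrease of `F` under a transposition, times the number of points. -/
noncomputable def gradSq (F : Perm α → ℝ) (σ : Perm α) : ℝ :=
  (∑ a, ∑ b, max (F σ - F (σ * swap a b)) 0 ^ 2) / Fintype.card α

lemma swapEnergy_exp_le (F : Perm α → ℝ) (a b : α) :
    swapEnergy (fun σ => Real.exp (F σ)) a b ≤
      2 * 𝔼 σ, max (F σ - F (σ * swap a b)) 0 ^ 2 * Real.exp (F σ) := by
  refine (expect_univ_le_expect fun σ => jeffreys_exp_le _ _).trans (le_of_eq ?_)
  rw [Finset.expect_add_distrib, two_mul, add_right_inj, ← expect_mul_right (swap a b)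
    fun σ => max (F σ - F (σ * swap a b)) 0 ^ 2 * Real.exp (F σ)]
  simp [mul_assoc]

theorem entropy_exp_le [Nonempty α] (F : Perm α → ℝ) :
    entropy (fun σ => Real.exp (F σ)) ≤ 𝔼 σ, gradSq F σ * Real.exp (F σ) := by
  have hn : (0 : ℝ) < Fintype.card α := by exact_mod_cast Fintype.card_pos
  refine le_of_mul_le_mul_left ?_ hn
  calc Fintype.card α * entropy (fun σ => Real.exp (F σ))
      ≤ (∑ a, ∑ b, swapEnergy (fun σ => Real.exp (F σ)) a b) / 2 :=
        modifiedLogSobolev α _ fun _ => Real.exp_pos _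
    _ ≤ (∑ a, ∑ b, 2 * 𝔼 σ, max (F σ - F (σ * swap a b)) 0 ^ 2 * Real.exp (F σ)) / 2 := by
        gcongr
        exact swapEnergy_exp_le F _ _
    _ = Fintype.card α * 𝔼 σ, gradSq F σ * Real.exp (F σ) := by
        simp only [gradSq, ← Finset.mul_sum, ← Finset.expect_sum_comm, ← Finset.sum_mul,
          Finset.mul_expect, div_mul_eq_mul_div, Finset.expect_div]
        refine Finset.expect_congr rfl fun σ _ => ?_
        field_simp

end ModifiedLogSobolev

section Herbst

variable {ι : Type*} [Fintype ι]

/-- The cumulant generating function of `Y` under the uniform distribution on `ι`. -/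
noncomputable def logLaplace (Y : ι → ℝ) (s : ℝ) : ℝ := Real.log (𝔼 i, Real.exp (s * Y i))

lemma hasDerivAt_expect_exp (Y : ι → ℝ) (s : ℝ) :
    HasDerivAt (fun s : ℝ => 𝔼 i, Real.exp (s * Y i)) (𝔼 i, Y i * Real.exp (s * Y i)) s := by
  simp only [Fintype.expect_eq_sum_div_card]
  refine (HasDerivAt.fun_sum fun i _ => ?_).div_const _
  simpa [mul_comm] using ((hasDerivAt_id s).mul_const (Y i)).exp

lemma entropy_exp_mul (Y : ι → ℝ) (s : ℝ) :
    entropy (fun i => Real.exp (s * Y i)) =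
      s * 𝔼 i, Y i * Real.exp (s * Y i) - (𝔼 i, Real.exp (s * Y i)) * logLaplace Y s := by
  rw [entropy, logLaplace, Finset.mul_expect]
  congr 1
  refine Finset.expect_congr rfl fun i _ => ?_
  rw [Real.log_exp]
  ring

variable [Nonempty ι] (Y : ι → ℝ)

lemma logLaplace_zero : logLaplace Y 0 = 0 := by simp [logLaplace]

lemma hasDerivAt_logLaplace (s : ℝ) :
    HasDerivAt (logLaplace Y) ((𝔼 i, Y i * Real.exp (s * Y i)) / 𝔼 i, Real.exp (s * Y i)) s :=
  (hasDerivAt_expect_exp Y s).log (expect_univ_pos fun _ => Real.exp_pos _).ne'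

lemma tendsto_logLaplace_div_self :
    Filter.Tendsto (fun s => logLaplace Y s / s) (nhdsWithin 0 (Set.Ioi 0)) (nhds (𝔼 i, Y i)) := by
  have h := (hasDerivAt_logLaplace Y 0).tendsto_slope
  simp only [zero_mul, Real.exp_zero, mul_one, Fintype.expect_const, div_one] at h
  refine (h.mono_left (nhdsWithin_mono 0 fun s hs => ne_of_gt hs)).congr fun s => ?_
  simp [slope_def_field, logLaplace_zero]

variable {Y} {κ β s₀ : ℝ}

lemma antitoneOn_logLaplace_div_self
    (h : ∀ s, 0 < s → s ≤ s₀ → entropy (fun i => Real.exp (s * Y i)) ≤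
      s ^ 2 * (κ * 𝔼 i, Y i * Real.exp (s * Y i) + β * 𝔼 i, Real.exp (s * Y i))) :
    AntitoneOn (fun s => logLaplace Y s / s - κ * logLaplace Y s - β * s) (Set.Ioc 0 s₀) := by
  have hderiv (s : ℝ) (hs : 0 < s) :=
    (((hasDerivAt_logLaplace Y s).div (hasDerivAt_id s) hs.ne').sub
      ((hasDerivAt_logLaplace Y s).const_mul κ)).sub ((hasDerivAt_id s).const_mul β)
  refine antitoneOn_of_deriv_nonpos (convex_Ioc 0 s₀)
    (fun s hs => (hderiv s hs.1).continuousAt.continuousWithinAt) ?_ ?_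
  · rw [interior_Ioc]
    exact fun s hs => (hderiv s hs.1).differentiableAt.differentiableWithinAt
  · rw [interior_Ioc]
    intro s hs
    have hM : 0 < 𝔼 i, Real.exp (s * Y i) := expect_univ_pos fun _ => Real.exp_pos _
    have hent := h s hs.1 hs.2.le
    rw [entropy_exp_mul] at hent
    refine ((hderiv s hs.1).deriv).trans_le ?_
    have hs0 := hs.1.ne'
    set M := 𝔼 i, Real.exp (s * Y i)
    set D := 𝔼 i, Y i * Real.exp (s * Y i)
    have hfactor : (D / M * id s - logLaplace Y s * 1) / id s ^ 2 - κ * (D / M) - β * 1 =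
        (s * D - M * logLaplace Y s - s ^ 2 * (κ * D + β * M)) / (s ^ 2 * M) := by
      simp only [id]
      field_simp
      ring
    rw [hfactor]
    exact div_nonpos_of_nonpos_of_nonneg (by linarith) (by positivity)

-- The Herbst argument: the entropy bound is a differential inequality for `logLaplace Y s / s`.
theorem logLaplace_le_of_entropy_le (hs₀ : 0 < s₀)
    (h : ∀ s, 0 < s → s ≤ s₀ → entropy (fun i => Real.exp (s * Y i)) ≤
      s ^ 2 * (κ * 𝔼 i, Y i * Real.exp (s * Y i) + β * 𝔼 i, Real.exp (s * Y i))) :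
    logLaplace Y s₀ * (1 - κ * s₀) ≤ s₀ * 𝔼 i, Y i + β * s₀ ^ 2 := by
  have hanti := antitoneOn_logLaplace_div_self h
  have hcont : ContinuousAt (fun s => κ * logLaplace Y s + β * s) 0 :=
    ((hasDerivAt_logLaplace Y 0).continuousAt.const_mul κ).add (continuousAt_id.const_mul β)
  have hlim := (tendsto_logLaplace_div_self Y).sub (hcont.tendsto.mono_left nhdsWithin_le_nhds)
  simp only [logLaplace_zero, mul_zero, add_zero, sub_zero, ← sub_sub] at hlim
  have hle : logLaplace Y s₀ / s₀ - κ * logLaplace Y s₀ - β * s₀ ≤ 𝔼 i, Y i := by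
    refine ge_of_tendsto hlim ?_
    filter_upwards [Ioc_mem_nhdsGT hs₀] with s hs
    exact hanti hs ⟨hs₀, le_rfl⟩ hs.2
  have hscale : s₀ * (logLaplace Y s₀ / s₀ - κ * logLaplace Y s₀ - β * s₀) =
      logLaplace Y s₀ * (1 - κ * s₀) - β * s₀ ^ 2 := by
    field_simp
  have := mul_le_mul_of_nonneg_left hle hs₀.le
  linarith

end Herbst

section ExpMomentBound

variable {ι κ : Type*} [Fintype ι] [Fintype κ]

/-- `f` has the exponential moments of the constant `A` for all parameters `0 ≤ l` with
`l * β ≤ 1`. -/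
def ExpMomentBound (f : ι → ℝ) (A β : ℝ) : Prop :=
  ∀ l : ℝ, 0 ≤ l → l * β ≤ 1 → 𝔼 i, Real.exp (l * f i) ≤ Real.exp (l * A)

lemma expect_exp_mul_sub (f : ι → ℝ) (A l : ℝ) :
    𝔼 i, Real.exp (l * (f i - A)) = (𝔼 i, Real.exp (l * f i)) / Real.exp (l * A) := by
  simp only [mul_sub, Real.exp_sub, Finset.expect_div]

lemma expMomentBound_iff {f : ι → ℝ} {A β : ℝ} :
    ExpMomentBound f A β ↔
      ∀ l : ℝ, 0 ≤ l → l * β ≤ 1 → 𝔼 i, Real.exp (l * (f i - A)) ≤ 1 := by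
  simp only [ExpMomentBound, expect_exp_mul_sub, div_le_one (Real.exp_pos _)]

lemma ExpMomentBound.mono {f g : ι → ℝ} {A A' β β' : ℝ} (h : ExpMomentBound g A β)
    (hf : ∀ i, f i ≤ g i) (hA : A ≤ A') (hβ : β ≤ β') : ExpMomentBound f A' β' := fun l hl hlβ =>
  calc 𝔼 i, Real.exp (l * f i)
      ≤ 𝔼 i, Real.exp (l * g i) := expect_univ_le_expect fun i => by gcongr; exact hf i
    _ ≤ Real.exp (l * A) := h l hl (by linarith [mul_le_mul_of_nonneg_left hβ hl])
    _ ≤ Real.exp (l * A') := by gcongr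

lemma ExpMomentBound.const_mul {f : ι → ℝ} {A β c : ℝ} (h : ExpMomentBound f A β) (hc : 0 ≤ c) :
    ExpMomentBound (fun i => c * f i) (c * A) (c * β) := by
  intro l hl hlβ
  simpa only [mul_assoc] using h (l * c) (by positivity) (by rwa [mul_assoc])

lemma ExpMomentBound.const [Nonempty ι] (A β : ℝ) : ExpMomentBound (fun _ : ι => A) A β :=
  fun l _ _ => (Fintype.expect_const (Real.exp (l * A))).le

lemma ExpMomentBound.expect_of_random [Nonempty κ] {f : κ → ι → ℝ} {M : κ → ℝ} {A β : ℝ}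
    (h : ∀ k, ExpMomentBound (f k) (M k) β) (hM : ExpMomentBound M A β) :
    ExpMomentBound (fun i => 𝔼 k, f k i) A β := by
  intro l hl hlβ
  calc 𝔼 i, Real.exp (l * 𝔼 k, f k i)
      ≤ 𝔼 i, 𝔼 k, Real.exp (l * f k i) := expect_univ_le_expect fun i => by
        rw [Finset.mul_expect]
        exact exp_expect_le _
    _ = 𝔼 k, 𝔼 i, Real.exp (l * f k i) := Finset.expect_comm _ _ _
    _ ≤ 𝔼 k, Real.exp (l * M k) := expect_univ_le_expect fun k => h k l hl hlβ
    _ ≤ Real.exp (l * A) := hM l hl hlβ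

lemma ExpMomentBound.expect [Nonempty κ] {f : κ → ι → ℝ} {A β : ℝ}
    (h : ∀ k, ExpMomentBound (f k) A β) : ExpMomentBound (fun i => 𝔼 k, f k i) A β :=
  .expect_of_random h (.const A β)

lemma ExpMomentBound.sum [Nonempty κ] {f : κ → ι → ℝ} {A : κ → ℝ} {β : ℝ}
    (h : ∀ k, ExpMomentBound (f k) (A k) β) :
    ExpMomentBound (fun i => ∑ k, f k i) (∑ k, A k) (Fintype.card κ * β) := by
  have hcentred := ExpMomentBound.expect (A := 0) (β := Fintype.card κ * β)
    (f := fun k i => Fintype.card κ * (f k i - A k)) fun k =>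
    expMomentBound_iff.2 fun l hl hlβ => by
      simpa only [sub_zero, mul_assoc] using
        expMomentBound_iff.1 (h k) (l * Fintype.card κ) (by positivity) (by rwa [mul_assoc])
  refine expMomentBound_iff.2 fun l hl hlβ => ?_
  simpa only [← Finset.mul_expect, Fintype.card_mul_expect, Finset.sum_sub_distrib, mul_zero,
    Real.exp_zero] using hcentred l hl hlβ

lemma ExpMomentBound.add {f g : ι → ℝ} {A A' β : ℝ} (hf : ExpMomentBound f A β)
    (hg : ExpMomentBound g A' β) : ExpMomentBound (fun i => f i + g i) (A + A') (2 * β) := by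
  have h := ExpMomentBound.sum (f := ![f, g]) (A := ![A, A']) (β := β) fun k => by
    fin_cases k
    exacts [hf, hg]
  simpa [Fin.sum_univ_two] using h

end ExpMomentBound

section UpperTail

variable {ι : Type*} [Fintype ι]

/-- The probability that `f` exceeds its mean by at least `t`, under the uniform distribution. -/
noncomputable def upperTail (f : ι → ℝ) (t : ℝ) : ℝ :=
  𝔼 i, if 𝔼 j, f j + t ≤ f i then 1 else 0

lemma upperTail_add_const [Nonempty ι] (f : ι → ℝ) (c t : ℝ) :
    upperTail (fun i => f i + c) t = upperTail f t := by
  simp only [upperTail, Finset.expect_add_distrib, Fintype.expect_const, add_right_comm _ c t,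
    add_le_add_iff_right]

lemma upperTail_add_le (f g : ι → ℝ) (t : ℝ) :
    upperTail (fun i => f i + g i) t ≤ upperTail f (t / 2) + upperTail g (t / 2) := by
  refine (expect_univ_le_expect fun i => ?_).trans_eq (Finset.expect_add_distrib _ _ _)
  rw [Finset.expect_add_distrib]
  split_ifs <;> linarith

lemma add_mul_pos {V B t : ℝ} (hV : 0 ≤ V) (hB : 0 ≤ B) (hVB : 0 < V + B) (ht : 0 < t) :
    0 < V + B * t := by
  rcases hV.lt_or_eq with h | h
  · positivity
  · have : 0 < B := by linarith
    positivity

lemma exp_neg_half_sq_div_le {V B t c : ℝ} (hV : 0 ≤ V) (hB : 0 ≤ B) (hVB : 0 < V + B)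
    (ht : 0 < t) (hc : 0 < c) :
    Real.exp (-((t / 2) ^ 2 / (c * (V + B * (t / 2))))) ≤
      Real.exp (-(1 / (4 * c) * t ^ 2 / (V + B * t))) := by
  have hhalf := add_mul_pos hV hB hVB (half_pos ht)
  have hle : V + B * (t / 2) ≤ V + B * t := by nlinarith
  calc Real.exp (-((t / 2) ^ 2 / (c * (V + B * (t / 2)))))
      = Real.exp (-(1 / (4 * c) * t ^ 2 / (V + B * (t / 2)))) := by
        congr 2
        field_simp
        norm_num
    _ ≤ Real.exp (-(1 / (4 * c) * t ^ 2 / (V + B * t))) := by gcongr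

end UpperTail

section Concentration

variable {α : Type*} [Fintype α] [DecidableEq α]

lemma ExpMomentBound.of_conditional {p : α → Prop} [DecidablePred p] {Y M : Perm α → ℝ} {A β : ℝ}
    (hY : ∀ σ : Perm α,
      ExpMomentBound (fun ρ : Perm {x // p x} => Y (σ * Perm.ofSubtype ρ)) (M σ) β)
    (hM : ExpMomentBound M A β) : ExpMomentBound Y A β := by
  intro l hl hlβ
  rw [← expect_expect_mul_ofSubtype p]
  exact (expect_univ_le_expect fun σ => hY σ l hl hlβ).trans (hM l hl hlβ)

lemma gradSq_const_mul {s : ℝ} (hs : 0 ≤ s) (Y : Perm α → ℝ) (σ : Perm α) :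
    gradSq (fun σ => s * Y σ) σ = s ^ 2 * gradSq Y σ := by
  have (x : ℝ) : max (s * x) 0 = s * max x 0 := by rw [mul_max_of_nonneg _ _ hs, mul_zero]
  simp only [gradSq, ← mul_sub, this, mul_pow, ← Finset.mul_sum, mul_div_assoc]

lemma gradSq_le_of_sub_le {F : Perm α → ℝ} {σ : Perm α} {x : α → α → ℝ}
    (h : ∀ a b, F σ - F (σ * swap a b) ≤ x a b) :
    gradSq F σ ≤ (∑ a, ∑ b, x a b ^ 2) / Fintype.card α := by
  refine div_le_div_of_nonneg_right (Finset.sum_le_sum fun a _ => Finset.sum_le_sum fun b _ => ?_)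
    (Nat.cast_nonneg _)
  rcases le_total (F σ - F (σ * swap a b)) 0 with hneg | hpos
  · simpa [max_eq_right hneg] using sq_nonneg (x a b)
  · rw [max_eq_left hpos]
    exact pow_le_pow_left₀ hpos (h a b) 2

lemma gradSq_le_of_sub_le_add {F : Perm α → ℝ} {σ : Perm α} {y : α → ℝ} {M : ℝ}
    (hy : ∀ a, 0 ≤ y a) (hyM : ∀ a, y a ≤ M) (h : ∀ a b, F σ - F (σ * swap a b) ≤ y a + y b) :
    gradSq F σ ≤ 4 * M * ∑ a, y a := by
  have hsq (a b : α) : (y a + y b) ^ 2 ≤ 2 * M * y a + 2 * M * y b := by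
    nlinarith [sq_nonneg (y a - y b), mul_le_mul_of_nonneg_left (hyM a) (hy a),
      mul_le_mul_of_nonneg_left (hyM b) (hy b)]
  rcases isEmpty_or_nonempty α with _ | _
  · simp [gradSq]
  calc gradSq F σ ≤ (∑ a, ∑ b, (y a + y b) ^ 2) / Fintype.card α := gradSq_le_of_sub_le h
    _ ≤ (∑ a, ∑ b, (2 * M * y a + 2 * M * y b)) / Fintype.card α := by
        gcongr
        exact hsq _ _
    _ = 4 * M * ∑ a, y a := by
        simp only [Finset.sum_add_distrib, Finset.sum_const, Finset.card_univ, nsmul_eq_mul,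
          ← Finset.mul_sum]
        field_simp
        ring

lemma expect_indicator_le_exp_logLaplace (f : Perm α → ℝ) {s : ℝ} (hs : 0 ≤ s) (u : ℝ) :
    𝔼 σ, (if u ≤ f σ then (1 : ℝ) else 0) ≤ Real.exp (logLaplace f s - s * u) := by
  have hM : 0 < 𝔼 σ, Real.exp (s * f σ) := expect_univ_pos fun _ => Real.exp_pos _
  rw [Real.exp_sub, logLaplace, Real.exp_log hM, Finset.expect_div]
  refine expect_univ_le_expect fun σ => ?_
  rw [← Real.exp_sub]
  split_ifs with h
  · exact Real.one_le_exp (sub_nonneg.2 (by gcongr))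
  · positivity

variable [Nonempty α]

theorem expect_exp_le_of_gradSq_le_half {Y : Perm α → ℝ} (h : ∀ σ, gradSq Y σ ≤ Y σ / 2) :
    𝔼 σ, Real.exp (Y σ) ≤ Real.exp (2 * 𝔼 σ, Y σ) := by
  have hHerbst : logLaplace Y 1 * (1 - 1 / 2 * 1) ≤ 1 * 𝔼 σ, Y σ + 0 * 1 ^ 2 := by
    refine logLaplace_le_of_entropy_le one_pos fun s hs _ => ?_
    refine (entropy_exp_le fun σ => s * Y σ).trans ?_
    rw [zero_mul, add_zero, Finset.mul_expect, Finset.mul_expect]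
    refine expect_univ_le_expect fun σ => ?_
    rw [gradSq_const_mul hs.le, mul_assoc]
    have := mul_le_mul_of_nonneg_right (h σ) (Real.exp_pos (s * Y σ)).le
    refine mul_le_mul_of_nonneg_left ?_ (sq_nonneg s)
    linarith
  rw [← Real.log_le_iff_le_exp (expect_univ_pos fun _ => Real.exp_pos _)]
  simp only [logLaplace, one_mul] at hHerbst
  linarith

lemma ExpMomentBound.of_gradSq_le {Y : Perm α → ℝ} {κ : ℝ} (hY : ∀ σ, 0 ≤ Y σ)
    (h : ∀ σ, gradSq Y σ ≤ κ * Y σ) : ExpMomentBound Y (2 * 𝔼 σ, Y σ) (2 * κ) := by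
  intro l hl hlκ
  have hself := expect_exp_le_of_gradSq_le_half (Y := fun σ => l * Y σ) fun σ => by
    rw [gradSq_const_mul hl]
    have h₁ := mul_le_mul_of_nonneg_left (h σ) (sq_nonneg l)
    have h₂ := mul_le_mul_of_nonneg_right (show l * κ ≤ 1 / 2 by linarith) (mul_nonneg hl (hY σ))
    linarith
  rwa [← Finset.mul_expect, mul_left_comm] at hself

variable {f v : Perm α → ℝ} {V B : ℝ}

lemma entropy_exp_mul_le (hgrad : ∀ σ, gradSq f σ ≤ v σ) (hv : ExpMomentBound v V (B ^ 2))
    {s : ℝ} (hs : 0 ≤ s) (hsB : s * B ≤ 1 / 2) (hB : 0 ≤ B) :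
    entropy (fun σ => Real.exp (s * f σ)) ≤ s ^ 2 * (2 * V * 𝔼 σ, Real.exp (s * f σ)) := by
  have hM : 0 < 𝔼 σ, Real.exp (s * f σ) := expect_univ_pos fun _ => Real.exp_pos _
  have hmlsi : entropy (fun σ => Real.exp (s * f σ)) ≤
      (𝔼 σ, 2 * s ^ 2 * v σ * Real.exp (s * f σ)) / 2 := by
    rw [Finset.expect_div]
    refine (entropy_exp_le fun σ => s * f σ).trans (expect_univ_le_expect fun σ => ?_)
    have := mul_le_mul_of_nonneg_left (hgrad σ) (sq_nonneg s)
    have := mul_le_mul_of_nonneg_right this (Real.exp_pos (s * f σ)).le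
    rw [gradSq_const_mul hs]
    linarith
  have hdual := expect_mul_le_entropy_add (fun σ => Real.exp_pos (s * f σ)) fun σ => 2 * s ^ 2 * v σ
  have hlog : Real.log (𝔼 σ, Real.exp (2 * s ^ 2 * v σ)) ≤ 2 * s ^ 2 * V := by
    rw [Real.log_le_iff_le_exp (expect_univ_pos fun _ => Real.exp_pos _)]
    exact hv _ (by positivity) (by nlinarith [mul_nonneg hs hB])
  have := mul_le_mul_of_nonneg_left hlog hM.le
  linarith

lemma logLaplace_le (hgrad : ∀ σ, gradSq f σ ≤ v σ) (hv : ExpMomentBound v V (B ^ 2))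
    {s : ℝ} (hs : 0 < s) (hsB : s * B ≤ 1 / 2) (hB : 0 ≤ B) :
    logLaplace f s ≤ s * 𝔼 σ, f σ + 2 * V * s ^ 2 := by
  have h := logLaplace_le_of_entropy_le (Y := f) (κ := 0) (β := 2 * V) hs fun r hr hrs => by
    rw [zero_mul, zero_add]
    exact entropy_exp_mul_le hgrad hv hr.le ((mul_le_mul_of_nonneg_right hrs hB).trans hsB) hB
  rwa [zero_mul, sub_zero, mul_one] at h

theorem upperTail_le_exp_neg (hV : 0 ≤ V) (hB : 0 ≤ B) (hVB : 0 < V + B)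
    (hgrad : ∀ σ, gradSq f σ ≤ v σ) (hv : ExpMomentBound v V (B ^ 2)) {t : ℝ} (ht : 0 < t) :
    upperTail f t ≤ Real.exp (-(t ^ 2 / (8 * (V + B * t)))) := by
  have hden := add_mul_pos hV hB hVB ht
  set s := t / (4 * (V + B * t)) with hs
  have hs0 : 0 < s := by positivity
  have hsB : s * B ≤ 1 / 2 := by
    rw [hs, div_mul_eq_mul_div, div_le_iff₀ (by positivity)]
    linarith [mul_nonneg hB ht.le]
  have hsV : 2 * V * s ≤ t / 2 := by
    rw [hs, mul_div_assoc', div_le_iff₀ (by positivity)]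
    nlinarith [mul_nonneg (mul_nonneg hB ht.le) ht.le]
  have hexponent : t ^ 2 / (8 * (V + B * t)) = s * t / 2 := by
    rw [hs]
    field_simp
    norm_num
  refine (expect_indicator_le_exp_logLaplace f hs0.le _).trans (Real.exp_le_exp.2 ?_)
  rw [hexponent]
  nlinarith [logLaplace_le hgrad hv hs0 hsB hB, mul_le_mul_of_nonneg_left hsV hs0.le]

end Concentration

section LinearStatistics

variable {α : Type*} [Fintype α]

lemma sum_sum_sq_apply_swap_le (H : α → α → ℝ) (σ : Perm α) :
    (∑ a, ∑ b, (H a (σ a) + H b (σ b) - H a (σ b) - H b (σ a)) ^ 2) / Fintype.card α ≤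
      8 * (∑ a, H a (σ a) ^ 2 + ∑ a, 𝔼 k, H a k ^ 2) := by
  rcases isEmpty_or_nonempty α with _ | _
  · simp
  have hsq (p q r s : ℝ) : (p + q - r - s) ^ 2 ≤ 4 * (p ^ 2 + q ^ 2 + r ^ 2 + s ^ 2) := by
    nlinarith [sq_nonneg (p - q), sq_nonneg (p + r), sq_nonneg (p + s), sq_nonneg (q + r),
      sq_nonneg (q + s), sq_nonneg (r - s)]
  have hrow (a : α) : ∑ b, H a (σ b) ^ 2 = ∑ k, H a k ^ 2 := Equiv.sum_comp σ fun k => H a k ^ 2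
  calc (∑ a, ∑ b, (H a (σ a) + H b (σ b) - H a (σ b) - H b (σ a)) ^ 2) / Fintype.card α
      ≤ (∑ a, ∑ b, 4 * (H a (σ a) ^ 2 + H b (σ b) ^ 2 + H a (σ b) ^ 2 + H b (σ a) ^ 2)) /
          Fintype.card α := by
        gcongr
        exact hsq _ _ _ _
    _ = 8 * (∑ a, H a (σ a) ^ 2 + (∑ a, ∑ k, H a k ^ 2) / Fintype.card α) := by
        simp only [← Finset.mul_sum, Finset.sum_add_distrib, Finset.sum_const, Finset.card_univ,
          nsmul_eq_mul, Finset.sum_comm (f := fun a b => H b (σ a) ^ 2), hrow]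
        field_simp
        ring
    _ = 8 * (∑ a, H a (σ a) ^ 2 + ∑ a, 𝔼 k, H a k ^ 2) := by
        simp only [Fintype.expect_eq_sum_div_card, Finset.sum_div]

variable [DecidableEq α]

lemma sum_sub_sum_mul_swap (F : α → α → ℝ) (σ : Perm α) (a b : α) :
    ∑ c, F c (σ c) - ∑ c, F c ((σ * swap a b) c) =
      F a (σ a) + F b (σ b) - F a (σ b) - F b (σ a) := by
  rcases eq_or_ne a b with rfl | hab
  · simp
  rw [← Finset.sum_sub_distrib, ← Finset.sum_subset (Finset.subset_univ {a, b}),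
    Finset.sum_pair hab]
  · simp
    ring
  · intro c _ hc
    simp only [Finset.mem_insert, Finset.mem_singleton, not_or] at hc
    rw [Perm.mul_apply, swap_apply_of_ne_of_ne hc.1 hc.2, sub_self]

lemma expect_sum_perm_apply (F : α → α → ℝ) :
    𝔼 σ : Perm α, ∑ a, F a (σ a) = ∑ a, 𝔼 k, F a k := by
  rw [Finset.expect_sum_comm]
  exact Finset.sum_congr rfl fun a _ => expect_perm_apply a (F a)

variable [Nonempty α]

lemma ExpMomentBound.sum_apply {q : α → α → ℝ} {β : ℝ} (hq : ∀ a k, 0 ≤ q a k)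
    (hqβ : ∀ a k, q a k ≤ β) :
    ExpMomentBound (fun σ : Perm α => ∑ a, q a (σ a)) (2 * ∑ a, 𝔼 k, q a k) (8 * β) := by
  have hgrad (σ : Perm α) : gradSq (fun σ => ∑ a, q a (σ a)) σ ≤ 4 * β * ∑ a, q a (σ a) :=
    gradSq_le_of_sub_le_add (fun a => hq a (σ a)) (fun a => hqβ a (σ a)) fun a b => by
      rw [sum_sub_sum_mul_swap]
      linarith [hq a (σ b), hq b (σ a)]
  have h := ExpMomentBound.of_gradSq_le (fun σ => Finset.sum_nonneg fun a _ => hq a (σ a)) hgrad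
  rw [expect_sum_perm_apply] at h
  exact h.mono (fun _ => le_rfl) le_rfl (by linarith)

end LinearStatistics

section PairStatistics

variable {α : Type*} [Fintype α]

lemma sum_apply_apply_add_le {p : α → α → α → α → ℝ} {κ : ℝ}
    (hpκ : ∀ a b k l, p a b k l ≤ κ / Fintype.card α) (σ : Perm α) (a : α) :
    ∑ c, (p a c (σ a) (σ c) + p c a (σ c) (σ a)) ≤ 2 * κ := by
  have : Nonempty α := ⟨a⟩
  calc ∑ c, (p a c (σ a) (σ c) + p c a (σ c) (σ a))
      ≤ ∑ _c : α, (κ / Fintype.card α + κ / Fintype.card α) :=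
        Finset.sum_le_sum fun c _ => add_le_add (hpκ _ _ _ _) (hpκ _ _ _ _)
    _ = 2 * κ := by
        rw [Finset.sum_const, Finset.card_univ, nsmul_eq_mul]
        field_simp
        ring

variable [DecidableEq α]

lemma card_sub_one_mul_expect_apply_apply {a b : α} (hab : b ≠ a) (Φ : α → α → ℝ) :
    ((Fintype.card α : ℝ) - 1) * 𝔼 σ : Perm α, Φ (σ a) (σ b) = 𝔼 k, (∑ l, Φ k l - Φ k k) := by
  have hsymm {c : α} (hc : c ≠ a) :
      𝔼 σ : Perm α, Φ (σ a) (σ c) = 𝔼 σ : Perm α, Φ (σ a) (σ b) := by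
    rw [← expect_mul_right (swap b c) fun σ => Φ (σ a) (σ c)]
    simp [swap_apply_of_ne_of_ne hab.symm hc.symm]
  have hcount : ∑ c, 𝔼 σ : Perm α, Φ (σ a) (σ c) =
      ((Fintype.card α : ℝ) - 1) * (𝔼 σ : Perm α, Φ (σ a) (σ b)) +
        𝔼 σ : Perm α, Φ (σ a) (σ a) := by
    rw [← Finset.sum_erase_add _ _ (Finset.mem_univ a),
      Finset.sum_congr rfl fun c hc => hsymm (Finset.ne_of_mem_erase hc)]
    simp [Finset.card_erase_of_mem, Nat.cast_sub (Fintype.card_pos_iff.2 ⟨a⟩)]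
  rw [eq_sub_of_add_eq hcount.symm, ← Finset.expect_sum_comm, ← Finset.expect_sub_distrib,
    ← expect_perm_apply a]
  exact Finset.expect_congr rfl fun σ _ => by rw [Equiv.sum_comp σ (Φ (σ a))]

lemma expect_apply_apply_le {a b : α} (hab : b ≠ a) {Φ : α → α → ℝ} (hΦ : ∀ k l, 0 ≤ Φ k l) :
    𝔼 σ : Perm α, Φ (σ a) (σ b) ≤ 2 * 𝔼 k, 𝔼 l, Φ k l := by
  have hcard : (2 : ℝ) ≤ Fintype.card α := by
    exact_mod_cast Fintype.one_lt_card_iff.2 ⟨b, a, hab⟩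
  have hle : 𝔼 k, (∑ l, Φ k l - Φ k k) ≤ Fintype.card α * 𝔼 k, 𝔼 l, Φ k l := by
    have : Nonempty α := ⟨a⟩
    rw [Finset.mul_expect]
    refine expect_univ_le_expect fun k => ?_
    rw [Fintype.card_mul_expect]
    linarith [hΦ k k]
  have hmean : 0 ≤ 𝔼 k, 𝔼 l, Φ k l :=
    Finset.expect_nonneg fun k _ => Finset.expect_nonneg fun l _ => hΦ k l
  rw [← card_sub_one_mul_expect_apply_apply hab] at hle
  refine le_of_mul_le_mul_left (hle.trans ?_) (show (0 : ℝ) < Fintype.card α - 1 by linarith)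
  nlinarith

lemma sum_sum_sub_sum_sum_mul_swap_le {p : α → α → α → α → ℝ} (hp : ∀ a b k l, 0 ≤ p a b k l)
    (σ : Perm α) (a b : α) :
    ∑ c, ∑ d, p c d (σ c) (σ d) - ∑ c, ∑ d, p c d ((σ * swap a b) c) ((σ * swap a b) d) ≤
      ∑ c, (p a c (σ a) (σ c) + p c a (σ c) (σ a)) +
        ∑ c, (p b c (σ b) (σ c) + p c b (σ c) (σ b)) := by
  set P : α → α → ℝ := fun c d => p c d (σ c) (σ d)
  set P' : α → α → ℝ := fun c d => p c d ((σ * swap a b) c) ((σ * swap a b) d)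
  have hterm (c d : α) : P c d - P' c d ≤ (if c = a then P c d else 0) +
      (if d = a then P c d else 0) + (if c = b then P c d else 0) + if d = b then P c d else 0 := by
    have h₀ : 0 ≤ P c d := hp _ _ _ _
    have h₀' : 0 ≤ P' c d := hp _ _ _ _
    by_cases h : c ≠ a ∧ d ≠ a ∧ c ≠ b ∧ d ≠ b
    · obtain ⟨hca, hda, hcb, hdb⟩ := h
      simp [P, P', swap_apply_of_ne_of_ne, *]
    · split_ifs <;> first | linarith | tauto
  have hsum := Finset.sum_le_sum fun c (_ : c ∈ Finset.univ) =>
    Finset.sum_le_sum fun d (_ : d ∈ Finset.univ) => hterm c d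
  have hrow (e : α) : ∑ c, ∑ d, (if c = e then P c d else 0) = ∑ d, P e d := by
    rw [Finset.sum_comm]
    simp
  simp only [Finset.sum_sub_distrib, Finset.sum_add_distrib, hrow, Finset.sum_ite_eq',
    Finset.mem_univ, if_true] at hsum
  simp only [Finset.sum_add_distrib]
  linarith

lemma ExpMomentBound.sum_apply_apply [Nonempty α] {p : α → α → α → α → ℝ} {κ : ℝ}
    (hp : ∀ a b k l, 0 ≤ p a b k l) (hpκ : ∀ a b k l, p a b k l ≤ κ / Fintype.card α)
    (hdiag : ∀ a k l, p a a k l = 0) :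
    ExpMomentBound (fun σ : Perm α => ∑ a, ∑ b, p a b (σ a) (σ b))
      (4 * ∑ a, ∑ b, 𝔼 k, 𝔼 l, p a b k l) (32 * κ) := by
  have hgrad (σ : Perm α) : gradSq (fun σ => ∑ a, ∑ b, p a b (σ a) (σ b)) σ ≤
      16 * κ * ∑ a, ∑ b, p a b (σ a) (σ b) := by
    refine (gradSq_le_of_sub_le_add
      (fun a => Finset.sum_nonneg fun c _ => add_nonneg (hp _ _ _ _) (hp _ _ _ _))
      (sum_apply_apply_add_le hpκ σ) (sum_sum_sub_sum_sum_mul_swap_le hp σ)).trans_eq ?_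
    simp only [Finset.sum_add_distrib]
    rw [Finset.sum_comm (f := fun a c => p c a (σ c) (σ a))]
    ring
  have hmean : 𝔼 σ : Perm α, ∑ a, ∑ b, p a b (σ a) (σ b) ≤
      ∑ a, ∑ b, 2 * 𝔼 k, 𝔼 l, p a b k l := by
    simp only [Finset.expect_sum_comm]
    refine Finset.sum_le_sum fun a _ => Finset.sum_le_sum fun b _ => ?_
    rcases eq_or_ne b a with rfl | hab
    · simp [hdiag]
    · exact expect_apply_apply_le hab (hp a b)
  simp only [← Finset.mul_sum] at hmean
  exact (ExpMomentBound.of_gradSq_le (fun σ => Finset.sum_nonneg fun a _ =>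
    Finset.sum_nonneg fun b _ => hp _ _ _ _) hgrad).mono (fun _ => le_rfl) (by linarith)
      (by linarith)

end PairStatistics

section SquaredLinearStatistics

variable {ι : Type*} [Fintype ι]

/-- `f` recentred to have mean zero. -/
noncomputable def centre (f : ι → ℝ) (i : ι) : ℝ := f i - 𝔼 j, f j

lemma expect_centre (f : ι → ℝ) : 𝔼 i, centre f i = 0 := by
  rcases isEmpty_or_nonempty ι with _ | _
  · simp
  · simp [centre, Finset.expect_sub_distrib]

lemma expect_centre_sq_le (f : ι → ℝ) : 𝔼 i, centre f i ^ 2 ≤ 𝔼 i, f i ^ 2 := by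
  rcases isEmpty_or_nonempty ι with _ | _
  · simp
  have hvar : 𝔼 i, centre f i ^ 2 = 𝔼 i, f i ^ 2 - (𝔼 i, f i) ^ 2 := by
    simp only [centre, sub_sq, Finset.expect_add_distrib, Finset.expect_sub_distrib,
      ← Finset.expect_mul, ← Finset.mul_expect, Fintype.expect_const]
    ring
  linarith [sq_nonneg (𝔼 i, f i)]

variable {α : Type*} [Fintype α] [DecidableEq α]

lemma card_sub_one_mul_expect_sq_sum_le {m : α → α → ℝ} (hm : ∀ i, ∑ k, m i k = 0) :
    ((Fintype.card α : ℝ) - 1) * 𝔼 σ : Perm α, (∑ i, m i (σ i)) ^ 2 ≤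
      Fintype.card α * ∑ i, 𝔼 k, m i k ^ 2 := by
  have hpair (i j : α) : ((Fintype.card α : ℝ) - 1) * 𝔼 σ : Perm α, m i (σ i) * m j (σ j) =
      (if j = i then Fintype.card α * 𝔼 k, m i k ^ 2 else 0) - 𝔼 k, m i k * m j k := by
    split_ifs with hij
    · subst hij
      rw [expect_perm_apply j fun k => m j k * m j k]
      simp only [sq]
      ring
    · rw [card_sub_one_mul_expect_apply_apply hij fun k l => m i k * m j l]
      simp [← Finset.mul_sum, hm]
  have hcross : ∑ i, ∑ j, 𝔼 k, m i k * m j k = 𝔼 k, (∑ i, m i k) ^ 2 := by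
    simp only [sq, Finset.sum_mul_sum, Finset.expect_sum_comm]
  have hnonneg : 0 ≤ 𝔼 k, (∑ i, m i k) ^ 2 := Finset.expect_nonneg fun k _ => sq_nonneg _
  have hsq (σ : Perm α) : (∑ i, m i (σ i)) ^ 2 = ∑ i, ∑ j, m i (σ i) * m j (σ j) := by
    rw [sq, Finset.sum_mul_sum]
  simp only [hsq, Finset.expect_sum_comm, Finset.mul_sum, hpair, Finset.sum_sub_distrib, hcross,
    Finset.sum_ite_eq', Finset.mem_univ, if_true]
  linarith

lemma expect_add_sum_apply_sq_le (hα : 2 ≤ Fintype.card α) (h : ℝ) (m : α → α → ℝ) :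
    𝔼 σ : Perm α, (h + ∑ i, m i (σ i)) ^ 2 ≤
      (h + ∑ i, 𝔼 k, m i k) ^ 2 + 2 * ∑ i, 𝔼 k, m i k ^ 2 := by
  have : Nonempty α := Fintype.card_pos_iff.1 (by omega)
  have hcard : (2 : ℝ) ≤ Fintype.card α := by exact_mod_cast hα
  set c : α → α → ℝ := fun i => centre (m i)
  have hsum (i : α) : ∑ k, c i k = 0 := by
    rw [← Fintype.card_mul_expect, expect_centre, mul_zero]
  have hvar := card_sub_one_mul_expect_sq_sum_le hsum
  have hsplit (σ : Perm α) : (h + ∑ i, m i (σ i)) ^ 2 = (h + ∑ i, 𝔼 k, m i k) ^ 2 +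
      2 * (h + ∑ i, 𝔼 k, m i k) * ∑ i, c i (σ i) + (∑ i, c i (σ i)) ^ 2 := by
    simp only [c, centre, Finset.sum_sub_distrib]
    ring
  have hmean : 𝔼 σ : Perm α, ∑ i, c i (σ i) = 0 := by
    rw [expect_sum_perm_apply]
    exact Finset.sum_eq_zero fun i _ => expect_centre (m i)
  have hcentre : ∑ i, 𝔼 k, c i k ^ 2 ≤ ∑ i, 𝔼 k, m i k ^ 2 :=
    Finset.sum_le_sum fun i _ => expect_centre_sq_le (m i)
  have hnonneg : 0 ≤ 𝔼 σ : Perm α, (∑ i, c i (σ i)) ^ 2 :=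
    Finset.expect_nonneg fun σ _ => sq_nonneg _
  simp only [hsplit, Finset.expect_add_distrib, ← Finset.mul_expect, hmean, mul_zero, add_zero,
    Fintype.expect_const]
  nlinarith

variable {κ : Type*} [Fintype κ]

lemma sum_sq_sub_sum_sq_mul_swap_le (h : κ → ℝ) (m : κ → α → α → ℝ) (σ : Perm α) (i j : α) :
    ∑ a, (h a + ∑ c, m a c (σ c)) ^ 2 - ∑ a, (h a + ∑ c, m a c ((σ * swap i j) c)) ^ 2 ≤
      2 * ∑ a, (h a + ∑ c, m a c (σ c)) *
        (m a i (σ i) + m a j (σ j) - m a i (σ j) - m a j (σ i)) := by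
  rw [← Finset.sum_sub_distrib, Finset.mul_sum]
  refine Finset.sum_le_sum fun a _ => ?_
  rw [← sum_sub_sum_mul_swap (m a)]
  nlinarith [sq_nonneg (∑ c, m a c (σ c) - ∑ c, m a c ((σ * swap i j) c))]

lemma gradSq_sum_sq_le {h : κ → ℝ} {m : κ → α → α → ℝ} {β : ℝ}
    (hm : ∀ (ρ : Perm α) (x : κ → ℝ), ∑ i, (∑ a, x a * m a i (ρ i)) ^ 2 ≤ β * ∑ a, x a ^ 2)
    (σ : Perm α) :
    gradSq (fun σ : Perm α => ∑ a, (h a + ∑ i, m a i (σ i)) ^ 2) σ ≤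
      64 * β * ∑ a, (h a + ∑ i, m a i (σ i)) ^ 2 := by
  set U : κ → ℝ := fun a => h a + ∑ i, m a i (σ i)
  set z : α → α → ℝ := fun i k => 2 * ∑ a, U a * m a i k with hz
  have hsub (i j : α) := sum_sq_sub_sum_sq_mul_swap_le h m σ i j
  have hgrad := (gradSq_le_of_sub_le (F := fun σ : Perm α => ∑ a, (h a + ∑ i, m a i (σ i)) ^ 2)
    (x := fun i j => z i (σ i) + z j (σ j) - z i (σ j) - z j (σ i)) fun i j => by
      refine (hsub i j).trans_eq ?_
      simp only [hz, mul_add, mul_sub, Finset.sum_add_distrib, Finset.sum_sub_distrib]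
      ring).trans (sum_sum_sq_apply_swap_le z σ)
  have hz_le (ρ : Perm α) : ∑ i, z i (ρ i) ^ 2 ≤ 4 * (β * ∑ a, U a ^ 2) := by
    simp only [hz, mul_pow, ← Finset.mul_sum]
    linarith [hm ρ U]
  have hz_mean : ∑ i, 𝔼 k, z i k ^ 2 ≤ 4 * (β * ∑ a, U a ^ 2) := by
    rw [← expect_sum_perm_apply fun i k => z i k ^ 2]
    exact Finset.expect_le Finset.univ_nonempty fun ρ _ => hz_le ρ
  linarith [hz_le σ]

theorem ExpMomentBound.sum_sq_apply (hα : 2 ≤ Fintype.card α) {h : κ → ℝ} {m : κ → α → α → ℝ}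
    {β : ℝ}
    (hm : ∀ (ρ : Perm α) (x : κ → ℝ), ∑ i, (∑ a, x a * m a i (ρ i)) ^ 2 ≤ β * ∑ a, x a ^ 2) :
    ExpMomentBound (fun σ : Perm α => ∑ a, (h a + ∑ i, m a i (σ i)) ^ 2)
      (2 * ∑ a, ((h a + ∑ i, 𝔼 k, m a i k) ^ 2 + 2 * ∑ i, 𝔼 k, m a i k ^ 2)) (128 * β) := by
  have : Nonempty α := Fintype.card_pos_iff.1 (by omega)
  refine (ExpMomentBound.of_gradSq_le (fun σ => by positivity)
    (gradSq_sum_sq_le hm)).mono (fun _ => le_rfl) ?_ (by linarith)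
  rw [Finset.expect_sum_comm]
  gcongr with a
  exact expect_add_sum_apply_sq_le hα (h a) (m a)

end SquaredLinearStatistics

lemma sq_expect_le_of_support {ι : Type*} {S T : Finset ι} {f : ι → ℝ} (hf : ∀ j ∉ T, f j = 0) :
    (𝔼 j ∈ S, f j) ^ 2 ≤ T.card / S.card ^ 2 * ∑ j ∈ T, f j ^ 2 := by
  have hsupp : ∑ j ∈ S, f j = ∑ j ∈ T ∩ S, f j := by
    rw [Finset.inter_comm]
    exact (Finset.sum_subset Finset.inter_subset_left fun j hj hjT =>
      hf j fun hT => hjT (Finset.mem_inter.2 ⟨hj, hT⟩)).symm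
  rw [Finset.expect_eq_sum_div_card, div_pow, div_mul_eq_mul_div, hsupp]
  gcongr
  calc (∑ j ∈ T ∩ S, f j) ^ 2 ≤ (T ∩ S).card * ∑ j ∈ T ∩ S, f j ^ 2 := sq_sum_le_card_mul_sum_sq
    _ ≤ T.card * ∑ j ∈ T, f j ^ 2 := by
        gcongr
        exacts [Finset.inter_subset_left, Finset.inter_subset_left]

section DecoupledNorm

variable {α : Type*} [Fintype α]

/-- The variance proxy `N⁻² ∑ a i k l, c(a, i, k, l) ^ 2` of a doubly indexed statistic. -/
noncomputable def tensorVariance (c : α → α → α → α → ℝ) : ℝ :=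
  ∑ a, ∑ i, 𝔼 k, 𝔼 l, c a i k l ^ 2

lemma tensorVariance_nonneg (c : α → α → α → α → ℝ) : 0 ≤ tensorVariance c :=
  Finset.sum_nonneg fun _ _ => Finset.sum_nonneg fun _ _ =>
    Finset.expect_nonneg fun _ _ => Finset.expect_nonneg fun _ _ => sq_nonneg _

lemma tensorVariance_le_of_sq_le {c d : α → α → α → α → ℝ}
    (h : ∀ a i k l, c a i k l ^ 2 ≤ d a i k l ^ 2) : tensorVariance c ≤ tensorVariance d :=
  Finset.sum_le_sum fun a _ => Finset.sum_le_sum fun i _ => Finset.expect_le_expect fun k _ =>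
    Finset.expect_le_expect fun l _ => h a i k l

lemma sub_sq_le_two_mul_add (x y : ℝ) : (x - y) ^ 2 ≤ 2 * x ^ 2 + 2 * y ^ 2 := by
  nlinarith [sq_nonneg (x + y)]

lemma tensorVariance_sub_le (c d : α → α → α → α → ℝ) :
    tensorVariance (c - d) ≤ 2 * tensorVariance c + 2 * tensorVariance d := by
  simp only [tensorVariance, Finset.mul_sum, Finset.mul_expect, ← Finset.sum_add_distrib,
    ← Finset.expect_add_distrib]
  exact Finset.sum_le_sum fun a _ => Finset.sum_le_sum fun i _ => Finset.expect_le_expect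
    fun k _ => Finset.expect_le_expect fun l _ => sub_sq_le_two_mul_add (c a i k l) (d a i k l)

/-- For all permutations `σ` and `ρ`, the matrix `[c(a, i, σ a, ρ i)]` has squared operator norm at
most `β`. It is the norm of `c` decoupled, since `a` and `i` are moved by different permutations. -/
def DecoupledNormSqLE (c : α → α → α → α → ℝ) (β : ℝ) : Prop :=
  ∀ (σ ρ : Perm α) (x : α → ℝ), ∑ i, (∑ a, x a * c a i (σ a) (ρ i)) ^ 2 ≤ β * ∑ a, x a ^ 2

variable {c d : α → α → α → α → ℝ} {β β' : ℝ}

lemma DecoupledNormSqLE.mono (h : DecoupledNormSqLE c β) (hβ : β ≤ β') :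
    DecoupledNormSqLE c β' := fun σ ρ x => (h σ ρ x).trans (by gcongr)

lemma DecoupledNormSqLE.sub (h : DecoupledNormSqLE c β) (h' : DecoupledNormSqLE d β') :
    DecoupledNormSqLE (c - d) (2 * β + 2 * β') := by
  intro σ ρ x
  calc ∑ i, (∑ a, x a * (c - d) a i (σ a) (ρ i)) ^ 2
      ≤ ∑ i, (2 * (∑ a, x a * c a i (σ a) (ρ i)) ^ 2 +
          2 * (∑ a, x a * d a i (σ a) (ρ i)) ^ 2) := by
        simp only [Pi.sub_apply, mul_sub, Finset.sum_sub_distrib]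
        gcongr with i
        exact sub_sq_le_two_mul_add _ _
    _ ≤ (2 * β + 2 * β') * ∑ a, x a ^ 2 := by
        rw [Finset.sum_add_distrib, ← Finset.mul_sum, ← Finset.mul_sum]
        linarith [h σ ρ x, h' σ ρ x]

lemma DecoupledNormSqLE.sum_expect_le (h : DecoupledNormSqLE c β) (σ : Perm α) (x : α → ℝ) :
    ∑ i, 𝔼 l, (∑ a, x a * c a i (σ a) l) ^ 2 ≤ β * ∑ a, x a ^ 2 := by
  rw [← expect_sum_perm_apply fun i l => (∑ a, x a * c a i (σ a) l) ^ 2]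
  exact Finset.expect_le Finset.univ_nonempty fun ρ _ => h σ ρ x

lemma DecoupledNormSqLE.sum_sq_le (h : DecoupledNormSqLE c β) (a k : α) (ρ : Perm α) :
    ∑ i, c a i k (ρ i) ^ 2 ≤ β := by
  simpa using h (swap a k) ρ fun b => if b = a then 1 else 0

lemma DecoupledNormSqLE.sum_expect_sq_le (h : DecoupledNormSqLE c β) (a k : α) :
    ∑ i, 𝔼 l, c a i k l ^ 2 ≤ β := by
  simpa using h.sum_expect_le (swap a k) fun b => if b = a then 1 else 0

lemma DecoupledNormSqLE.nonneg [Nonempty α] (h : DecoupledNormSqLE c β) : 0 ≤ β :=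
  let ⟨a⟩ := ‹Nonempty α›
  (Finset.sum_nonneg fun _ _ => sq_nonneg _).trans (h.sum_sq_le a a 1)

/-- The tensor obtained from `c` by averaging over its second index within the block `S`. -/
noncomputable def blockMean (S : Finset α) (c : α → α → α → α → ℝ) : α → α → α → α → ℝ :=
  fun a _ k l => 𝔼 j ∈ S, c a j k l

lemma decoupledNormSqLE_blockMean (h : DecoupledNormSqLE c β) (S : Finset α) {T : Finset α}
    (hT : ∀ a, ∀ j ∉ T, ∀ k l, c a j k l = 0) :
    DecoupledNormSqLE (blockMean S c) (T.card * Fintype.card α / S.card ^ 2 * β) := by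
  intro σ ρ x
  set u : α → α → ℝ := fun j l => ∑ a, x a * c a j (σ a) l
  have hmean (i l : α) : ∑ a, x a * blockMean S c a i (σ a) l = 𝔼 j ∈ S, u j l := by
    simp only [blockMean, Finset.mul_expect, u, Finset.expect_sum_comm]
  have hsq (l : α) : (𝔼 j ∈ S, u j l) ^ 2 ≤ T.card / S.card ^ 2 * ∑ j ∈ T, u j l ^ 2 :=
    sq_expect_le_of_support fun j hj => by simp [u, hT _ j hj]
  calc ∑ i, (∑ a, x a * blockMean S c a i (σ a) (ρ i)) ^ 2
      = ∑ l, (𝔼 j ∈ S, u j l) ^ 2 := by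
        simp only [hmean]
        exact Equiv.sum_comp ρ fun l => (𝔼 j ∈ S, u j l) ^ 2
    _ ≤ ∑ l, T.card / S.card ^ 2 * ∑ j, u j l ^ 2 := by
        gcongr with l
        refine (hsq l).trans ?_
        gcongr
        exact Finset.subset_univ T
    _ = T.card * Fintype.card α / S.card ^ 2 * ∑ j, 𝔼 l, u j l ^ 2 := by
        rw [← Finset.mul_sum, Finset.sum_comm]
        simp only [← Fintype.card_mul_expect (fun l => u _ l ^ 2), ← Finset.mul_sum]
        ring
    _ ≤ T.card * Fintype.card α / S.card ^ 2 * β * ∑ a, x a ^ 2 := by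
        rw [mul_assoc _ β]
        gcongr
        exact h.sum_expect_le σ x

lemma tensorVariance_blockMean_le (S : Finset α) {T : Finset α}
    (hT : ∀ a, ∀ j ∉ T, ∀ k l, c a j k l = 0) :
    tensorVariance (blockMean S c) ≤ T.card * Fintype.card α / S.card ^ 2 * tensorVariance c := by
  set θ : ℝ := T.card / S.card ^ 2
  have hsq (a k l : α) : (𝔼 j ∈ S, c a j k l) ^ 2 ≤ θ * ∑ j, c a j k l ^ 2 := by
    refine (sq_expect_le_of_support fun j hj => hT a j hj k l).trans ?_
    gcongr
    exact Finset.subset_univ T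
  calc tensorVariance (blockMean S c)
      ≤ ∑ a, ∑ _i : α, 𝔼 k, 𝔼 l, θ * ∑ j, c a j k l ^ 2 :=
        Finset.sum_le_sum fun a _ => Finset.sum_le_sum fun _ _ => Finset.expect_le_expect
          fun k _ => Finset.expect_le_expect fun l _ => hsq a k l
    _ = T.card * Fintype.card α / S.card ^ 2 * tensorVariance c := by
        simp only [tensorVariance, Finset.sum_const, Finset.card_univ, nsmul_eq_mul,
          ← Finset.mul_expect, ← Finset.mul_sum, Finset.expect_sum_comm, θ]
        ring

end DecoupledNorm

section BlockConditioning

variable {α : Type*} [Fintype α]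

/-- The squared norm of the vector of partial row sums `∑ i ∈ J, c(a, i, σ a, σ i)`, `a ∈ I`. -/
noncomputable def rowSumSq (c : α → α → α → α → ℝ) (I J : Finset α) (σ : Perm α) : ℝ :=
  ∑ a ∈ I, (∑ i ∈ J, c a i (σ a) (σ i)) ^ 2

lemma sum_mem_add_sum_notMem (G : Finset α) (f : α → ℝ) :
    ∑ i ∈ G, f i + ∑ i : {x // x ∉ G}, f i = ∑ i, f i := by
  rw [← Finset.sum_add_sum_compl G f, Finset.sum_subtype Gᶜ (p := (· ∉ G)) (by simp) f]

lemma card_subtype_notMem (G : Finset α) : Fintype.card {x // x ∉ G} = Gᶜ.card := by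
  rw [Fintype.card_subtype_compl, Fintype.card_coe, Finset.card_compl]

variable {c : α → α → α → α → ℝ} {β : ℝ} {G : Finset α}

lemma rowSumSq_mul_ofSubtype (c : α → α → α → α → ℝ) (G : Finset α) (σ : Perm α)
    (ρ : Perm {x // x ∉ G}) :
    rowSumSq c G Finset.univ (σ * Perm.ofSubtype ρ) =
      ∑ a : G, (∑ i ∈ G, c a i (σ a) (σ i) + ∑ i : {x // x ∉ G}, c a i (σ a) (σ (ρ i))) ^ 2 := by
  have hfix {a : α} (ha : a ∈ G) : (σ * Perm.ofSubtype ρ) a = σ a := by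
    rw [Perm.mul_apply, Perm.ofSubtype_apply_of_not_mem ρ (not_not.2 ha)]
  have hmove (i : {x // x ∉ G}) : (σ * Perm.ofSubtype ρ) i = σ (ρ i) := by
    rw [Perm.mul_apply, Perm.ofSubtype_apply_coe]
  rw [rowSumSq, ← Finset.sum_coe_sort G]
  refine Finset.sum_congr rfl fun a _ => ?_
  rw [hfix a.2, ← sum_mem_add_sum_notMem G, Finset.sum_congr rfl fun i hi => by rw [hfix hi]]
  simp only [hmove]

lemma DecoupledNormSqLE.sum_notMem_le (h : DecoupledNormSqLE c β) (σ : Perm α)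
    (ρ : Perm {x // x ∉ G}) (x : G → ℝ) :
    ∑ i : {x // x ∉ G}, (∑ a, x a * c a i (σ a) (σ (ρ i))) ^ 2 ≤ β * ∑ a, x a ^ 2 := by
  set x₀ : α → ℝ := fun a => if ha : a ∈ G then x ⟨a, ha⟩ else 0
  have hsum (F : α → ℝ → ℝ) (hF : ∀ a, F a 0 = 0) : ∑ a, F a (x₀ a) = ∑ a : G, F a (x a) := by
    rw [← Finset.sum_subset (Finset.subset_univ G) fun a _ ha => by simp [x₀, ha, hF],
      ← Finset.sum_coe_sort G]
    simp [x₀]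
  have hx₀ := h σ (σ * Perm.ofSubtype ρ) x₀
  rw [hsum (fun _ y => y ^ 2) (by simp),
    ← sum_mem_add_sum_notMem G] at hx₀
  simp only [fun i k => hsum (fun a y => y * c a i ((σ : α → α) a) k) (by simp), Perm.mul_apply σ,
    Perm.ofSubtype_apply_coe] at hx₀
  exact (le_add_of_nonneg_left (Finset.sum_nonneg fun _ _ => sq_nonneg _)).trans hx₀

-- Given `σ` on `G`, the values of `σ` off `G` are uniform on the remaining values, over which `c`
-- sums to minus its sum over `σ '' G`.
lemma sum_add_sum_expect_notMem (hc : ∀ a i k, ∑ l, c a i k l = 0) (σ : Perm α) (a : α) :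
    ∑ i ∈ G, c a i (σ a) (σ i) + ∑ i : {x // x ∉ G}, 𝔼 k : {x // x ∉ G}, c a i (σ a) (σ k) =
      ∑ i ∈ G, (c - blockMean Gᶜ c) a i (σ a) (σ i) := by
  have hcompl (i : α) : ∑ k : {x // x ∉ G}, c a i (σ a) (σ k) = -∑ k ∈ G, c a i (σ a) (σ k) := by
    have hi := hc a i (σ a)
    rw [← Equiv.sum_comp σ, ← sum_mem_add_sum_notMem G] at hi
    linarith
  simp only [Pi.sub_apply, Finset.sum_sub_distrib, blockMean, Finset.expect_eq_sum_div_card,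
    hcompl, Finset.card_univ, card_subtype_notMem, ← Finset.sum_div]
  rw [Finset.sum_neg_distrib, neg_div, ← sub_eq_add_neg, Finset.sum_comm (s := G),
    Finset.sum_subtype Gᶜ (p := (· ∉ G)) (by simp) fun j => ∑ i ∈ G, c a j (σ a) (σ i)]

lemma sum_expect_notMem_sq_le (c : α → α → α → α → ℝ) (hG : Fintype.card α ≤ 2 * Gᶜ.card)
    (σ : Perm α) (a : α) :
    ∑ i : {x // x ∉ G}, 𝔼 k : {x // x ∉ G}, c a i (σ a) (σ k) ^ 2 ≤
      2 * ∑ i, 𝔼 l, c a i (σ a) l ^ 2 := by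
  have hN : 0 < (Fintype.card α : ℝ) := Nat.cast_pos.2 (Fintype.card_pos_iff.2 ⟨a⟩)
  have hG' : (Fintype.card α : ℝ) ≤ 2 * Gᶜ.card := mod_cast hG
  have hmean (i : α) :
      𝔼 k : {x // x ∉ G}, c a i (σ a) (σ k) ^ 2 ≤ 2 * 𝔼 l, c a i (σ a) l ^ 2 := by
    have hle : ∑ k : {x // x ∉ G}, c a i (σ a) (σ k) ^ 2 ≤ ∑ l, c a i (σ a) l ^ 2 := by
      rw [← Equiv.sum_comp σ, ← sum_mem_add_sum_notMem G]
      exact le_add_of_nonneg_left (Finset.sum_nonneg fun _ _ => sq_nonneg _)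
    rw [Fintype.expect_eq_sum_div_card, Fintype.expect_eq_sum_div_card, card_subtype_notMem,
      mul_div_assoc', div_le_div_iff₀ (by linarith) hN]
    nlinarith [Finset.sum_nonneg fun l (_ : l ∈ Finset.univ) => sq_nonneg (c a i (σ a) l)]
  rw [Finset.mul_sum, ← sum_mem_add_sum_notMem G]
  refine (Finset.sum_le_sum fun (i : {x // x ∉ G}) _ => hmean i).trans (le_add_of_nonneg_left ?_)
  exact Finset.sum_nonneg fun _ _ => mul_nonneg two_pos.le <|
    Finset.expect_nonneg fun _ _ => sq_nonneg _

theorem ExpMomentBound.rowSumSq_of_blockMean [Nonempty α] (hop : DecoupledNormSqLE c β)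
    (hc : ∀ a i k, ∑ l, c a i k l = 0) (hG₂ : 2 ≤ Gᶜ.card) (hG : Fintype.card α ≤ 2 * Gᶜ.card)
    {A β₁ : ℝ} (hβ₁ : 0 ≤ β₁) (h : ExpMomentBound (rowSumSq (c - blockMean Gᶜ c) G G) A β₁) :
    ExpMomentBound (rowSumSq c G Finset.univ) (2 * A + 16 * tensorVariance c)
      (4 * β₁ + 128 * β) := by
  have hβ := hop.nonneg
  set q : α → α → ℝ := fun a k => 4 * ∑ i, 𝔼 l, c a i k l ^ 2 with hq
  have hq₀ (a k : α) : 0 ≤ q a k := mul_nonneg (by norm_num) <| Finset.sum_nonneg fun _ _ =>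
    Finset.expect_nonneg fun _ _ => sq_nonneg _
  have hq_le (a k : α) : q a k ≤ 4 * β := by linarith [hop.sum_expect_sq_le a k]
  have hq_mean : ∑ a, 𝔼 k, q a k = 4 * tensorVariance c := by
    simp only [hq, tensorVariance, ← Finset.mul_expect, ← Finset.mul_sum, Finset.expect_sum_comm]
  have hM := ((h.mono (fun _ => le_rfl) le_rfl (show β₁ ≤ β₁ + 32 * β by linarith)).add
    ((ExpMomentBound.sum_apply hq₀ hq_le).mono (fun _ => le_rfl) le_rfl
      (show 8 * (4 * β) ≤ β₁ + 32 * β by linarith))).const_mul two_pos.le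
  refine (ExpMomentBound.of_conditional (p := (· ∉ G)) (fun σ => ?_) hM).mono (fun _ => le_rfl)
    (by linarith) (by linarith)
  have hcard : 2 ≤ Fintype.card {x // x ∉ G} := hG₂.trans_eq (card_subtype_notMem G).symm
  refine (ExpMomentBound.sum_sq_apply (α := {x // x ∉ G}) hcard
    (h := fun a : G => ∑ i ∈ G, c a i (σ a) (σ i)) (m := fun a i k => c a i (σ a) (σ k))
    (hop.sum_notMem_le σ)).mono (fun ρ => (rowSumSq_mul_ofSubtype c G σ ρ).le) ?_ (by linarith)
  simp only [sum_add_sum_expect_notMem hc]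
  rw [rowSumSq, Finset.sum_add_distrib,
    Finset.sum_coe_sort G fun a => (∑ i ∈ G, (c - blockMean Gᶜ c) a i (σ a) (σ i)) ^ 2]
  gcongr
  rw [← sum_mem_add_sum_notMem G fun a => q a (σ a), ← Finset.sum_coe_sort G]
  refine le_add_of_le_of_nonneg (Finset.sum_le_sum fun a _ => ?_)
    (Finset.sum_nonneg fun a _ => hq₀ a (σ a))
  linarith [sum_expect_notMem_sq_le c hG σ a]

end BlockConditioning

section Colouring

variable {α : Type*} [Fintype α]

lemma expect_comp_update_not (f : (α → Bool) → ℝ) (a : α) :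
    𝔼 χ : α → Bool, f (Function.update χ a (!χ a)) = 𝔼 χ, f χ :=
  expect_comp_equiv (Function.Involutive.toPerm (fun χ : α → Bool => Function.update χ a (!χ a))
    fun χ => by simp) f

lemma expect_bool_colouring {a i : α} (h : a ≠ i) :
    𝔼 χ : α → Bool, (if χ a ∧ !χ i then (1 : ℝ) else 0) = 1 / 4 := by
  set f : (α → Bool) → ℝ := fun χ => if χ a ∧ !χ i then 1 else 0 with hf
  set flip : α → (α → Bool) → α → Bool := fun b χ => Function.update χ b (!χ b) with hflip
  have htotal (χ : α → Bool) : f χ + f (flip a χ) + f (flip i χ) + f (flip a (flip i χ)) = 1 := by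
    cases hχa : χ a <;> cases hχi : χ i <;> simp [hf, hflip, h, h.symm, hχa, hχi]
  have hsum : 𝔼 χ, (f χ + f (flip a χ) + f (flip i χ) + f (flip a (flip i χ))) = 1 := by
    simp only [htotal, Fintype.expect_const]
  simp only [Finset.expect_add_distrib, hflip, expect_comp_update_not f,
    expect_comp_update_not fun χ => f (Function.update χ a (!χ a))] at hsum
  linarith

lemma sum_eq_four_mul_expect_colouring {f : α → ℝ} {a : α} (hf : f a = 0) (I : Finset α) :
    ∑ i ∈ I, f i = 4 * 𝔼 χ : α → Bool, if χ a then ∑ i ∈ I with !χ i, f i else 0 := by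
  have hterm (χ : α → Bool) : (if χ a then ∑ i ∈ I with !χ i, f i else 0) =
      ∑ i ∈ I, (if χ a ∧ !χ i then 1 else 0) * f i := by
    by_cases hχ : χ a <;> simp [hχ, Finset.sum_filter]
  simp only [hterm, Finset.expect_sum_comm, ← Finset.expect_mul, Finset.mul_sum]
  refine Finset.sum_congr rfl fun i _ => ?_
  rcases eq_or_ne a i with rfl | hai
  · simp [hf]
  · rw [expect_bool_colouring hai]
    ring

lemma rowSumSq_le_expect_colouring {c : α → α → α → α → ℝ} (hc : ∀ a i k, c a i k k = 0)
    (I : Finset α) (σ : Perm α) :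
    rowSumSq c I I σ ≤
      16 * 𝔼 χ : α → Bool, rowSumSq c {a ∈ I | χ a} {i ∈ I | !χ i} σ := by
  set S : α → (α → Bool) → ℝ := fun a χ => ∑ i ∈ I with !χ i, c a i (σ a) (σ i)
  calc rowSumSq c I I σ = ∑ a ∈ I, (4 * 𝔼 χ : α → Bool, if χ a then S a χ else 0) ^ 2 := by
        refine Finset.sum_congr rfl fun a _ => ?_
        rw [sum_eq_four_mul_expect_colouring (f := fun i => c a i (σ a) (σ i)) (hc a a (σ a)) I]
    _ ≤ ∑ a ∈ I, 16 * 𝔼 χ : α → Bool, (if χ a then S a χ else 0) ^ 2 := by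
        gcongr with a
        rw [mul_pow]
        norm_num only
        gcongr
        exact sq_expect_le _
    _ = 16 * 𝔼 χ : α → Bool, rowSumSq c {a ∈ I | χ a} {i ∈ I | !χ i} σ := by
        simp only [← Finset.mul_sum, ← Finset.expect_sum_comm, rowSumSq, ite_pow, S,
          Finset.sum_filter, zero_pow two_ne_zero]

lemma exists_sparse_colouring (α : Type*) [Fintype α] : ∃ p : α → Fin 256, ∀ r,
    Finset.card {a | p a = r} ≤ 1 ∨ 128 * Finset.card {a | p a = r} ≤ Fintype.card α := by
  set e := Fintype.equivFin α
  refine ⟨fun a => Fin.ofNat 256 (e a), fun r => ?_⟩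
  set G : Finset α := {a | Fin.ofNat 256 (e a) = r}
  have hmod {a : α} (ha : a ∈ G) : (e a : ℕ) % 256 = r := by
    simpa [G, Fin.ext_iff] using ha
  have hG : G.card ≤ (Fintype.card α - 1) / 256 + 1 := by
    rw [← Finset.card_range ((Fintype.card α - 1) / 256 + 1)]
    refine Finset.card_le_card_of_injOn (fun a => (e a : ℕ) / 256) (fun a _ => ?_) ?_
    · have := (e a).2
      simp only [Finset.coe_range, Set.mem_Iio]
      omega
    · intro a ha b hb hab
      have hmod_eq := (hmod ha).trans (hmod hb).symm
      exact e.injective (Fin.ext (by simp only at hab; omega))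
  omega

end Colouring

section SparseBlocks

variable {α : Type*} {c d : α → α → α → α → ℝ} {β : ℝ} {I J : Finset α}

/-- The tensor `c` with its second index restricted to `J`. -/
noncomputable def restrictIndex (J : Finset α) (c : α → α → α → α → ℝ) : α → α → α → α → ℝ :=
  fun a i k l => if i ∈ J then c a i k l else 0

lemma rowSumSq_restrictIndex_sub (hIJ : Disjoint I J) (c d : α → α → α → α → ℝ) :
    rowSumSq (restrictIndex J c - d) I I = rowSumSq d I I := by
  funext σ
  refine Finset.sum_congr rfl fun a _ => ?_
  rw [← neg_sq (∑ i ∈ I, d a i (σ a) (σ i)), ← Finset.sum_neg_distrib]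
  congr 1
  exact Finset.sum_congr rfl fun i hi => by
    simp [restrictIndex, Finset.disjoint_left.1 hIJ hi]

variable [Fintype α]

/-- `c(a, i, k, k) = 0` and `c` has mean zero in its last argument. -/
structure IsHollowCentred (c : α → α → α → α → ℝ) : Prop where
  diag (a i k : α) : c a i k k = 0
  sum_eq_zero (a i k : α) : ∑ l, c a i k l = 0

lemma IsHollowCentred.sub (hc : IsHollowCentred c) (hd : IsHollowCentred d) :
    IsHollowCentred (c - d) where
  diag a i k := by simp [hc.diag, hd.diag]
  sum_eq_zero a i k := by simp [hc.sum_eq_zero, hd.sum_eq_zero]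

lemma IsHollowCentred.blockMean (hc : IsHollowCentred c) (S : Finset α) :
    IsHollowCentred (blockMean S c) where
  diag a i k := by simp [_root_.blockMean, hc.diag]
  sum_eq_zero a i k := by simp [_root_.blockMean, ← Finset.expect_sum_comm, hc.sum_eq_zero]

lemma IsHollowCentred.restrictIndex (hc : IsHollowCentred c) (J : Finset α) :
    IsHollowCentred (restrictIndex J c) where
  diag a i k := by simp [_root_.restrictIndex, hc.diag]
  sum_eq_zero a i k := by by_cases hi : i ∈ J <;> simp [_root_.restrictIndex, hi, hc.sum_eq_zero]

lemma tensorVariance_restrictIndex_le (J : Finset α) (c : α → α → α → α → ℝ) :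
    tensorVariance (restrictIndex J c) ≤ tensorVariance c :=
  tensorVariance_le_of_sq_le fun a i k l => by
    by_cases hi : i ∈ J <;> simp [restrictIndex, hi, sq_nonneg]

lemma decoupledNormSqLE_restrictIndex (h : DecoupledNormSqLE c β) (J : Finset α) :
    DecoupledNormSqLE (restrictIndex J c) β := by
  refine fun σ ρ x => le_trans (Finset.sum_le_sum fun i _ => ?_) (h σ ρ x)
  by_cases hi : i ∈ J <;> simp [restrictIndex, hi, sq_nonneg]

lemma rowSumSq_restrictIndex_univ (c : α → α → α → α → ℝ) (I J : Finset α) :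
    rowSumSq (restrictIndex J c) I Finset.univ = rowSumSq c I J := by
  funext σ
  simp [rowSumSq, restrictIndex, Finset.sum_ite_mem]

-- Conditioning on `σ` on `I` leaves as conditional mean the statistic of the tensor averaged over
-- `Iᶜ`. As `J` has density at most `1 / 128`, its norm is a hundred times smaller than that of `c`.
lemma ExpMomentBound.rowSumSq_of_disjoint [Nonempty α] (hα : 4 ≤ Fintype.card α)
    (hc : IsHollowCentred c) (hop : DecoupledNormSqLE c β) (hIJ : Disjoint I J)
    (hcard : 128 * (I.card + J.card) ≤ Fintype.card α)
    (hI : ∀ (e : α → α → α → α → ℝ) (β' : ℝ), IsHollowCentred e → DecoupledNormSqLE e β' →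
      ExpMomentBound (rowSumSq e I I) (512 * tensorVariance e) (8192 * β')) :
    ExpMomentBound (rowSumSq c I J) (32 * tensorVariance c) (512 * β) := by
  have hβ := hop.nonneg
  have hV := tensorVariance_nonneg c
  have hVJ := tensorVariance_restrictIndex_le J c
  have hcompl := Finset.card_compl I
  set e := blockMean Iᶜ (restrictIndex J c)
  have hsupp (a : α) : ∀ j ∉ J, ∀ k l, restrictIndex J c a j k l = 0 := fun j hj k l => by
    simp [restrictIndex, hj]
  have hθ : (J.card * Fintype.card α / Iᶜ.card ^ 2 : ℝ) ≤ 1 / 100 := by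
    have hJ : (128 * J.card : ℝ) ≤ Fintype.card α := mod_cast (by omega)
    have hIc : (127 * Fintype.card α : ℝ) ≤ 128 * Iᶜ.card := mod_cast (by omega)
    have hN : (0 : ℝ) < Fintype.card α := mod_cast Fintype.card_pos
    rw [div_le_iff₀ (by nlinarith)]
    nlinarith
  have he_norm := (decoupledNormSqLE_blockMean (decoupledNormSqLE_restrictIndex hop J) Iᶜ
    hsupp).mono (mul_le_mul_of_nonneg_right hθ hβ)
  have he_var : tensorVariance e ≤ 1 / 100 * tensorVariance c :=
    (tensorVariance_blockMean_le Iᶜ hsupp).trans (mul_le_mul hθ hVJ (tensorVariance_nonneg _)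
      (by norm_num))
  have hmain := ExpMomentBound.rowSumSq_of_blockMean (decoupledNormSqLE_restrictIndex hop J)
    (hc.restrictIndex J).sum_eq_zero (by omega) (by omega) (by positivity)
    (rowSumSq_restrictIndex_sub hIJ c e ▸
      hI e _ ((hc.restrictIndex J).blockMean Iᶜ) he_norm)
  rw [rowSumSq_restrictIndex_univ] at hmain
  exact hmain.mono (fun _ => le_rfl) (by linarith) (by linarith)

lemma ExpMomentBound.rowSumSq_of_sparse [Nonempty α] (hα : 4 ≤ Fintype.card α) (I : Finset α)
    (hI : I.card ≤ 1 ∨ 128 * I.card ≤ Fintype.card α) :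
    ∀ (c : α → α → α → α → ℝ) (β : ℝ), IsHollowCentred c → DecoupledNormSqLE c β →
      ExpMomentBound (rowSumSq c I I) (512 * tensorVariance c) (8192 * β) := by
  induction I using Finset.strongInduction with | H I ih => ?_
  intro c β hc hop
  have hβ := hop.nonneg
  have hV := tensorVariance_nonneg c
  have hzero {I J : Finset α} {A β' : ℝ} (hA : 0 ≤ A) (hβ' : 0 ≤ β')
      (h : ∀ a ∈ I, ∀ i ∈ J, ∀ k : Perm α, c a i (k a) (k i) = 0) :
      ExpMomentBound (rowSumSq c I J) A β' :=
    (ExpMomentBound.const 0 0).mono (fun σ => (Finset.sum_eq_zero fun a ha => by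
      rw [Finset.sum_eq_zero fun i hi => h a ha i hi σ, zero_pow two_ne_zero]).le) hA hβ'
  rcases hI with hI | hI
  · refine hzero (by positivity) (by positivity) fun a ha i hi σ => ?_
    rw [Finset.card_le_one.1 hI i hi a ha, hc.diag]
  have hcolour (χ : α → Bool) : ExpMomentBound (rowSumSq c {a ∈ I | χ a} {i ∈ I | !χ i})
      (32 * tensorVariance c) (512 * β) := by
    set I₁ : Finset α := {a ∈ I | χ a} with hI₁
    set I₂ : Finset α := {i ∈ I | !χ i} with hI₂
    rcases I₂.eq_empty_or_nonempty with h₂ | ⟨i, hi⟩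
    · exact hzero (by positivity) (by positivity) (by simp [h₂])
    rw [hI₂, Finset.mem_filter] at hi
    have hcard : I₁.card + I₂.card = I.card := by
      simpa [hI₁, hI₂] using Finset.card_filter_add_card_filter_not (s := I) (fun a => χ a = true)
    refine .rowSumSq_of_disjoint hα hc hop ?_ (by omega) (ih I₁ ?_ (by omega))
    · simpa [hI₁, hI₂] using Finset.disjoint_filter_filter_not I I fun a => χ a = true
    · exact Finset.filter_ssubset.2 ⟨i, hi.1, by simpa using hi.2⟩
  exact ((ExpMomentBound.expect hcolour).const_mul (c := 16) (by norm_num)).mono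
    (rowSumSq_le_expect_colouring hc.diag I) (by linarith) (by linarith)

lemma ExpMomentBound.rowSumSq_univ_of_sparse [Nonempty α] (hα : 4 ≤ Fintype.card α)
    (hc : IsHollowCentred c) (hop : DecoupledNormSqLE c β)
    (hI : I.card ≤ 1 ∨ 128 * I.card ≤ Fintype.card α) :
    ExpMomentBound (rowSumSq c I Finset.univ) (6160 * tensorVariance c) (196736 * β) := by
  have hβ := hop.nonneg
  have hV := tensorVariance_nonneg c
  have hcompl := Finset.card_compl I
  have hθ : (Finset.card (Finset.univ : Finset α) * Fintype.card α / Iᶜ.card ^ 2 : ℝ) ≤ 2 := by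
    have hIc : (3 * Fintype.card α : ℝ) ≤ 4 * Iᶜ.card := mod_cast (by omega)
    have hN : (0 : ℝ) < Fintype.card α := mod_cast (by omega)
    rw [Finset.card_univ, div_le_iff₀ (by nlinarith)]
    nlinarith
  have hnorm := (decoupledNormSqLE_blockMean hop Iᶜ (by simp)).mono
    (mul_le_mul_of_nonneg_right hθ hβ)
  have hvar := (tensorVariance_blockMean_le (c := c) Iᶜ (by simp)).trans
    (mul_le_mul_of_nonneg_right hθ hV)
  have hsub := tensorVariance_sub_le c (blockMean Iᶜ c)
  exact (ExpMomentBound.rowSumSq_of_blockMean hop hc.sum_eq_zero (by omega) (by omega)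
    (by positivity) (.rowSumSq_of_sparse hα I hI _ _ (hc.sub (hc.blockMean Iᶜ))
      (hop.sub hnorm))).mono (fun _ => le_rfl) (by linarith) (by linarith)

theorem ExpMomentBound.rowSumSq_univ [Nonempty α] (hα : 4 ≤ Fintype.card α)
    (hc : IsHollowCentred c) (hop : DecoupledNormSqLE c β) :
    ExpMomentBound (rowSumSq c Finset.univ Finset.univ) (2 ^ 21 * tensorVariance c)
      (2 ^ 26 * β) := by
  obtain ⟨p, hp⟩ := exists_sparse_colouring α
  have hβ := hop.nonneg
  have hV := tensorVariance_nonneg c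
  have hsum := ExpMomentBound.sum fun r =>
    ExpMomentBound.rowSumSq_univ_of_sparse hα hc hop (hp r)
  refine hsum.mono (fun σ => (Finset.sum_fiberwise _ p _).ge) ?_ ?_
  · simp only [Finset.sum_const, Finset.card_univ, Fintype.card_fin, nsmul_eq_mul]
    push_cast
    linarith
  · rw [Fintype.card_fin]
    push_cast
    linarith

end SparseBlocks

section OffDiagMean

variable {α : Type*} [Fintype α] {e : α → α → α → α → ℝ} {β V : ℝ}

lemma card_div_card_sub_one_sq_le (hα : 4 ≤ Fintype.card α) :
    (Fintype.card α / (Fintype.card α - 1) : ℝ) ^ 2 ≤ 2 := by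
  have hα' : (4 : ℝ) ≤ Fintype.card α := by exact_mod_cast hα
  rw [div_pow, div_le_iff₀ (by nlinarith)]
  nlinarith

lemma sum_div_card_sub_one_sq_le (hα : 4 ≤ Fintype.card α) (f : α → ℝ) :
    ((∑ l, f l) / (Fintype.card α - 1)) ^ 2 ≤ 2 * 𝔼 l, f l ^ 2 := by
  have : Nonempty α := Fintype.card_pos_iff.1 (by omega)
  rw [← Fintype.card_mul_expect, mul_div_right_comm, mul_pow]
  exact mul_le_mul (card_div_card_sub_one_sq_le hα) (sq_expect_le f) (sq_nonneg _) two_pos.le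

/-- For `e` vanishing on `k = l`, the mean of `e(a, i, k, l)` over `l ≠ k`, as a tensor that itself
vanishes on `k = l`. -/
noncomputable def offDiagMean (e : α → α → α → α → ℝ) : α → α → α → α → ℝ :=
  fun a i k l => if k = l then 0 else (∑ l', e a i k l') / (Fintype.card α - 1)

lemma isHollowCentred_sub_offDiagMean (hα : 4 ≤ Fintype.card α) (he : ∀ a i k, e a i k k = 0) :
    IsHollowCentred (e - offDiagMean e) where
  diag a i k := by simp [offDiagMean, he]
  sum_eq_zero a i k := by
    have hα' : (4 : ℝ) ≤ Fintype.card α := by exact_mod_cast hα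
    have hterm (l : α) : offDiagMean e a i k l = (∑ l', e a i k l') / (Fintype.card α - 1) -
        if k = l then (∑ l', e a i k l') / (Fintype.card α - 1) else 0 := by
      by_cases hkl : k = l <;> simp [offDiagMean, hkl]
    have hN : (Fintype.card α : ℝ) - 1 ≠ 0 := by linarith
    simp only [Pi.sub_apply, hterm, Finset.sum_sub_distrib, Finset.sum_ite_eq, Finset.mem_univ,
      if_true, Finset.sum_const, Finset.card_univ, nsmul_eq_mul]
    field_simp
    ring

lemma decoupledNormSqLE_mean (hα : 4 ≤ Fintype.card α) (h : DecoupledNormSqLE e β) :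
    DecoupledNormSqLE (fun a i k _ => (∑ l, e a i k l) / (Fintype.card α - 1)) (2 * β) := by
  intro σ _ x
  calc ∑ i, (∑ a, x a * ((∑ l, e a i (σ a) l) / (Fintype.card α - 1))) ^ 2
      = ∑ i, ((∑ l, ∑ a, x a * e a i (σ a) l) / (Fintype.card α - 1)) ^ 2 := by
        simp only [Finset.sum_comm (γ := α) (f := fun l a => x a * e a _ (σ a) l), Finset.sum_div,
          ← Finset.mul_sum, mul_div_assoc]
    _ ≤ ∑ i, 2 * 𝔼 l, (∑ a, x a * e a i (σ a) l) ^ 2 :=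
        Finset.sum_le_sum fun i _ => sum_div_card_sub_one_sq_le hα _
    _ ≤ 2 * β * ∑ a, x a ^ 2 := by
        rw [← Finset.mul_sum, mul_assoc]
        exact mul_le_mul_of_nonneg_left (h.sum_expect_le σ x) two_pos.le

lemma decoupledNormSqLE_diagonal {m : α → α → α → ℝ} (hm : ∀ a i k, m a i k ^ 2 ≤ β) :
    DecoupledNormSqLE (fun a i k l => if k = l then m a i k else 0) β := by
  intro σ ρ x
  have hrow (i : α) : ∑ a, x a * (if σ a = ρ i then m a i (σ a) else 0) =
      x (σ.symm (ρ i)) * m (σ.symm (ρ i)) i (ρ i) := by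
    rw [Finset.sum_eq_single (σ.symm (ρ i)) (fun a _ ha => ?_) (by simp)]
    · simp
    · rw [if_neg fun h => ha (by rw [← h, symm_apply_apply]), mul_zero]
  calc ∑ i, (∑ a, x a * (if σ a = ρ i then m a i (σ a) else 0)) ^ 2
      ≤ ∑ i, β * x ((ρ.trans σ.symm) i) ^ 2 := by
        simp only [hrow, mul_pow]
        exact Finset.sum_le_sum fun i _ =>
          (mul_comm _ _).trans_le (mul_le_mul_of_nonneg_right (hm _ _ _) (sq_nonneg _))
    _ = β * ∑ a, x a ^ 2 := by
        rw [← Finset.mul_sum, Equiv.sum_comp (ρ.trans σ.symm) fun a => x a ^ 2]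

lemma decoupledNormSqLE_offDiagMean (hα : 4 ≤ Fintype.card α) (h : DecoupledNormSqLE e β) :
    DecoupledNormSqLE (offDiagMean e) (8 * β) := by
  have hle (a i k : α) : 𝔼 l, e a i k l ^ 2 ≤ β :=
    (Finset.single_le_sum (f := fun i => 𝔼 l, e a i k l ^ 2) (fun _ _ =>
      Finset.expect_nonneg fun _ _ => sq_nonneg _) (Finset.mem_univ i)).trans
      (h.sum_expect_sq_le a k)
  have hdiag := decoupledNormSqLE_diagonal fun a i k =>
    (sum_div_card_sub_one_sq_le hα (e a i k)).trans
      (mul_le_mul_of_nonneg_left (hle a i k) two_pos.le)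
  convert ((decoupledNormSqLE_mean hα h).sub hdiag).mono (β' := 8 * β) (by linarith) using 1
  funext a i k l
  by_cases hkl : k = l <;> simp [offDiagMean, hkl]

lemma tensorVariance_offDiagMean_le (hα : 4 ≤ Fintype.card α) (e : α → α → α → α → ℝ) :
    tensorVariance (offDiagMean e) ≤ 2 * tensorVariance e := by
  have : Nonempty α := Fintype.card_pos_iff.1 (by omega)
  have hsq (a i k : α) : 𝔼 l, offDiagMean e a i k l ^ 2 ≤ 2 * 𝔼 l, e a i k l ^ 2 := by
    refine Finset.expect_le Finset.univ_nonempty fun l _ => ?_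
    by_cases hkl : k = l
    · simpa [offDiagMean, hkl] using Finset.expect_nonneg fun l _ => sq_nonneg (e a i k l)
    · simpa only [offDiagMean, hkl, if_false] using sum_div_card_sub_one_sq_le hα (e a i k)
  simp only [tensorVariance, Finset.mul_sum, Finset.mul_expect]
  exact Finset.sum_le_sum fun a _ => Finset.sum_le_sum fun i _ => Finset.expect_le_expect
    fun k _ => (hsq a i k).trans_eq (Finset.mul_expect _ _ _)

lemma sum_offDiagMean_apply {a : α} (he : ∀ k l, e a a k l = 0) (σ : Perm α) :
    ∑ j, offDiagMean e a j (σ a) (σ j) =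
      Fintype.card α / (Fintype.card α - 1) * ∑ j, 𝔼 l, e a j (σ a) l := by
  rw [Finset.mul_sum]
  refine Finset.sum_congr rfl fun j _ => ?_
  rcases eq_or_ne a j with rfl | haj
  · simp [offDiagMean, he]
  · rw [offDiagMean, if_neg (σ.injective.ne haj), ← Fintype.card_mul_expect]
    ring

end OffDiagMean

section OffDiagonalBound

variable {α : Type*} [Fintype α] {e : α → α → α → α → ℝ} {β V : ℝ}

/-- `e` vanishes on both diagonals, has squared decoupled norm at most `β` and variance proxy at
most `V`, and the mean row sums `∑ j, 𝔼 l, e(a, j, k, l)` obey the same two bounds. -/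
structure OffDiagonalBound (e : α → α → α → α → ℝ) (β V : ℝ) : Prop where
  index_diag (a k l : α) : e a a k l = 0
  value_diag (a i k : α) : e a i k k = 0
  norm : DecoupledNormSqLE e β
  variance : tensorVariance e ≤ V
  rowMean_sq_le (a k : α) : (∑ j, 𝔼 l, e a j k l) ^ 2 ≤ β
  sum_rowMean_sq_le : ∑ a, 𝔼 k, (∑ j, 𝔼 l, e a j k l) ^ 2 ≤ V

lemma OffDiagonalBound.rowSumSq_le (h : OffDiagonalBound e β V) (hα : 4 ≤ Fintype.card α)
    (σ : Perm α) :
    rowSumSq e Finset.univ Finset.univ σ ≤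
      2 * (rowSumSq (e - offDiagMean e) Finset.univ Finset.univ σ +
        ∑ a, 2 * (∑ j, 𝔼 l, e a j (σ a) l) ^ 2) := by
  rw [rowSumSq, rowSumSq, ← Finset.sum_add_distrib, Finset.mul_sum]
  refine Finset.sum_le_sum fun a _ => ?_
  set r := ∑ j, 𝔼 l, e a j (σ a) l
  set x := ∑ j, (e - offDiagMean e) a j (σ a) (σ j)
  have hsplit : ∑ j, e a j (σ a) (σ j) = x - -(Fintype.card α / (Fintype.card α - 1) * r) := by
    rw [← sum_offDiagMean_apply (h.index_diag a), sub_neg_eq_add, ← Finset.sum_add_distrib]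
    simp
  have hr := mul_le_mul_of_nonneg_right (card_div_card_sub_one_sq_le hα) (sq_nonneg r)
  have hsub := sub_sq_le_two_mul_add x (-(Fintype.card α / (Fintype.card α - 1) * r))
  rw [neg_sq, mul_pow] at hsub
  rw [hsplit]
  linarith

theorem OffDiagonalBound.expMomentBound_rowSumSq (h : OffDiagonalBound e β V)
    (hα : 4 ≤ Fintype.card α) :
    ExpMomentBound (rowSumSq e Finset.univ Finset.univ) (2 ^ 25 * V) (2 ^ 33 * β) := by
  have : Nonempty α := Fintype.card_pos_iff.1 (by omega)
  have hβ := h.norm.nonneg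
  have hV := (tensorVariance_nonneg e).trans h.variance
  have hvar := tensorVariance_sub_le e (offDiagMean e)
  have hvar' := tensorVariance_offDiagMean_le hα e
  have hcentred := (ExpMomentBound.rowSumSq_univ hα
    (isHollowCentred_sub_offDiagMean hα h.value_diag)
    (h.norm.sub (decoupledNormSqLE_offDiagMean hα h.norm))).mono (A' := 2 ^ 21 * (6 * V))
    (β' := 2 ^ 31 * β) (fun _ => le_rfl) (by linarith [h.variance]) (by linarith)
  have hmean := (ExpMomentBound.sum_apply (q := fun a k => 2 * (∑ j, 𝔼 l, e a j k l) ^ 2)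
    (β := 2 * β) (fun _ _ => by positivity) fun a k => by linarith [h.rowMean_sq_le a k]).mono
    (A' := 4 * V) (β' := 2 ^ 31 * β) (fun _ => le_rfl) (by
      simp only [← Finset.mul_expect, ← Finset.mul_sum]
      linarith [h.sum_rowMean_sq_le]) (by linarith)
  exact ((hcentred.add hmean).const_mul two_pos.le).mono (h.rowSumSq_le hα) (by linarith)
    (by linarith)

theorem OffDiagonalBound.expMomentBound_mean_rowSumSq (h : OffDiagonalBound e β V)
    (hα : 2 ≤ Fintype.card α) :
    ExpMomentBound (fun π : Perm α => ∑ a, 𝔼 k, (∑ j, e a j k (π j)) ^ 2) (12 * V) (128 * β) := by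
  have : Nonempty α := Fintype.card_pos_iff.1 (by omega)
  have hβ := h.norm.nonneg
  set q : α → α → ℝ := fun a k => (∑ j, 𝔼 l, e a j k l) ^ 2 + 2 * ∑ j, 𝔼 l, e a j k l ^ 2
  have hq₀ (a k : α) : 0 ≤ q a k := add_nonneg (sq_nonneg _) <| mul_nonneg two_pos.le <|
    Finset.sum_nonneg fun _ _ => Finset.expect_nonneg fun _ _ => sq_nonneg _
  have hq (a k : α) : q a k ≤ 3 * β := by
    linarith [h.rowMean_sq_le a k, h.norm.sum_expect_sq_le a k]
  have hq_mean : ∑ a, 𝔼 k, q a k ≤ 3 * V := by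
    have hvar : ∑ a, 𝔼 k, ∑ j, 𝔼 l, e a j k l ^ 2 = tensorVariance e := by
      simp only [tensorVariance, Finset.expect_sum_comm]
    simp only [q, Finset.expect_add_distrib, Finset.sum_add_distrib, ← Finset.mul_expect,
      ← Finset.mul_sum, hvar]
    linarith [h.variance, h.sum_rowMean_sq_le]
  have hcond (σ : Perm α) : ExpMomentBound (fun π : Perm α => ∑ a, (∑ j, e a j (σ a) (π j)) ^ 2)
      (2 * ∑ a, q a (σ a)) (128 * β) := by
    simpa only [zero_add] using ExpMomentBound.sum_sq_apply hα (h := fun _ => 0)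
      (m := fun a j l => e a j (σ a) l) (h.norm σ)
  have hM := ((ExpMomentBound.sum_apply hq₀ hq).const_mul two_pos.le).mono (A' := 12 * V)
    (β' := 128 * β) (fun _ => le_rfl) (by linarith) (by linarith)
  refine (ExpMomentBound.expect_of_random hcond hM).mono (fun π => ?_) le_rfl le_rfl
  rw [expect_sum_perm_apply fun a k => (∑ j, e a j k (π j)) ^ 2]

end OffDiagonalBound

section PermNorm

variable {α : Type*}

/-- The transpose `(i, j), (k, l) ↦ (j, i), (l, k)` of a tensor. -/
def swapPairs (d : α → α → α → α → ℝ) : α → α → α → α → ℝ := fun i j k l => d j i l k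

/-- The restriction of a tensor `d(i, j, k, l)` to `i ≠ j` and `k ≠ l`. -/
noncomputable def offDiag (d : α → α → α → α → ℝ) : α → α → α → α → ℝ :=
  fun i j k l => if i = j ∨ k = l then 0 else d i j k l

lemma offDiag_swapPairs (d : α → α → α → α → ℝ) :
    offDiag (swapPairs d) = swapPairs (offDiag d) := by
  funext i j k l
  simp only [offDiag, swapPairs, eq_comm]

lemma offDiag_sq_le (d : α → α → α → α → ℝ) (i j k l : α) :
    offDiag d i j k l ^ 2 ≤ d i j k l ^ 2 := by
  unfold offDiag
  split_ifs
  · simpa using sq_nonneg _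
  · exact le_rfl

lemma exists_perm_eq_of_colouring [Finite α] (χ κ : α → Bool) (σ ρ : Perm α) : ∃ θ : Perm α,
    (∀ i, χ i → κ (σ i) → θ i = σ i) ∧ ∀ i, !χ i → !κ (ρ i) → θ i = ρ i := by
  have := Fintype.ofFinite α
  obtain ⟨θ, hθ⟩ := Set.MapsTo.exists_equiv_extend_of_card_eq (t := Finset.univ) (by simp)
    (s := {i | (χ i ∧ κ (σ i)) ∨ (!χ i ∧ !κ (ρ i))}) (f := fun i => if χ i then σ i else ρ i)
    (fun _ _ => by simp) (by
      intro i hi j hj hij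
      rcases hi with ⟨hχi, hκi⟩ | ⟨hχi, hκi⟩ <;> rcases hj with ⟨hχj, hκj⟩ | ⟨hχj, hκj⟩ <;>
        simp_all)
  refine ⟨θ.trans (Equiv.subtypeUnivEquiv (by simp)), fun i hχ hκ => ?_, fun i hχ hκ => ?_⟩
  · simpa [hχ] using hθ i (Or.inl ⟨hχ, hκ⟩)
  · simpa [(by simpa using hχ : χ i = false)] using hθ i (Or.inr ⟨hχ, hκ⟩)

variable [Fintype α]

lemma tensorVariance_swapPairs (d : α → α → α → α → ℝ) :
    tensorVariance (swapPairs d) = tensorVariance d := by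
  unfold tensorVariance swapPairs
  rw [Finset.sum_comm]
  exact Finset.sum_congr rfl fun _ _ => Finset.sum_congr rfl fun _ _ => Finset.expect_comm _ _ _

/-- The quadratic-form version of `‖(d(i, j, σ(i), σ(j)))‖_op ≤ B` for all permutations `σ`. -/
def PermNormLE (d : α → α → α → α → ℝ) (B : ℝ) : Prop :=
  ∀ (σ : Perm α) (x y : α → ℝ),
    ∑ i, ∑ j, x i * d i j (σ i) (σ j) * y j ≤ B / 2 * (∑ i, x i ^ 2 + ∑ j, y j ^ 2)

variable {d : α → α → α → α → ℝ} {B V : ℝ}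

lemma PermNormLE.swapPairs (h : PermNormLE d B) : PermNormLE (swapPairs d) B := by
  intro σ x y
  calc ∑ i, ∑ j, x i * _root_.swapPairs d i j (σ i) (σ j) * y j
      = ∑ j, ∑ i, y j * d j i (σ j) (σ i) * x i := by
        rw [Finset.sum_comm]
        exact Finset.sum_congr rfl fun _ _ => Finset.sum_congr rfl fun _ _ => by
          rw [_root_.swapPairs]; ring
    _ ≤ B / 2 * (∑ i, x i ^ 2 + ∑ j, y j ^ 2) := by rw [add_comm]; exact h σ y x

lemma PermNormLE.abs_diag_le (h : PermNormLE d B) (a k : α) : |d a a k k| ≤ B := by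
  have hpos := h (swap a k) (fun b => if b = a then 1 else 0) (fun b => if b = a then 1 else 0)
  have hneg := h (swap a k) (fun b => if b = a then 1 else 0) (fun b => if b = a then -1 else 0)
  simp at hpos hneg
  rw [abs_le]
  constructor <;> linarith

lemma PermNormLE.nonneg [Nonempty α] (h : PermNormLE d B) : 0 ≤ B :=
  (abs_nonneg _).trans (h.abs_diag_le (Classical.arbitrary α) (Classical.arbitrary α))

lemma sum_sq_ite_le (p : α → Prop) [DecidablePred p] (x : α → ℝ) :
    ∑ i, (if p i then x i else 0) ^ 2 ≤ ∑ i, x i ^ 2 :=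
  Finset.sum_le_sum fun i _ => by
    split_ifs
    · exact le_rfl
    · simpa using sq_nonneg (x i)

-- On the cut given by `χ` and `κ`, the rows follow `σ` and the columns `ρ`; both are values of one
-- permutation.
lemma PermNormLE.sum_colouring_le [Nonempty α] (h : PermNormLE d B) (σ ρ : Perm α) (x y : α → ℝ)
    (χ κ : α → Bool) :
    ∑ i, ∑ j, (if χ i ∧ !χ j then (1 : ℝ) else 0) * (if κ (σ i) ∧ !κ (ρ j) then 1 else 0) *
      (x i * offDiag d i j (σ i) (ρ j) * y j) ≤ B / 2 * (∑ i, x i ^ 2 + ∑ j, y j ^ 2) := by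
  obtain ⟨θ, hσ, hρ⟩ := exists_perm_eq_of_colouring χ κ σ ρ
  have hweight (i j : α) :
      (if χ i ∧ !χ j then (1 : ℝ) else 0) * (if κ (σ i) ∧ !κ (ρ j) then 1 else 0) =
        (if χ i ∧ κ (σ i) then 1 else 0) * (if !χ j ∧ !κ (ρ j) then 1 else 0) := by
    cases χ i <;> cases χ j <;> cases κ (σ i) <;> cases κ (ρ j) <;> simp
  have hterm (i j : α) :
      (if χ i ∧ !χ j then (1 : ℝ) else 0) * (if κ (σ i) ∧ !κ (ρ j) then 1 else 0) *
        (x i * offDiag d i j (σ i) (ρ j) * y j) =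
      (if χ i ∧ κ (σ i) then x i else 0) * d i j (θ i) (θ j) *
        (if !χ j ∧ !κ (ρ j) then y j else 0) := by
    rw [hweight]
    by_cases hi : χ i ∧ κ (σ i)
    · by_cases hj : !χ j ∧ !κ (ρ j)
      · have hne : ¬(i = j ∨ σ i = ρ j) := by
          rintro (rfl | hij)
          · simp [hi.1] at hj
          · simp [← hij, hi.2] at hj
        rw [hσ i hi.1 hi.2, hρ j hj.1 hj.2, offDiag, if_neg hne, if_pos hi, if_pos hi, if_pos hj,
          if_pos hj]
        ring
      · rw [if_neg hj, if_neg hj]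
        ring
    · rw [if_neg hi, if_neg hi]
      ring
  simp only [hterm]
  exact (h θ (fun i => if χ i ∧ κ (σ i) then x i else 0)
    fun j => if !χ j ∧ !κ (ρ j) then y j else 0).trans (mul_le_mul_of_nonneg_left
    (add_le_add (sum_sq_ite_le _ x) (sum_sq_ite_le _ y)) (div_nonneg h.nonneg two_pos.le))

lemma PermNormLE.sum_offDiag_le [Nonempty α] (h : PermNormLE d B) (σ ρ : Perm α) (x y : α → ℝ) :
    ∑ i, ∑ j, x i * offDiag d i j (σ i) (ρ j) * y j ≤
      8 * B * (∑ i, x i ^ 2 + ∑ j, y j ^ 2) := by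
  have hmean (i j : α) : x i * offDiag d i j (σ i) (ρ j) * y j =
      16 * 𝔼 χ : α → Bool, 𝔼 κ : α → Bool,
        (if χ i ∧ !χ j then (1 : ℝ) else 0) * (if κ (σ i) ∧ !κ (ρ j) then 1 else 0) *
          (x i * offDiag d i j (σ i) (ρ j) * y j) := by
    by_cases hij : i = j ∨ σ i = ρ j
    · simp [offDiag, hij]
    · obtain ⟨hi, hσρ⟩ := not_or.1 hij
      simp only [← Finset.expect_mul, ← Finset.mul_expect, expect_bool_colouring hi,
        expect_bool_colouring hσρ]
      ring
  calc ∑ i, ∑ j, x i * offDiag d i j (σ i) (ρ j) * y j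
      = 16 * 𝔼 χ : α → Bool, 𝔼 κ : α → Bool, ∑ i, ∑ j,
          (if χ i ∧ !χ j then (1 : ℝ) else 0) * (if κ (σ i) ∧ !κ (ρ j) then 1 else 0) *
            (x i * offDiag d i j (σ i) (ρ j) * y j) := by
        simp only [Finset.expect_sum_comm, Finset.mul_sum, ← hmean]
    _ ≤ 16 * (B / 2 * (∑ i, x i ^ 2 + ∑ j, y j ^ 2)) :=
        mul_le_mul_of_nonneg_left (Finset.expect_le Finset.univ_nonempty fun χ _ =>
          Finset.expect_le Finset.univ_nonempty fun κ _ => h.sum_colouring_le σ ρ x y χ κ)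
          (by norm_num)
    _ = 8 * B * (∑ i, x i ^ 2 + ∑ j, y j ^ 2) := by ring

lemma le_four_mul_sq_mul {C X Z : ℝ} (hC : 0 ≤ C) (h : ∀ t : ℝ, t * Z ≤ C * (X + t ^ 2 * Z))
    (hZ : 0 ≤ Z) : Z ≤ 4 * C ^ 2 * X := by
  have hdiscrim : discrim (C * Z) (-Z) (C * X) ≤ 0 :=
    discrim_le_zero fun t => by linarith [h t]
  rw [discrim] at hdiscrim
  rcases hZ.eq_or_lt with rfl | hZ
  · nlinarith [h 0]
  · nlinarith

theorem PermNormLE.decoupledNormSqLE_offDiag [Nonempty α] (h : PermNormLE d B) :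
    DecoupledNormSqLE (offDiag d) (256 * B ^ 2) := by
  intro σ ρ x
  set z : α → ℝ := fun i => ∑ a, x a * offDiag d a i (σ a) (ρ i) with hz
  have key (t : ℝ) : t * ∑ i, z i ^ 2 ≤ 8 * B * (∑ a, x a ^ 2 + t ^ 2 * ∑ i, z i ^ 2) := by
    calc t * ∑ i, z i ^ 2 = ∑ a, ∑ i, x a * offDiag d a i (σ a) (ρ i) * (t * z i) := by
          rw [Finset.sum_comm, Finset.mul_sum]
          simp only [← Finset.sum_mul]
          exact Finset.sum_congr rfl fun i _ => by rw [hz]; ring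
      _ ≤ 8 * B * (∑ a, x a ^ 2 + ∑ i, (t * z i) ^ 2) := h.sum_offDiag_le σ ρ x _
      _ = 8 * B * (∑ a, x a ^ 2 + t ^ 2 * ∑ i, z i ^ 2) := by
          simp only [mul_pow, Finset.mul_sum]
  calc ∑ i, z i ^ 2 ≤ 4 * (8 * B) ^ 2 * ∑ a, x a ^ 2 :=
        le_four_mul_sq_mul (by linarith [h.nonneg]) key (Finset.sum_nonneg fun _ _ => sq_nonneg _)
    _ = 256 * B ^ 2 * ∑ a, x a ^ 2 := by ring

/-- The degeneracy of the Hoeffding projection: all four coordinate sums vanish. -/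
structure IsDegenerate (d : α → α → α → α → ℝ) : Prop where
  sum_fst j k l : ∑ i, d i j k l = 0
  sum_snd i k l : ∑ j, d i j k l = 0
  sum_trd i j l : ∑ k, d i j k l = 0
  sum_fth i j k : ∑ l, d i j k l = 0

lemma IsDegenerate.swapPairs (h : IsDegenerate d) : IsDegenerate (swapPairs d) where
  sum_fst _ _ _ := h.sum_snd _ _ _
  sum_snd _ _ _ := h.sum_fst _ _ _
  sum_trd _ _ _ := h.sum_fth _ _ _
  sum_fth _ _ _ := h.sum_trd _ _ _

lemma IsDegenerate.sum_sum_offDiag (h : IsDegenerate d) (a k : α) :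
    ∑ j, ∑ l, offDiag d a j k l = d a a k k := by
  have hsplit (j l : α) : offDiag d a j k l = d a j k l - (if a = j then d a j k l else 0) -
      (if k = l then d a j k l else 0) + if a = j then if k = l then d a j k l else 0 else 0 := by
    by_cases hj : a = j <;> by_cases hl : k = l <;> simp [offDiag, hj, hl]
  simp [hsplit, Finset.sum_add_distrib, Finset.sum_sub_distrib, h.sum_fth, h.sum_snd]

lemma IsDegenerate.sum_expect_offDiag (h : IsDegenerate d) (a k : α) :
    ∑ j, 𝔼 l, offDiag d a j k l = d a a k k / Fintype.card α := by
  simp only [Fintype.expect_eq_sum_div_card, ← Finset.sum_div, h.sum_sum_offDiag]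

lemma div_card_sq_le_expect_sq (f : α → ℝ) (k : α) :
    (f k / Fintype.card α) ^ 2 ≤ 𝔼 l, f l ^ 2 := by
  have : Nonempty α := ⟨k⟩
  have hα : (1 : ℝ) ≤ Fintype.card α := by exact_mod_cast Fintype.card_pos
  rw [div_pow, Fintype.expect_eq_sum_div_card]
  exact div_le_div₀ (Finset.sum_nonneg fun _ _ => sq_nonneg _)
    (Finset.single_le_sum (f := fun l => f l ^ 2) (fun _ _ => sq_nonneg _) (Finset.mem_univ k))
    (by linarith) (le_self_pow₀ hα two_ne_zero)

theorem PermNormLE.offDiagonalBound [Nonempty α] (h : PermNormLE d B) (hd : IsDegenerate d)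
    (hV : tensorVariance d ≤ V) : OffDiagonalBound (offDiag d) (256 * B ^ 2) V where
  index_diag a k l := by simp [offDiag]
  value_diag a i k := by simp [offDiag]
  norm := h.decoupledNormSqLE_offDiag
  variance := (tensorVariance_le_of_sq_le (offDiag_sq_le d)).trans hV
  rowMean_sq_le a k := by
    rw [hd.sum_expect_offDiag, div_pow]
    calc d a a k k ^ 2 / (Fintype.card α : ℝ) ^ 2 ≤ d a a k k ^ 2 :=
          div_le_self (sq_nonneg _) (one_le_pow₀ (by exact_mod_cast Fintype.card_pos))
      _ ≤ B ^ 2 := sq_le_sq' (abs_le.1 (h.abs_diag_le a k)).1 (abs_le.1 (h.abs_diag_le a k)).2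
      _ ≤ 256 * B ^ 2 := by linarith [sq_nonneg B]
  sum_rowMean_sq_le := by
    simp only [hd.sum_expect_offDiag]
    refine (Finset.sum_le_sum fun a _ => ?_).trans hV
    calc 𝔼 k, (d a a k k / Fintype.card α) ^ 2 ≤ 𝔼 k, 𝔼 l, d a a k l ^ 2 :=
          Finset.expect_le_expect fun k _ => div_card_sq_le_expect_sq (d a a k) k
      _ ≤ ∑ i, 𝔼 k, 𝔼 l, d a i k l ^ 2 :=
          Finset.single_le_sum (f := fun i => 𝔼 k, 𝔼 l, d a i k l ^ 2)
            (fun i _ => Finset.expect_nonneg fun k _ => Finset.expect_nonneg fun l _ => sq_nonneg _)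
            (Finset.mem_univ a)

end PermNorm

section LinearTail

variable {α : Type*} [Fintype α]

/-- Up to a constant, a bound for the gradient at `σ` of the statistic `∑ a, H(a, σ a)`. -/
noncomputable def linearProxy (H : α → α → ℝ) (σ : Perm α) : ℝ :=
  ∑ a, H a (σ a) ^ 2 + ∑ a, 𝔼 k, H a k ^ 2

lemma add_add_sq_le (x y z : ℝ) : (x + y + z) ^ 2 ≤ 3 * (x ^ 2 + y ^ 2 + z ^ 2) := by
  nlinarith [sq_nonneg (x - y), sq_nonneg (x - z), sq_nonneg (y - z)]

lemma linearProxy_add_add_le (F G H : α → α → ℝ) (σ : Perm α) :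
    linearProxy (F + G + H) σ ≤ 3 * (linearProxy F σ + linearProxy G σ + linearProxy H σ) := by
  have hvalue : ∑ a, (F + G + H) a (σ a) ^ 2 ≤
      3 * (∑ a, F a (σ a) ^ 2 + ∑ a, G a (σ a) ^ 2 + ∑ a, H a (σ a) ^ 2) := by
    simp only [← Finset.sum_add_distrib, Finset.mul_sum]
    exact Finset.sum_le_sum fun a _ => add_add_sq_le _ _ _
  have hmean : ∑ a, 𝔼 k, (F + G + H) a k ^ 2 ≤
      3 * (∑ a, 𝔼 k, F a k ^ 2 + ∑ a, 𝔼 k, G a k ^ 2 + ∑ a, 𝔼 k, H a k ^ 2) := by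
    simp only [← Finset.sum_add_distrib, ← Finset.expect_add_distrib, Finset.mul_sum,
      Finset.mul_expect]
    exact Finset.sum_le_sum fun a _ => Finset.expect_le_expect fun k _ => add_add_sq_le _ _ _
  unfold linearProxy
  linarith

variable [DecidableEq α]

lemma gradSq_sum_apply_le (H : α → α → ℝ) (σ : Perm α) :
    gradSq (fun σ => ∑ a, H a (σ a)) σ ≤ 8 * linearProxy H σ :=
  (gradSq_le_of_sub_le fun a b => (sum_sub_sum_mul_swap H σ a b).le).trans
    (sum_sum_sq_apply_swap_le H σ)

variable [Nonempty α] {H : α → α → ℝ} {V B : ℝ}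

lemma ExpMomentBound.linearProxy (hB : ∀ a k, |H a k| ≤ B) (hV : ∑ a, 𝔼 k, H a k ^ 2 ≤ V) :
    ExpMomentBound (linearProxy H) (3 * V) (16 * B ^ 2) := by
  have hsum := ExpMomentBound.sum_apply (q := fun a k => H a k ^ 2) (fun _ _ => sq_nonneg _)
    fun a k => sq_le_sq' (abs_le.1 (hB a k)).1 (abs_le.1 (hB a k)).2
  exact (hsum.add (ExpMomentBound.const (∑ a, 𝔼 k, H a k ^ 2) _)).mono (fun _ => le_rfl)
    (by linarith) (by linarith)

theorem upperTail_sum_apply_le (hB : ∀ a k, |H a k| ≤ B) (hV : ∑ a, 𝔼 k, H a k ^ 2 ≤ V)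
    (hVB : 0 < V + B) {t : ℝ} (ht : 0 < t) :
    upperTail (fun σ : Perm α => ∑ a, H a (σ a)) t ≤
      Real.exp (-(t ^ 2 / (2 ^ 36 * (V + B * t)))) := by
  have hB0 : 0 ≤ B := (abs_nonneg _).trans (hB (Classical.arbitrary α) (Classical.arbitrary α))
  have hV0 : 0 ≤ V := hV.trans' <| Finset.sum_nonneg fun _ _ =>
    Finset.expect_nonneg fun _ _ => sq_nonneg _
  have hproxy := (ExpMomentBound.linearProxy hB hV).const_mul (c := 8) (by norm_num)
  have htail := upperTail_le_exp_neg (V := 2 ^ 33 * V) (B := 2 ^ 33 * B) (by positivity)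
    (by positivity) (by linarith) (gradSq_sum_apply_le H)
    (hproxy.mono (fun _ => le_rfl) (by linarith) (by linarith [sq_nonneg B])) ht
  rwa [show 8 * (2 ^ 33 * V + 2 ^ 33 * B * t) = 2 ^ 36 * (V + B * t) by ring] at htail

end LinearTail

section QuadraticGradient

variable {α : Type*} [Fintype α]

/-- The quadratic statistic `∑ i j, e(i, j, σ i, σ j)`. -/
def pairSum (e : α → α → α → α → ℝ) (σ : Perm α) : ℝ :=
  ∑ i, ∑ j, e i j (σ i) (σ j)

/-- The partial row sums `∑ j, e(a, j, k, σ j)` of the quadratic statistic. -/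
def rowField (e : α → α → α → α → ℝ) (σ : Perm α) (a k : α) : ℝ :=
  ∑ j, e a j k (σ j)

/-- The contribution to the gradient of `pairSum e` of the two entries moved at once. -/
noncomputable def pairProxy (e : α → α → α → α → ℝ) (σ : Perm α) : ℝ :=
  ∑ a, ∑ b, (e a b (σ a) (σ b) ^ 2 + e a b (σ b) (σ a) ^ 2) / Fintype.card α

variable {e : α → α → α → α → ℝ}

lemma pairProxy_nonneg (e : α → α → α → α → ℝ) (σ : Perm α) : 0 ≤ pairProxy e σ :=
  Finset.sum_nonneg fun _ _ => Finset.sum_nonneg fun _ _ => by positivity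

lemma sum_sum_sq_add_le (e : α → α → α → α → ℝ) (σ : Perm α) :
    (∑ a, ∑ b, (e a b (σ a) (σ b) + e b a (σ b) (σ a) + e a b (σ b) (σ a) +
      e b a (σ a) (σ b)) ^ 2) / Fintype.card α ≤ 8 * pairProxy e σ := by
  have hsq (p q r s : ℝ) : (p + q + r + s) ^ 2 ≤ 4 * ((p ^ 2 + r ^ 2) + (q ^ 2 + s ^ 2)) := by
    nlinarith [sq_nonneg (p - q), sq_nonneg (p - r), sq_nonneg (p - s), sq_nonneg (q - r),
      sq_nonneg (q - s), sq_nonneg (r - s)]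
  have hsymm : ∑ a, ∑ b, (e b a (σ b) (σ a) ^ 2 + e b a (σ a) (σ b) ^ 2) =
      ∑ a, ∑ b, (e a b (σ a) (σ b) ^ 2 + e a b (σ b) (σ a) ^ 2) := Finset.sum_comm
  calc _ ≤ (∑ a, ∑ b, 4 * ((e a b (σ a) (σ b) ^ 2 + e a b (σ b) (σ a) ^ 2) +
          (e b a (σ b) (σ a) ^ 2 + e b a (σ a) (σ b) ^ 2))) / (Fintype.card α : ℝ) := by
        gcongr
        exact hsq _ _ _ _
    _ = 8 * pairProxy e σ := by
        simp only [Finset.sum_add_distrib] at hsymm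
        simp only [pairProxy, ← Finset.sum_div, ← Finset.mul_sum, Finset.sum_add_distrib, hsymm]
        ring

variable [DecidableEq α]

lemma pairSum_sub_pairSum_mul_swap (hindex : ∀ a k l, e a a k l = 0)
    (hvalue : ∀ a i k, e a i k k = 0) (σ : Perm α) (a b : α) :
    pairSum e σ - pairSum e (σ * swap a b) =
      (rowField e σ a (σ a) + rowField e σ b (σ b) - rowField e σ a (σ b) -
        rowField e σ b (σ a)) +
      (rowField (swapPairs e) σ a (σ a) + rowField (swapPairs e) σ b (σ b) -
        rowField (swapPairs e) σ a (σ b) - rowField (swapPairs e) σ b (σ a)) -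
      (e a b (σ a) (σ b) + e b a (σ b) (σ a) + e a b (σ b) (σ a) + e b a (σ a) (σ b)) := by
  have hrow := sum_sub_sum_mul_swap (rowField e σ) σ a b
  have hcolumn := sum_sub_sum_mul_swap (rowField (swapPairs e) σ) σ a b
  have hboth := sum_sub_sum_mul_swap
    (fun c k => rowField e σ c k - rowField e (σ * swap a b) c k) σ a b
  have hinner (c k : α) : rowField e σ c k - rowField e (σ * swap a b) c k =
      e c a k (σ a) + e c b k (σ b) - e c a k (σ b) - e c b k (σ a) :=
    sum_sub_sum_mul_swap (fun j l => e c j k l) σ a b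
  simp only [Finset.sum_sub_distrib] at hboth
  simp only [hinner, hindex, hvalue] at hboth
  have hcomm (τ : Perm α) :
      ∑ c, rowField (swapPairs e) σ c (τ c) = ∑ i, rowField e τ i (σ i) := Finset.sum_comm
  rw [hcomm, hcomm] at hcolumn
  simp only [pairSum]
  simp only [rowField] at *
  linarith

lemma gradSq_sum_apply_add_pairSum_le (hindex : ∀ a k l, e a a k l = 0)
    (hvalue : ∀ a i k, e a i k k = 0) (ξ : α → α → ℝ) (σ : Perm α) :
    gradSq (fun σ => ∑ a, ξ a (σ a) + pairSum e σ) σ ≤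
      16 * (linearProxy (ξ + rowField e σ + rowField (swapPairs e) σ) σ + pairProxy e σ) := by
  set H := ξ + rowField e σ + rowField (swapPairs e) σ with hH
  set u : α → α → ℝ := fun a b => H a (σ a) + H b (σ b) - H a (σ b) - H b (σ a) with hu
  set v : α → α → ℝ := fun a b =>
    e a b (σ a) (σ b) + e b a (σ b) (σ a) + e a b (σ b) (σ a) + e b a (σ a) (σ b) with hv
  have hsub (a b : α) : (∑ c, ξ c (σ c) + pairSum e σ) -
      (∑ c, ξ c ((σ * swap a b) c) + pairSum e (σ * swap a b)) = u a b - v a b := by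
    rw [add_sub_add_comm, sum_sub_sum_mul_swap, pairSum_sub_pairSum_mul_swap hindex hvalue, hu, hv,
      hH]
    simp only [Pi.add_apply]
    ring
  calc gradSq (fun σ => ∑ a, ξ a (σ a) + pairSum e σ) σ
      ≤ (∑ a, ∑ b, (u a b - v a b) ^ 2) / Fintype.card α :=
        gradSq_le_of_sub_le fun a b => (hsub a b).le
    _ ≤ (∑ a, ∑ b, (2 * u a b ^ 2 + 2 * v a b ^ 2)) / Fintype.card α := by
        gcongr
        exact sub_sq_le_two_mul_add _ _
    _ = 2 * ((∑ a, ∑ b, u a b ^ 2) / Fintype.card α) +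
          2 * ((∑ a, ∑ b, v a b ^ 2) / Fintype.card α) := by
        simp only [Finset.sum_add_distrib, ← Finset.mul_sum]
        ring
    _ ≤ 2 * (8 * linearProxy H σ) + 2 * (8 * pairProxy e σ) := by
        gcongr
        exacts [sum_sum_sq_apply_swap_le H σ, sum_sum_sq_add_le e σ]
    _ = 16 * (linearProxy H σ + pairProxy e σ) := by ring

end QuadraticGradient

section QuadraticTail

variable {α : Type*} [Fintype α] {e d : α → α → α → α → ℝ} {ξ : α → α → ℝ} {β V B : ℝ}

lemma OffDiagonalBound.expMomentBound_linearProxy_rowField (h : OffDiagonalBound e β V)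
    (hα : 4 ≤ Fintype.card α) :
    ExpMomentBound (fun σ => linearProxy (rowField e σ) σ) (2 ^ 26 * V) (2 ^ 34 * β) := by
  have : Nonempty α := Fintype.card_pos_iff.1 (by omega)
  have hβ := h.norm.nonneg
  have hV := (tensorVariance_nonneg e).trans h.variance
  have hmean := (h.expMomentBound_mean_rowSumSq (by omega)).mono (fun _ => le_rfl) le_rfl
    (show 128 * β ≤ 2 ^ 33 * β by linarith)
  exact ((h.expMomentBound_rowSumSq hα).add hmean).mono (fun _ => le_rfl) (by linarith)
    (by linarith)

lemma OffDiagonalBound.expMomentBound_pairProxy (h : OffDiagonalBound e β V)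
    (hα : 4 ≤ Fintype.card α) :
    ExpMomentBound (pairProxy e) (2 * V) (64 * β) := by
  have : Nonempty α := Fintype.card_pos_iff.1 (by omega)
  have hα' : (4 : ℝ) ≤ Fintype.card α := by exact_mod_cast hα
  have hentry (a b k l : α) : e a b k l ^ 2 ≤ β := by
    have hrow := h.norm.sum_sq_le a k (swap b l)
    refine hrow.trans' ?_
    simpa using Finset.single_le_sum (f := fun i => e a i k (swap b l i) ^ 2)
      (fun _ _ => sq_nonneg _) (Finset.mem_univ b)
  have hmean : ∑ a, ∑ b, 𝔼 k, 𝔼 l, (e a b k l ^ 2 + e a b l k ^ 2) / (Fintype.card α : ℝ) =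
      2 / Fintype.card α * tensorVariance e := by
    have hcomm (a b : α) : 𝔼 k, 𝔼 l, e a b l k ^ 2 = 𝔼 k, 𝔼 l, e a b k l ^ 2 :=
      Finset.expect_comm _ _ _
    simp only [← Finset.expect_div, ← Finset.sum_div, Finset.expect_add_distrib, hcomm,
      Finset.sum_add_distrib, tensorVariance]
    ring
  have hpair := ExpMomentBound.sum_apply_apply (κ := 2 * β)
    (p := fun a b k l => (e a b k l ^ 2 + e a b l k ^ 2) / Fintype.card α)
    (fun _ _ _ _ => by positivity)
    (fun a b k l => by gcongr; linarith [hentry a b k l, hentry a b l k])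
    fun a k l => by simp [h.index_diag]
  refine hpair.mono (fun _ => le_rfl) ?_ (by linarith)
  have hcard : 2 / (Fintype.card α : ℝ) ≤ 1 / 2 := by
    rw [div_le_div_iff₀ (by linarith) two_pos]
    linarith
  rw [hmean]
  linarith [mul_le_mul hcard h.variance (tensorVariance_nonneg e) (by norm_num)]

lemma OffDiagonalBound.expMomentBound_proxy
    (h : OffDiagonalBound e (256 * B ^ 2) V) (h' : OffDiagonalBound (swapPairs e) (256 * B ^ 2) V)
    (hα : 4 ≤ Fintype.card α) (hξB : ∀ a k, |ξ a k| ≤ 4 * B) (hξV : ∑ a, 𝔼 k, ξ a k ^ 2 ≤ V) :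
    ExpMomentBound (fun σ =>
      16 * (linearProxy (ξ + rowField e σ + rowField (swapPairs e) σ) σ + pairProxy e σ))
      (2 ^ 33 * V) ((2 ^ 33 * B) ^ 2) := by
  have : Nonempty α := Fintype.card_pos_iff.1 (by omega)
  have hV := (tensorVariance_nonneg e).trans h.variance
  have hB := sq_nonneg B
  have hlinear := (ExpMomentBound.linearProxy hξB hξV).mono (fun _ => le_rfl) le_rfl
    (show 16 * (4 * B) ^ 2 ≤ 2 ^ 34 * (256 * B ^ 2) by linarith)
  have hpair := (h.expMomentBound_pairProxy hα).mono (fun _ => le_rfl) le_rfl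
    (show 64 * (256 * B ^ 2) ≤ 2 ^ 34 * (256 * B ^ 2) by linarith)
  have hrow := h.expMomentBound_linearProxy_rowField hα
  have hcolumn := h'.expMomentBound_linearProxy_rowField hα
  refine (((hlinear.add hrow).add (hcolumn.add hpair)).const_mul (c := 48) (by norm_num)).mono
    (fun σ => ?_) (by linarith) (by linarith)
  linarith [linearProxy_add_add_le ξ (rowField e σ) (rowField (swapPairs e) σ) σ,
    pairProxy_nonneg e σ]

theorem upperTail_sum_apply_add_pairSum_offDiag_le
    (hd : PermNormLE d B) (hd' : IsDegenerate d) (hα : 4 ≤ Fintype.card α)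
    (hξB : ∀ a k, |ξ a k| ≤ 4 * B) (hξV : ∑ a, 𝔼 k, ξ a k ^ 2 ≤ V) (hdV : tensorVariance d ≤ V)
    (hVB : 0 < V + B) {t : ℝ} (ht : 0 < t) :
    upperTail (fun σ : Perm α => ∑ a, ξ a (σ a) + pairSum (offDiag d) σ) t ≤
      Real.exp (-(t ^ 2 / (2 ^ 36 * (V + B * t)))) := by
  have : Nonempty α := Fintype.card_pos_iff.1 (by omega)
  have hB := hd.nonneg
  have hV := (tensorVariance_nonneg d).trans hdV
  have hrow := hd.offDiagonalBound hd' hdV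
  have hcolumn := hd.swapPairs.offDiagonalBound hd'.swapPairs
    ((tensorVariance_swapPairs d).trans_le hdV)
  rw [offDiag_swapPairs] at hcolumn
  have htail := upperTail_le_exp_neg (by positivity) (by positivity) (by linarith)
    (gradSq_sum_apply_add_pairSum_le hrow.index_diag hrow.value_diag ξ)
    (hrow.expMomentBound_proxy hcolumn hα hξB hξV) ht
  rwa [show 8 * (2 ^ 33 * V + 2 ^ 33 * B * t) = 2 ^ 36 * (V + B * t) by ring] at htail

end QuadraticTail

section DoubleCentre

variable {α : Type*} [Fintype α]

/-- `f` recentred in both variables, so that all its row means and column means vanish. -/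
noncomputable def doubleCentre (f : α → α → ℝ) (i k : α) : ℝ :=
  f i k - 𝔼 k', f i k' - 𝔼 i', f i' k + 𝔼 i', 𝔼 k', f i' k'

lemma doubleCentre_zero (i k : α) : doubleCentre (fun _ _ => (0 : ℝ)) i k = 0 := by
  simp [doubleCentre]

lemma sum_doubleCentre_left (f : α → α → ℝ) (k : α) : ∑ i, doubleCentre f i k = 0 := by
  have : Nonempty α := ⟨k⟩
  simp only [← Fintype.card_mul_expect, doubleCentre, Finset.expect_add_distrib,
    Finset.expect_sub_distrib, Fintype.expect_const]
  ring

lemma sum_doubleCentre_right (f : α → α → ℝ) (i : α) : ∑ k, doubleCentre f i k = 0 := by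
  have : Nonempty α := ⟨i⟩
  simp only [← Fintype.card_mul_expect, doubleCentre, Finset.expect_add_distrib,
    Finset.expect_sub_distrib, Fintype.expect_const]
  rw [Finset.expect_comm _ _ fun k i => f i k]
  ring

lemma sum_doubleCentre_comm {κ : Type*} [Fintype κ] (f : κ → α → α → ℝ) (i k : α) :
    ∑ j, doubleCentre (f j) i k = doubleCentre (fun i k => ∑ j, f j i k) i k := by
  simp only [doubleCentre, Finset.expect_sum_comm, Finset.sum_add_distrib, Finset.sum_sub_distrib]

lemma sum_doubleCentre_apply (f : α → α → ℝ) (σ : Perm α) :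
    ∑ i, doubleCentre f i (σ i) = ∑ i, f i (σ i) - Fintype.card α * 𝔼 i, 𝔼 k, f i k := by
  rcases isEmpty_or_nonempty α with _ | _
  · simp
  have hcolumn : ∑ i, 𝔼 i', f i' (σ i) = Fintype.card α * 𝔼 i, 𝔼 k, f i k := by
    rw [Equiv.sum_comp σ fun k => 𝔼 i', f i' k, ← Fintype.card_mul_expect, Finset.expect_comm]
  simp only [doubleCentre, Finset.sum_add_distrib, Finset.sum_sub_distrib, hcolumn,
    Finset.sum_const, Finset.card_univ, nsmul_eq_mul, ← Fintype.card_mul_expect]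
  ring

lemma abs_doubleCentre_le {f : α → α → ℝ} {B : ℝ} (h : ∀ i k, |f i k| ≤ B) (i k : α) :
    |doubleCentre f i k| ≤ 4 * B := by
  have : Nonempty α := ⟨i⟩
  have hexpect {g : α → ℝ} (hg : ∀ a, |g a| ≤ B) : |𝔼 a, g a| ≤ B :=
    (Finset.abs_expect_le _ _).trans (Finset.expect_le Finset.univ_nonempty fun a _ => hg a)
  have hrow := abs_le.1 (hexpect (h i))
  have hcolumn := abs_le.1 (hexpect fun i' => h i' k)
  have hmean := abs_le.1 (hexpect fun i' => hexpect (h i'))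
  have hentry := abs_le.1 (h i k)
  rw [doubleCentre, abs_le]
  constructor <;> linarith

end DoubleCentre

section HoeffdingDecomposition

variable {α : Type*} [Fintype α]

/-- The first-order (single-index) Hoeffding projection of `∑ i j, w(i, j, σ i, σ j)`. -/
noncomputable def singleProjection (w : α → α → α → α → ℝ) (i k : α) : ℝ :=
  doubleCentre (fun i k => 𝔼 j, 𝔼 l, w i j k l) i k +
    doubleCentre (fun j l => 𝔼 i, 𝔼 k, w i j k l) i k

/-- The degenerate Hoeffding projection of `w`, recentred in the index pairs `(i, k)` and
`(j, l)`. -/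
noncomputable def pairProjection (w : α → α → α → α → ℝ) (i j k l : α) : ℝ :=
  doubleCentre (fun i k => doubleCentre (fun j l => w i j k l) j l) i k

lemma isDegenerate_pairProjection (w : α → α → α → α → ℝ) : IsDegenerate (pairProjection w) where
  sum_fst _ _ _ := sum_doubleCentre_left _ _
  sum_trd _ _ _ := sum_doubleCentre_right _ _
  sum_snd i k l := by
    simp only [pairProjection, sum_doubleCentre_comm]
    simp only [sum_doubleCentre_left, doubleCentre_zero]
  sum_fth i j k := by
    simp only [pairProjection, sum_doubleCentre_comm]
    simp only [sum_doubleCentre_right, doubleCentre_zero]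

lemma pairSum_pairProjection (w : α → α → α → α → ℝ) (σ : Perm α) :
    pairSum w σ = ∑ i, Fintype.card α * singleProjection w i (σ i) +
      pairSum (pairProjection w) σ +
      (Fintype.card α : ℝ) ^ 2 * 𝔼 i, 𝔼 k, 𝔼 j, 𝔼 l, w i j k l := by
  have hmean : 𝔼 j, 𝔼 l, 𝔼 i, 𝔼 k, w i j k l = 𝔼 i, 𝔼 k, 𝔼 j, 𝔼 l, w i j k l := by
    simpa only [← Finset.univ_product_univ, Finset.expect_product] using
      Finset.expect_comm Finset.univ Finset.univ fun p q : α × α => w q.1 p.1 q.2 p.2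
  have hsingle : ∑ i, singleProjection w i (σ i) =
      (∑ i, 𝔼 j, 𝔼 l, w i j (σ i) l + ∑ j, 𝔼 i, 𝔼 k, w i j k (σ j)) -
        2 * (Fintype.card α * 𝔼 i, 𝔼 k, 𝔼 j, 𝔼 l, w i j k l) := by
    simp only [singleProjection, Finset.sum_add_distrib, sum_doubleCentre_apply, hmean]
    ring
  have hpair : pairSum (pairProjection w) σ = pairSum w σ -
      Fintype.card α * (∑ i, 𝔼 j, 𝔼 l, w i j (σ i) l + ∑ j, 𝔼 i, 𝔼 k, w i j k (σ j)) +
        (Fintype.card α : ℝ) ^ 2 * 𝔼 i, 𝔼 k, 𝔼 j, 𝔼 l, w i j k l := by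
    simp only [pairSum, pairProjection, sum_doubleCentre_comm, sum_doubleCentre_apply]
    simp only [Finset.sum_sub_distrib, Finset.expect_sub_distrib, Finset.expect_sum_comm,
      ← Finset.mul_sum, ← Finset.mul_expect]
    ring
  rw [← Finset.mul_sum, hsingle, hpair]
  ring

lemma pairSum_eq_sum_diag_add_pairSum_offDiag (d : α → α → α → α → ℝ) (σ : Perm α) :
    pairSum d σ = ∑ i, d i i (σ i) (σ i) + pairSum (offDiag d) σ := by
  have hsplit (i j : α) : d i j (σ i) (σ j) =
      (if i = j then d i j (σ i) (σ j) else 0) + offDiag d i j (σ i) (σ j) := by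
    by_cases h : i = j <;> simp [offDiag, h]
  simp only [pairSum]
  rw [← Finset.sum_add_distrib]
  refine Finset.sum_congr rfl fun i _ => ?_
  rw [Finset.sum_congr rfl fun j _ => hsplit i j, Finset.sum_add_distrib]
  simp

theorem upperTail_pairSum_le [DecidableEq α] {w : α → α → α → α → ℝ} {Ba Va Bd Vd : ℝ}
    (hα : 4 ≤ Fintype.card α)
    (hBa : ∀ i k, |Fintype.card α * singleProjection w i k| ≤ Ba)
    (hVa : ∑ i, 𝔼 k, (Fintype.card α * singleProjection w i k) ^ 2 ≤ Va)
    (hBd : PermNormLE (pairProjection w) Bd)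
    (hVd : ∑ i, 𝔼 k, doubleCentre (fun i k => pairProjection w i i k k) i k ^ 2 +
      tensorVariance (pairProjection w) ≤ Vd)
    (hVBa : 0 < Va + Ba) (hVBd : 0 < Vd + Bd) {t : ℝ} (ht : 0 < t) :
    upperTail (pairSum w) t ≤ Real.exp (-(1 / 2 ^ 38 * t ^ 2 / (Va + Ba * t))) +
      Real.exp (-(1 / 2 ^ 38 * t ^ 2 / (Vd + Bd * t))) := by
  obtain rfl : ‹DecidableEq α› = fun a b => Classical.propDecidable (a = b) :=
    Subsingleton.elim _ _
  have : Nonempty α := Fintype.card_pos_iff.1 (by omega)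
  set H : α → α → ℝ := fun i k => Fintype.card α * singleProjection w i k
  set d := pairProjection w
  set ξ := doubleCentre fun i k => d i i k k
  have hVa0 : 0 ≤ Va := hVa.trans' <| Finset.sum_nonneg fun _ _ =>
    Finset.expect_nonneg fun _ _ => sq_nonneg _
  have hBa0 : 0 ≤ Ba := (abs_nonneg _).trans (hBa (Classical.arbitrary α) (Classical.arbitrary α))
  have hξ0 : 0 ≤ ∑ i, 𝔼 k, ξ i k ^ 2 := Finset.sum_nonneg fun _ _ =>
    Finset.expect_nonneg fun _ _ => sq_nonneg _
  have hd0 := tensorVariance_nonneg d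
  have hsplit : pairSum w = fun σ =>
      (∑ i, H i (σ i) + (∑ i, ξ i (σ i) + pairSum (offDiag d) σ)) +
      (Fintype.card α * (𝔼 i, 𝔼 k, d i i k k) +
        (Fintype.card α : ℝ) ^ 2 * 𝔼 i, 𝔼 k, 𝔼 j, 𝔼 l, w i j k l) := by
    ext σ
    rw [pairSum_pairProjection, pairSum_eq_sum_diag_add_pairSum_offDiag d, sum_doubleCentre_apply]
    ring
  have hlinear := upperTail_sum_apply_le hBa hVa hVBa (half_pos ht)
  have hquadratic := upperTail_sum_apply_add_pairSum_offDiag_le hBd (isDegenerate_pairProjection w)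
    hα (abs_doubleCentre_le hBd.abs_diag_le) (V := Vd) (by linarith) (by linarith) hVBd
    (half_pos ht)
  have hlinear' := exp_neg_half_sq_div_le hVa0 hBa0 hVBa ht (c := 2 ^ 36) (by norm_num)
  have hquadratic' := exp_neg_half_sq_div_le (by linarith) hBd.nonneg hVBd ht (c := 2 ^ 36)
    (by norm_num)
  norm_num only at hlinear hlinear' hquadratic hquadratic' ⊢
  rw [hsplit, upperTail_add_const]
  exact (upperTail_add_le _ _ t).trans
    (add_le_add (hlinear.trans hlinear') (hquadratic.trans hquadratic'))

end HoeffdingDecomposition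

section FiniteTensors

variable {N : ℕ}

lemma aw_eq_singleProjection (w : Fin N → Fin N → Fin N → Fin N → ℝ) :
    aw N w = singleProjection w := by
  ext i k
  have hrow (i : Fin N) :
      ∑ k', ∑ j', ∑ l', w i j' k' l' = ∑ j', ∑ k', ∑ l', w i j' k' l' := Finset.sum_comm
  have hcolumn (j : Fin N) :
      ∑ l', ∑ i', ∑ k', w i' j k' l' = ∑ i', ∑ k', ∑ l', w i' j k' l' := by
    rw [Finset.sum_comm]
    exact Finset.sum_congr rfl fun i' _ => Finset.sum_comm
  have hall : ∑ j', ∑ i', ∑ k', ∑ l', w i' j' k' l' = ∑ i', ∑ j', ∑ k', ∑ l', w i' j' k' l' :=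
    Finset.sum_comm
  have hcolumn' : ∑ j', ∑ i', ∑ k', w i' j' k' k = ∑ i', ∑ j', ∑ k', w i' j' k' k :=
    Finset.sum_comm
  simp only [aw, singleProjection, doubleCentre, Fintype.expect_eq_sum_div_card, Fintype.card_fin]
  simp only [← Finset.sum_div, hrow, hcolumn, hall, hcolumn']
  ring

lemma dw_eq_pairProjection (w : Fin N → Fin N → Fin N → Fin N → ℝ) :
    dw N w = pairProjection w := by
  ext i j k l
  have hrow (i l : Fin N) : ∑ k', ∑ j', w i j' k' l = ∑ j', ∑ k', w i j' k' l := Finset.sum_comm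
  have hrow' (i : Fin N) :
      ∑ k', ∑ j', ∑ l', w i j' k' l' = ∑ j', ∑ k', ∑ l', w i j' k' l' := Finset.sum_comm
  simp only [dw, pairProjection, doubleCentre, Fintype.expect_eq_sum_div_card, Fintype.card_fin]
  simp only [Finset.sum_add_distrib, Finset.sum_sub_distrib, ← Finset.sum_div, hrow, hrow']
  ring

lemma sum_mul_mul_le_of_opNorm_le {M : Matrix (Fin N) (Fin N) ℝ} {B : ℝ} (hM : opNorm M ≤ B)
    (x y : Fin N → ℝ) :
    ∑ i, ∑ j, x i * M i j * y j ≤ B / 2 * (∑ i, x i ^ 2 + ∑ j, y j ^ 2) := by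
  set T := LinearMap.toContinuousLinearMap (Matrix.toEuclideanLin M) with hT
  set X : EuclideanSpace ℝ (Fin N) := WithLp.toLp 2 x with hX
  set Y : EuclideanSpace ℝ (Fin N) := WithLp.toLp 2 y with hY
  have hB : 0 ≤ B := (norm_nonneg T).trans hM
  have hinner : ∑ i, ∑ j, x i * M i j * y j = inner ℝ X (T Y) := by
    simp [hT, hX, hY, PiLp.inner_apply, Matrix.mulVec, dotProduct, Matrix.toLpLin_apply,
      Finset.mul_sum, mul_comm, mul_left_comm]
  calc ∑ i, ∑ j, x i * M i j * y j = inner ℝ X (T Y) := hinner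
    _ ≤ ‖X‖ * ‖T Y‖ := real_inner_le_norm X (T Y)
    _ ≤ ‖X‖ * (B * ‖Y‖) := by
        gcongr
        exact T.le_of_opNorm_le hM Y
    _ ≤ B / 2 * (‖X‖ ^ 2 + ‖Y‖ ^ 2) := by nlinarith [mul_nonneg hB (sq_nonneg (‖X‖ - ‖Y‖))]
    _ = B / 2 * (∑ i, x i ^ 2 + ∑ j, y j ^ 2) := by
        simp [hX, hY, EuclideanSpace.norm_sq_eq]

lemma permNormLE_of_opNorm_le {d : Fin N → Fin N → Fin N → Fin N → ℝ} {B : ℝ}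
    (h : ∀ σ : Perm (Fin N), opNorm (Matrix.of fun i j => d i j (σ i) (σ j)) ≤ B) :
    PermNormLE d B :=
  fun σ => sum_mul_mul_le_of_opNorm_le (h σ)

lemma permExp_eq_expect (f : Perm (Fin N) → ℝ) : permExp N f = 𝔼 σ, f σ := by
  rw [permExp, Fintype.expect_eq_sum_div_card, Fintype.card_perm, Fintype.card_fin]

lemma permProb_sub_permExp_ge (f : Perm (Fin N) → ℝ) (t : ℝ) :
    permProb N (fun σ => f σ - permExp N f ≥ t) = upperTail f t := by
  simp only [permProb, permExp_eq_expect, upperTail, Fintype.expect_eq_sum_div_card,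
    Fintype.card_perm, Fintype.card_fin, Finset.sum_boole, ge_iff_le, le_sub_iff_add_le']

end FiniteTensors

/-- Concentration inequality for a general double-indexed permutation
statistic. -/
theorem general_dips_tail :
    ∃ K : ℝ, 0 < K ∧
      ∀ (N : ℕ) (hN : 20 ≤ N)
        (w : Fin N → Fin N → Fin N → Fin N → ℝ)
        (Ba Va Bd Vd : ℝ)
        (ξw : Fin N → Fin N → ℝ),
        Ba = (N : ℝ) * Finset.univ.sup'
            ⟨((⟨0, by omega⟩ : Fin N), (⟨0, by omega⟩ : Fin N)), Finset.mem_univ _⟩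
            (fun p : Fin N × Fin N => |aw N w p.1 p.2|) →
        Va = (N : ℝ) * ∑ i, ∑ j, (aw N w i j) ^ 2 →
        Bd = Finset.univ.sup' ⟨1, Finset.mem_univ 1⟩
            (fun σ : Equiv.Perm (Fin N) =>
              opNorm (Matrix.of fun i j => dw N w i j (σ i) (σ j))) →
        (∀ i k, ξw i k = dw N w i i k k - (∑ k', dw N w i i k' k') / (N : ℝ)
            - (∑ i', dw N w i' i' k k) / (N : ℝ)
            + (∑ i', ∑ k', dw N w i' i' k' k') / (N : ℝ) ^ 2) →
        Vd = (∑ i, ∑ k, (ξw i k) ^ 2) / (N : ℝ)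
            + (∑ i, ∑ j, ∑ k, ∑ l, (dw N w i j k l) ^ 2) / (N : ℝ) ^ 2 →
        0 < Va + Ba →
        0 < Vd + Bd →
        ∀ t : ℝ, 0 < t →
          permProb N (fun σ =>
              (∑ i, ∑ j, w i j (σ i) (σ j))
                - permExp N (fun σ' => ∑ i, ∑ j, w i j (σ' i) (σ' j)) ≥ t)
            ≤ Real.exp (-(K * t ^ 2 / (Va + Ba * t)))
              + Real.exp (-(K * t ^ 2 / (Vd + Bd * t))) := by
  refine ⟨1 / 2 ^ 38, by norm_num, ?_⟩
  intro N hN w Ba Va Bd Vd ξw hBa hVa hBd hξ hVd hVBa hVBd t ht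
  obtain rfl : ξw = doubleCentre fun i k => pairProjection w i i k k := by
    ext i k
    simp only [hξ, dw_eq_pairProjection, doubleCentre, Fintype.expect_eq_sum_div_card,
      Fintype.card_fin, ← Finset.sum_div, div_div, sq]
  rw [permProb_sub_permExp_ge]
  simp only [aw_eq_singleProjection, dw_eq_pairProjection] at hBa hVa hBd hVd
  refine upperTail_pairSum_le (by rw [Fintype.card_fin]; omega) (fun i k => ?_) ?_
    (permNormLE_of_opNorm_le fun σ => ?_) ?_ hVBa hVBd ht
  · rw [hBa, Fintype.card_fin, abs_mul, Nat.abs_cast]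
    gcongr
    exact Finset.le_sup' (fun p : Fin N × Fin N => |singleProjection w p.1 p.2|)
      (Finset.mem_univ (i, k))
  · simp only [hVa, Fintype.expect_eq_sum_div_card, Fintype.card_fin, mul_pow, ← Finset.mul_sum,
      ← Finset.sum_div]
    refine le_of_eq ?_
    field_simp
  · rw [hBd]
    exact Finset.le_sup' (fun σ : Perm (Fin N) =>
      opNorm (Matrix.of fun i j => pairProjection w i j (σ i) (σ j))) (Finset.mem_univ σ)
  · simp only [hVd, tensorVariance, Fintype.expect_eq_sum_div_card, Fintype.card_fin,
      ← Finset.sum_div, div_div, ← sq, le_refl]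
end

section
/- Let N be a positive integer and W = [w(i,j,k,ℓ)] ∈ R^{N×N×N×N} a fixed tensor. Then (i) for every permutation σ ∈ S_N the deterministic identity Σ_{i,j∈[N]} w(i,j,σ(i),σ(j)) = N Σ_{i=1}^N a_w(i,σ(i)) + Σ_{i,j∈[N]} d_w(i,j,σ(i),σ(j)) + N² w(·,·,·,·) holds; (ii) the tensor d_w is degenerate, i.e., for all i,j,k,ℓ ∈ [N], Σ_ℓ d_w(i,j,k,ℓ) = Σ_k d_w(i,j,k,ℓ) = Σ_j d_w(i,j,k,ℓ) = Σ_i d_w(i,j,k,ℓ) = 0; and (iii) Σ_{i,j∈[N]} a_w(i,j) = 0. -/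
open scoped BigOperators Classical

/-!
Hoeffding's centering of a function `f` of two variables subtracts both marginal means and adds back
the grand mean. The result sums to zero in each variable. Along the graph of a bijection it sums to
the sum of `f` minus `card` times the grand mean, since each marginal mean contributes that amount.

Group the four coordinates into the pairs `(i, k)` and `(j, l)`. Then `d_w` is the centering of `w`
in both pairs, and `a_w` adds the centerings, in either pair, of the mean of `w` over the other. If
`Tₚ` denotes summing over pair `p` along the permutation and `Mₚ` averaging over it, the identity is
`T₁ T₂ = N (T₁ - N M₁) M₂ + N (T₂ - N M₂) M₁ + (T₁ - N M₁) (T₂ - N M₂) + N² M₁ M₂`.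
-/

open Finset

section DoubleCenter

variable {α β ι M : Type*} [Fintype α] [Fintype β] [AddCommGroup M] [Module ℚ≥0 M]

/-- Hoeffding's two-way centering of `f`, which makes both marginal means vanish. -/
def doubleCenter (f : α → β → M) (x : α) (y : β) : M :=
  f x y - 𝔼 y', f x y' - 𝔼 x', f x' y + 𝔼 x', 𝔼 y', f x' y'

theorem sum_doubleCenter_left (f : α → β → M) (y : β) : ∑ x, doubleCenter f x y = 0 := by
  simp only [doubleCenter, sum_add_distrib, sum_sub_distrib, sum_const, card_univ,
    Fintype.card_smul_expect]
  abel

theorem doubleCenter_swap (f : α → β → M) (x : α) (y : β) :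
    doubleCenter (fun y x => f x y) y x = doubleCenter f x y := by
  simp only [doubleCenter, expect_comm univ univ f]
  abel

theorem sum_doubleCenter_right (f : α → β → M) (x : α) : ∑ y, doubleCenter f x y = 0 := by
  simpa only [doubleCenter_swap] using sum_doubleCenter_left (fun y x => f x y) x

theorem sum_doubleCenter_equiv (f : α → β → M) (σ : α ≃ β) :
    ∑ x, doubleCenter f x (σ x) = ∑ x, f x (σ x) - Fintype.card α • 𝔼 x, 𝔼 y, f x y := by
  have column_means : ∑ x, 𝔼 x', f x' (σ x) = Fintype.card α • 𝔼 x, 𝔼 y, f x y := by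
    rw [σ.sum_comp fun y => 𝔼 x, f x y, ← Fintype.card_smul_expect, expect_comm,
      Fintype.card_congr σ]
  simp only [doubleCenter, sum_add_distrib, sum_sub_distrib, column_means, sum_const, card_univ,
    Fintype.card_smul_expect]
  abel

theorem doubleCenter_zero (x : α) (y : β) : doubleCenter (fun _ _ => (0 : M)) x y = 0 := by
  simp only [doubleCenter, expect_const_zero, sub_zero, add_zero]

theorem sum_doubleCenter (s : Finset ι) (f : ι → α → β → M) (x : α) (y : β) :
    ∑ i ∈ s, doubleCenter (f i) x y = doubleCenter (fun x y => ∑ i ∈ s, f i x y) x y := by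
  simp only [doubleCenter, sum_add_distrib, sum_sub_distrib, expect_sum_comm]

end DoubleCenter

section Tensor

variable {α β γ δ M : Type*} [Fintype α] [Fintype β] [Fintype γ] [Fintype δ]
  [AddCommGroup M] [Module ℚ≥0 M]

/-- The part of a tensor that depends on the coordinate pair `(i, k)` only: the two-way centering
of its mean over the pair `(j, l)`. It is the first half of `a_w`. -/
def firstPairPart (w : α → β → γ → δ → M) (i : α) (k : γ) : M :=
  doubleCenter (fun i k => 𝔼 j, 𝔼 l, w i j k l) i k

/-- The part of a tensor that depends on the coordinate pair `(j, l)` only: the two-way centering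
of its mean over the pair `(i, k)`. It is the second half of `a_w`. -/
def secondPairPart (w : α → β → γ → δ → M) (j : β) (l : δ) : M :=
  doubleCenter (fun j l => 𝔼 i, 𝔼 k, w i j k l) j l

/-- The degenerate part `d_w` of a tensor: its two-way centering in the coordinate pair `(i, k)`
and in the coordinate pair `(j, l)`. -/
def degeneratePart (w : α → β → γ → δ → M) (i : α) (j : β) (k : γ) (l : δ) : M :=
  doubleCenter (fun i k => doubleCenter (fun j l => w i j k l) j l) i k

theorem sum_degeneratePart_first (w : α → β → γ → δ → M) (j : β) (k : γ) (l : δ) :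
    ∑ i, degeneratePart w i j k l = 0 :=
  sum_doubleCenter_left _ k

theorem sum_degeneratePart_second (w : α → β → γ → δ → M) (i : α) (k : γ) (l : δ) :
    ∑ j, degeneratePart w i j k l = 0 := by
  simp only [degeneratePart, sum_doubleCenter, sum_doubleCenter_left, doubleCenter_zero]

theorem sum_degeneratePart_third (w : α → β → γ → δ → M) (i : α) (j : β) (l : δ) :
    ∑ k, degeneratePart w i j k l = 0 :=
  sum_doubleCenter_right _ i

theorem sum_degeneratePart_fourth (w : α → β → γ → δ → M) (i : α) (j : β) (k : γ) :
    ∑ l, degeneratePart w i j k l = 0 := by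
  simp only [degeneratePart, sum_doubleCenter, sum_doubleCenter_right, doubleCenter_zero]

theorem sum_firstPairPart_equiv (w : α → β → γ → δ → M) (σ : α ≃ γ) :
    ∑ i, firstPairPart w i (σ i)
      = ∑ i, 𝔼 j, 𝔼 l, w i j (σ i) l - Fintype.card α • 𝔼 i, 𝔼 j, 𝔼 k, 𝔼 l, w i j k l := by
  -- Pinning the index types of `expect_comm` makes it a terminating sort into coordinate order.
  simp only [firstPairPart, sum_doubleCenter_equiv, expect_comm (univ : Finset γ) (univ : Finset β)]

theorem sum_secondPairPart_equiv (w : α → β → γ → δ → M) (τ : β ≃ δ) :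
    ∑ j, secondPairPart w j (τ j)
      = ∑ j, 𝔼 i, 𝔼 k, w i j k (τ j) - Fintype.card β • 𝔼 i, 𝔼 j, 𝔼 k, 𝔼 l, w i j k l := by
  simp only [secondPairPart, sum_doubleCenter_equiv,
    expect_comm (univ : Finset β) (univ : Finset α),
    expect_comm (univ : Finset δ) (univ : Finset α),
    expect_comm (univ : Finset δ) (univ : Finset γ)]

theorem sum_degeneratePart_equiv (w : α → β → γ → δ → M) (σ : α ≃ γ) (τ : β ≃ δ) :
    ∑ i, ∑ j, degeneratePart w i j (σ i) (τ j)
      = ∑ i, ∑ j, w i j (σ i) (τ j)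
        - Fintype.card β • ∑ i, 𝔼 j, 𝔼 l, w i j (σ i) l
        - Fintype.card α • ∑ j, 𝔼 i, 𝔼 k, w i j k (τ j)
        + (Fintype.card α * Fintype.card β) • 𝔼 i, 𝔼 j, 𝔼 k, 𝔼 l, w i j k l := by
  simp only [degeneratePart, sum_doubleCenter, sum_doubleCenter_equiv, sum_sub_distrib,
    expect_sub_distrib, expect_sum_comm, ← smul_sum, ← smul_expect, smul_sub, mul_smul,
    expect_comm (univ : Finset γ) (univ : Finset β)]
  abel

theorem sum_sum_equiv_decomposition (w : α → β → γ → δ → M) (σ : α ≃ γ) (τ : β ≃ δ) :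
    ∑ i, ∑ j, w i j (σ i) (τ j)
      = Fintype.card β • ∑ i, firstPairPart w i (σ i)
        + Fintype.card α • ∑ j, secondPairPart w j (τ j)
        + ∑ i, ∑ j, degeneratePart w i j (σ i) (τ j)
        + (Fintype.card α * Fintype.card β) • 𝔼 i, 𝔼 j, 𝔼 k, 𝔼 l, w i j k l := by
  rw [sum_firstPairPart_equiv, sum_secondPairPart_equiv, sum_degeneratePart_equiv]
  simp only [smul_sub, ← mul_smul, mul_comm (Fintype.card β)]
  abel

theorem firstPairPart_apply (w : α → β → γ → δ → M) (i : α) (k : γ) :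
    firstPairPart w i k
      = 𝔼 j, 𝔼 l, w i j k l - 𝔼 j, 𝔼 k, 𝔼 l, w i j k l - 𝔼 i, 𝔼 j, 𝔼 l, w i j k l
        + 𝔼 i, 𝔼 j, 𝔼 k, 𝔼 l, w i j k l := by
  simp only [firstPairPart, doubleCenter, expect_comm (univ : Finset γ) (univ : Finset β)]

theorem secondPairPart_apply (w : α → β → γ → δ → M) (j : β) (l : δ) :
    secondPairPart w j l
      = 𝔼 i, 𝔼 k, w i j k l - 𝔼 i, 𝔼 k, 𝔼 l, w i j k l - 𝔼 i, 𝔼 j, 𝔼 k, w i j k l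
        + 𝔼 i, 𝔼 j, 𝔼 k, 𝔼 l, w i j k l := by
  simp only [secondPairPart, doubleCenter,
    expect_comm (univ : Finset β) (univ : Finset α),
    expect_comm (univ : Finset δ) (univ : Finset α),
    expect_comm (univ : Finset δ) (univ : Finset γ)]

theorem degeneratePart_apply (w : α → β → γ → δ → M) (i : α) (j : β) (k : γ) (l : δ) :
    degeneratePart w i j k l
      = w i j k l
        - 𝔼 j, 𝔼 k, 𝔼 l, w i j k l - 𝔼 i, 𝔼 k, 𝔼 l, w i j k l
        - 𝔼 i, 𝔼 j, 𝔼 l, w i j k l - 𝔼 i, 𝔼 j, 𝔼 k, w i j k l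
        + 𝔼 k, 𝔼 l, w i j k l + 𝔼 j, 𝔼 l, w i j k l + 𝔼 j, 𝔼 k, w i j k l
        + 𝔼 i, 𝔼 l, w i j k l + 𝔼 i, 𝔼 k, w i j k l + 𝔼 i, 𝔼 j, w i j k l
        - 𝔼 l, w i j k l - 𝔼 k, w i j k l - 𝔼 j, w i j k l - 𝔼 i, w i j k l
        + 𝔼 i, 𝔼 j, 𝔼 k, 𝔼 l, w i j k l := by
  simp only [degeneratePart, doubleCenter, expect_add_distrib, expect_sub_distrib,
    expect_comm (univ : Finset γ) (univ : Finset β)]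
  abel

end Tensor

section SquareTensor

variable {ι κ M : Type*} [Fintype ι] [Fintype κ] [AddCommGroup M] [Module ℚ≥0 M]

/-- The single-indexed part `a_w` of a tensor whose coordinate pairs `(i, k)` and `(j, l)` range
over the same set. -/
def singleIndexPart (w : ι → ι → κ → κ → M) (x : ι) (y : κ) : M :=
  firstPairPart w x y + secondPairPart w x y

theorem sum_singleIndexPart_right (w : ι → ι → κ → κ → M) (x : ι) :
    ∑ y, singleIndexPart w x y = 0 := by
  simp only [singleIndexPart, firstPairPart, secondPairPart, sum_add_distrib,
    sum_doubleCenter_right, add_zero]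

theorem dips_decomposition_general (w : ι → ι → κ → κ → M) :
    (∀ σ : ι ≃ κ,
        ∑ i, ∑ j, w i j (σ i) (σ j)
          = Fintype.card ι • ∑ i, singleIndexPart w i (σ i)
            + ∑ i, ∑ j, degeneratePart w i j (σ i) (σ j)
            + Fintype.card ι ^ 2 • 𝔼 i, 𝔼 j, 𝔼 k, 𝔼 l, w i j k l)
      ∧ (∀ i j k, ∑ l, degeneratePart w i j k l = 0)
      ∧ (∀ i j l, ∑ k, degeneratePart w i j k l = 0)
      ∧ (∀ i k l, ∑ j, degeneratePart w i j k l = 0)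
      ∧ (∀ j k l, ∑ i, degeneratePart w i j k l = 0)
      ∧ (∑ i, ∑ k, singleIndexPart w i k = 0) := by
  refine ⟨fun σ => ?_, sum_degeneratePart_fourth w, sum_degeneratePart_third w,
    sum_degeneratePart_second w, sum_degeneratePart_first w,
    sum_eq_zero fun i _ => sum_singleIndexPart_right w i⟩
  simp only [singleIndexPart, sum_add_distrib, smul_add, sq]
  exact sum_sum_equiv_decomposition w σ σ

end SquareTensor

theorem expect_expect_expect_expect_eq_sum_div {ι K : Type*} [Fintype ι] [Semifield K] [CharZero K]
    (w : ι → ι → ι → ι → K) :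
    𝔼 i, 𝔼 j, 𝔼 k, 𝔼 l, w i j k l
      = (∑ i, ∑ j, ∑ k, ∑ l, w i j k l) / (Fintype.card ι : K) ^ 4 := by
  simp only [Fintype.expect_eq_sum_div_card, ← sum_div, div_div, pow_succ, pow_zero, one_mul,
    mul_assoc]

section FinTensor

variable {N : ℕ} (w : Fin N → Fin N → Fin N → Fin N → ℝ)

theorem aw_eq_singleIndexPart (i j : Fin N) : aw N w i j = singleIndexPart w i j := by
  simp only [aw, singleIndexPart, firstPairPart_apply, secondPairPart_apply,
    Fintype.expect_eq_sum_div_card, Fintype.card_fin, ← sum_div]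
  ring

theorem dw_eq_degeneratePart (i j k l : Fin N) : dw N w i j k l = degeneratePart w i j k l := by
  simp only [dw, degeneratePart_apply, Fintype.expect_eq_sum_div_card, Fintype.card_fin,
    ← sum_div]
  ring

end FinTensor

/-- The Hoeffding-type decomposition of a double-indexed permutation statistic:
the deterministic identity, degeneracy of `d_w`, and centering of `a_w`. -/
theorem dips_decomposition (N : ℕ) (hN : 0 < N)
    (w : Fin N → Fin N → Fin N → Fin N → ℝ) :
    (∀ σ : Equiv.Perm (Fin N),
        ∑ i, ∑ j, w i j (σ i) (σ j)
          = (N : ℝ) * ∑ i, aw N w i (σ i)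
            + ∑ i, ∑ j, dw N w i j (σ i) (σ j)
            + (N : ℝ) ^ 2 *
              ((∑ i', ∑ j', ∑ k', ∑ l', w i' j' k' l') / (N : ℝ) ^ 4))
      ∧ (∀ i j k, ∑ l, dw N w i j k l = 0)
      ∧ (∀ i j l, ∑ k, dw N w i j k l = 0)
      ∧ (∀ i k l, ∑ j, dw N w i j k l = 0)
      ∧ (∀ j k l, ∑ i, dw N w i j k l = 0)
      ∧ (∑ i, ∑ j, aw N w i j = 0) := by
  simpa only [aw_eq_singleIndexPart, dw_eq_degeneratePart, expect_expect_expect_expect_eq_sum_div,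
    nsmul_eq_mul, Nat.cast_pow, Fintype.card_fin] using dips_decomposition_general w
end

section
/- Let A = [a(i,j)] ∈ R^{N×N} be a (possibly random) matrix, independent of π, satisfying Σ_{i,j∈[N]} a(i,j) = 0 almost surely. Let G_1,...,G_N be i.i.d. standard Gaussian random variables independent of (A, π). Then for every λ ∈ R: E[ exp( λ Σ_{i=1}^N a(i,π(i)) ) ] ≤ E[ exp( 2√3 · λ Σ_{i=1}^N a(i,π(i)) G_i ) ]. -/
open scoped BigOperators Classical ENNReal
open MeasureTheory ProbabilityTheory

/-- Standard Gaussian product measure on `Fin n → ℝ` (i.i.d. `N(0,1)` coordinates). -/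
noncomputable def gaussPi (n : ℕ) : Measure (Fin n → ℝ) :=
  Measure.pi (fun _ : Fin n => gaussianReal 0 1)

/-!
The argument is Chatterjee's exchangeable pair method, applied to one matrix at a time. Composing a
permutation with a random transposition turns the statistic `f σ = ∑ a i (σ i)` of a centred matrix
into an exchangeable pair whose drift is proportional to `f` and whose conditional variance is
controlled by `W = 2 V + 2 m`, where `V σ = ∑ (a i (σ i))²` and `m` is the average of `V`. The
tangent line of `exp` then gives `∑ exp f ≤ ∑ exp W`, and the average `m` is absorbed at the cost of
doubling the exponent: `∑ exp f ≤ ∑ exp (4 V)`. Here `exp (4 V σ)` is the exponential moment of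
`2√2 ∑ a i (σ i) G i`, and `2√2 ≤ 2√3`.
-/

theorem mul_sinh_le_sq_mul_cosh (x : ℝ) : x * Real.sinh x ≤ x ^ 2 * Real.cosh x := by
  have hderiv (t : ℝ) :
      HasDerivAt (fun t => t * Real.cosh t - Real.sinh t) (t * Real.sinh t) t :=
    (((hasDerivAt_id t).mul (Real.hasDerivAt_cosh t)).sub (Real.hasDerivAt_sinh t)).congr_deriv
      (by simp)
  have hmono : Monotone fun t => t * Real.cosh t - Real.sinh t := by
    refine monotone_of_deriv_nonneg (fun t => (hderiv t).differentiableAt) fun t => ?_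
    rw [(hderiv t).deriv]
    rcases le_total 0 t with ht | ht
    · exact mul_nonneg ht (Real.sinh_nonneg_iff.2 ht)
    · exact mul_nonneg_of_nonpos_of_nonpos ht (Real.sinh_nonpos_iff.2 ht)
  have hnonneg : 0 ≤ x * (x * Real.cosh x - Real.sinh x) := by
    rcases le_total 0 x with hx | hx
    · exact mul_nonneg hx (by simpa using hmono hx)
    · exact mul_nonneg_of_nonpos_of_nonpos hx (by simpa using hmono hx)
  linarith

theorem sub_mul_exp_sub_exp_le (x y : ℝ) :
    (x - y) * (Real.exp x - Real.exp y) ≤ (x - y) ^ 2 * (Real.exp x + Real.exp y) / 2 := by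
  obtain ⟨m, u, rfl, rfl⟩ : ∃ m u, x = m + u ∧ y = m - u :=
    ⟨(x + y) / 2, (x - y) / 2, by ring, by ring⟩
  calc (m + u - (m - u)) * (Real.exp (m + u) - Real.exp (m - u))
      = 4 * Real.exp m * (u * Real.sinh u) := by
        rw [Real.sinh_eq, Real.exp_add, sub_eq_add_neg m u, Real.exp_add]; ring
    _ ≤ 4 * Real.exp m * (u ^ 2 * Real.cosh u) := by
        gcongr 4 * Real.exp m * ?_
        exact mul_sinh_le_sq_mul_cosh u
    _ = (m + u - (m - u)) ^ 2 * (Real.exp (m + u) + Real.exp (m - u)) / 2 := by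
        rw [Real.cosh_eq, Real.exp_add, sub_eq_add_neg m u, Real.exp_add]; ring

theorem exp_add_sub_mul_exp_le (x y : ℝ) : Real.exp x + (y - x) * Real.exp x ≤ Real.exp y := by
  calc Real.exp x + (y - x) * Real.exp x = Real.exp x * (y - x + 1) := by ring
    _ ≤ Real.exp x * Real.exp (y - x) := by gcongr; exact Real.add_one_le_exp _
    _ = Real.exp y := by rw [← Real.exp_add, add_sub_cancel]

section FiniteSums

variable {S : Type*} [Fintype S]

theorem sum_exp_le_sum_exp_of_sum_mul_exp_le {f g : S → ℝ}
    (h : ∑ s, f s * Real.exp (f s) ≤ ∑ s, g s * Real.exp (f s)) :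
    ∑ s, Real.exp (f s) ≤ ∑ s, Real.exp (g s) := by
  calc ∑ s, Real.exp (f s)
      ≤ ∑ s, Real.exp (f s) + (∑ s, g s * Real.exp (f s) - ∑ s, f s * Real.exp (f s)) :=
        le_add_of_nonneg_right (sub_nonneg.2 h)
    _ = ∑ s, (Real.exp (f s) + (g s - f s) * Real.exp (f s)) := by
        simp only [sub_mul, Finset.sum_add_distrib, Finset.sum_sub_distrib]
    _ ≤ ∑ s, Real.exp (g s) := Finset.sum_le_sum fun s _ => exp_add_sub_mul_exp_le (f s) (g s)

theorem sum_exp_add_le_sum_exp_two_mul {u : S → ℝ} {m : ℝ} (hm : 0 ≤ ∑ s, (u s - m)) :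
    ∑ s, Real.exp (u s + m) ≤ ∑ s, Real.exp (2 * u s) := by
  have hcorr (s : S) : (u s - m) * Real.exp (2 * m) ≤ (u s - m) * Real.exp (u s + m) := by
    rcases le_total m (u s) with h | h
    · exact mul_le_mul_of_nonneg_left (Real.exp_le_exp.2 (by linarith)) (sub_nonneg.2 h)
    · exact mul_le_mul_of_nonpos_left (Real.exp_le_exp.2 (by linarith)) (sub_nonpos.2 h)
  have hsum : 0 ≤ ∑ s, (u s - m) * Real.exp (u s + m) := by
    refine (mul_nonneg hm (Real.exp_pos (2 * m)).le).trans ?_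
    rw [Finset.sum_mul]
    exact Finset.sum_le_sum fun s _ => hcorr s
  refine sum_exp_le_sum_exp_of_sum_mul_exp_le (sub_nonneg.1 ?_)
  rw [← Finset.sum_sub_distrib]
  exact hsum.trans_eq (Finset.sum_congr rfl fun s _ => by ring)

theorem sum_sub_mul_exp_le_of_involutive {τ : S → S} (hτ : Function.Involutive τ) (f : S → ℝ) :
    ∑ s, (f s - f (τ s)) * Real.exp (f s) ≤
      (∑ s, (f s - f (τ s)) ^ 2 * Real.exp (f s)) / 2 := by
  have hinv (F : S → ℝ) : ∑ s, F (τ s) = ∑ s, F s := Equiv.sum_comp hτ.toPerm F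
  have hdrift : ∑ s, (f s - f (τ s)) * (Real.exp (f s) - Real.exp (f (τ s))) =
      2 * ∑ s, (f s - f (τ s)) * Real.exp (f s) := by
    have := hinv fun s => (f s - f (τ s)) * Real.exp (f s)
    simp only [hτ _] at this
    rw [two_mul]
    nth_rewrite 2 [← this]
    rw [← Finset.sum_add_distrib]
    exact Finset.sum_congr rfl fun s _ => by ring
  have hvar : ∑ s, (f s - f (τ s)) ^ 2 * (Real.exp (f s) + Real.exp (f (τ s))) / 2 =
      ∑ s, (f s - f (τ s)) ^ 2 * Real.exp (f s) := by
    have := hinv fun s => (f s - f (τ s)) ^ 2 * Real.exp (f s)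
    simp only [hτ _] at this
    rw [← add_halves (∑ s, (f s - f (τ s)) ^ 2 * Real.exp (f s))]
    nth_rewrite 2 [← this]
    rw [← add_div, ← Finset.sum_add_distrib, Finset.sum_div]
    exact Finset.sum_congr rfl fun s _ => by ring
  have hle := Finset.sum_le_sum fun s (_ : s ∈ Finset.univ) =>
    sub_mul_exp_sub_exp_le (f s) (f (τ s))
  rw [hdrift, hvar] at hle
  linarith

-- For `s` and `k` uniform, `(s, τ k s)` is an exchangeable pair; `hdrift` is its Stein equation and
-- `hvar` its conditional variance bound, both multiplied by the number of `k`.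
theorem sum_exp_le_sum_exp_of_involutive {κ : Type*} [Fintype κ] {τ : κ → S → S}
    (hτ : ∀ k, Function.Involutive (τ k)) {f W : S → ℝ} {c : ℝ} (hc : 0 < c)
    (hdrift : ∀ s, ∑ k, (f s - f (τ k s)) = c * f s)
    (hvar : ∀ s, ∑ k, (f s - f (τ k s)) ^ 2 ≤ 2 * c * W s) :
    ∑ s, Real.exp (f s) ≤ ∑ s, Real.exp (W s) := by
  refine sum_exp_le_sum_exp_of_sum_mul_exp_le (le_of_mul_le_mul_left ?_ hc)
  calc c * ∑ s, f s * Real.exp (f s)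
      = ∑ k, ∑ s, (f s - f (τ k s)) * Real.exp (f s) := by
        rw [Finset.sum_comm, Finset.mul_sum]
        simp only [← Finset.sum_mul, hdrift, mul_assoc]
    _ ≤ ∑ k, (∑ s, (f s - f (τ k s)) ^ 2 * Real.exp (f s)) / 2 :=
        Finset.sum_le_sum fun k _ => sum_sub_mul_exp_le_of_involutive (hτ k) f
    _ = (∑ s, (∑ k, (f s - f (τ k s)) ^ 2) * Real.exp (f s)) / 2 := by
        rw [← Finset.sum_div, Finset.sum_comm]
        simp only [Finset.sum_mul]
    _ ≤ (∑ s, 2 * c * W s * Real.exp (f s)) / 2 := by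
        gcongr with s
        exact hvar s
    _ = c * ∑ s, W s * Real.exp (f s) := by
        rw [Finset.sum_div, Finset.mul_sum]
        exact Finset.sum_congr rfl fun s _ => by ring

end FiniteSums

section PermSum

variable {ι : Type*} [Fintype ι]

/-- The single-indexed permutation statistic `∑ i, a(i, σ(i))` of the array `a`. -/
def permSum {M : Type*} [AddCommMonoid M] (a : ι → ι → M) (σ : Equiv.Perm ι) : M :=
  ∑ i, a i (σ i)

theorem sum_sum_apply_perm_right {M : Type*} [AddCommMonoid M] (a : ι → ι → M)
    (σ : Equiv.Perm ι) : ∑ i, ∑ j, a i (σ j) = ∑ i, ∑ j, a i j :=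
  Finset.sum_congr rfl fun i _ => Equiv.sum_comp σ (a i)

theorem sum_sum_apply_perm_left {M : Type*} [AddCommMonoid M] (a : ι → ι → M)
    (σ : Equiv.Perm ι) : ∑ i, ∑ j, a j (σ i) = ∑ i, ∑ j, a i j := by
  rw [Finset.sum_comm, sum_sum_apply_perm_right]

variable [DecidableEq ι]

theorem permSum_sub_permSum_mul_swap {M : Type*} [AddCommGroup M] (a : ι → ι → M)
    (σ : Equiv.Perm ι) (i j : ι) :
    permSum a σ - permSum a (σ * Equiv.swap i j) =
      a i (σ i) + a j (σ j) - a i (σ j) - a j (σ i) := by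
  rcases eq_or_ne i j with rfl | hij
  · rw [Equiv.swap_self, ← Equiv.Perm.one_def, mul_one]
    abel
  have hsupp : ∀ k ∉ ({i, j} : Finset ι), a k (σ k) - a k ((σ * Equiv.swap i j) k) = 0 := by
    intro k hk
    simp only [Finset.mem_insert, Finset.mem_singleton, not_or] at hk
    simp [Equiv.swap_apply_of_ne_of_ne hk.1 hk.2]
  rw [permSum, permSum, ← Finset.sum_sub_distrib,
    ← Finset.sum_subset (Finset.subset_univ {i, j}) fun k _ hk => hsupp k hk, Finset.sum_pair hij]
  simp only [Equiv.Perm.mul_apply, Equiv.swap_apply_left, Equiv.swap_apply_right]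
  abel

theorem sum_sum_permSum_sub_permSum_mul_swap {R : Type*} [CommRing R] (a : ι → ι → R)
    (σ : Equiv.Perm ι) :
    ∑ i, ∑ j, (permSum a σ - permSum a (σ * Equiv.swap i j)) =
      2 * (Fintype.card ι * permSum a σ - ∑ i, ∑ j, a i j) := by
  simp only [permSum_sub_permSum_mul_swap]
  simp only [Finset.sum_add_distrib, Finset.sum_sub_distrib, sum_sum_apply_perm_right a,
    sum_sum_apply_perm_left a, Finset.sum_const, Finset.card_univ, nsmul_eq_mul,
    ← Finset.mul_sum, permSum]
  ring

theorem sum_sum_sq_permSum_sub_permSum_mul_swap_le (a : ι → ι → ℝ) (σ : Equiv.Perm ι) :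
    ∑ i, ∑ j, (permSum a σ - permSum a (σ * Equiv.swap i j)) ^ 2 ≤
      8 * (Fintype.card ι * permSum (fun i j => a i j ^ 2) σ + ∑ i, ∑ j, a i j ^ 2) := by
  have hsq (p q r s : ℝ) : (p + q - r - s) ^ 2 ≤ 4 * (p ^ 2 + q ^ 2 + r ^ 2 + s ^ 2) := by
    nlinarith [sq_nonneg (p - q), sq_nonneg (p + r), sq_nonneg (p + s), sq_nonneg (q + r),
      sq_nonneg (q + s), sq_nonneg (r - s)]
  calc ∑ i, ∑ j, (permSum a σ - permSum a (σ * Equiv.swap i j)) ^ 2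
      ≤ ∑ i, ∑ j, 4 * (a i (σ i) ^ 2 + a j (σ j) ^ 2 + a i (σ j) ^ 2 + a j (σ i) ^ 2) := by
        gcongr with i _ j
        rw [permSum_sub_permSum_mul_swap]
        exact hsq ..
    _ = 8 * (Fintype.card ι * permSum (fun i j => a i j ^ 2) σ + ∑ i, ∑ j, a i j ^ 2) := by
        simp only [← Finset.mul_sum, Finset.sum_add_distrib,
          sum_sum_apply_perm_right fun i j => a i j ^ 2,
          sum_sum_apply_perm_left fun i j => a i j ^ 2, Finset.sum_const, Finset.card_univ,
          nsmul_eq_mul, permSum]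
        ring

theorem sum_card_mul_permSum_sub_sum_sum {R : Type*} [CommRing R] [NoZeroDivisors R] [CharZero R]
    (a : ι → ι → R) :
    ∑ σ, (Fintype.card ι * permSum a σ - ∑ i, ∑ j, a i j) = 0 := by
  have hswap (i j : ι) : ∑ σ, (permSum a σ - permSum a (σ * Equiv.swap i j)) = 0 := by
    rw [Finset.sum_sub_distrib, sub_eq_zero]
    exact (Equiv.sum_comp (Equiv.mulRight (Equiv.swap i j)) (permSum a)).symm
  have hzero : ∑ σ, ∑ i, ∑ j, (permSum a σ - permSum a (σ * Equiv.swap i j)) = 0 := by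
    rw [Finset.sum_comm]
    refine Finset.sum_eq_zero fun i _ => ?_
    rw [Finset.sum_comm]
    exact Finset.sum_eq_zero fun j _ => hswap i j
  simpa only [sum_sum_permSum_sub_permSum_mul_swap, ← Finset.mul_sum, mul_eq_zero,
    two_ne_zero, false_or] using hzero

theorem sum_exp_permSum_le_sum_exp_permSum_sq {a : ι → ι → ℝ} (ha : ∑ i, ∑ j, a i j = 0) :
    ∑ σ, Real.exp (permSum a σ) ≤ ∑ σ, Real.exp (4 * permSum (fun i j => a i j ^ 2) σ) := by
  rcases isEmpty_or_nonempty ι with _ | _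
  · simp [permSum]
  have hcard : (0 : ℝ) < Fintype.card ι := Nat.cast_pos.2 Fintype.card_pos
  set V := permSum fun i j => a i j ^ 2 with hV
  set m := (∑ i, ∑ j, a i j ^ 2) / Fintype.card ι
  have hm_card : Fintype.card ι * m = ∑ i, ∑ j, a i j ^ 2 := mul_div_cancel₀ _ hcard.ne'
  have hmean : ∑ σ, (2 * V σ - 2 * m) = 0 := by
    have := sum_card_mul_permSum_sub_sum_sum fun i j => a i j ^ 2
    rw [← hm_card] at this
    simp only [← hV, ← mul_sub, ← Finset.mul_sum, mul_eq_zero, hcard.ne', false_or] at this ⊢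
    exact .inr this
  calc ∑ σ, Real.exp (permSum a σ) ≤ ∑ σ, Real.exp (2 * V σ + 2 * m) := by
        refine sum_exp_le_sum_exp_of_involutive (κ := ι × ι) (c := 2 * Fintype.card ι)
          (τ := fun p σ => σ * Equiv.swap p.1 p.2) (fun p σ => Equiv.mul_swap_mul_self ..)
          (by positivity) (fun σ => ?_) fun σ => ?_
        · rw [Fintype.sum_prod_type, sum_sum_permSum_sub_permSum_mul_swap, ha]
          ring
        · rw [Fintype.sum_prod_type]
          refine (sum_sum_sq_permSum_sub_permSum_mul_swap_le a σ).trans_eq ?_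
          rw [← hV, ← hm_card]
          ring
    _ ≤ ∑ σ, Real.exp (2 * (2 * V σ)) := sum_exp_add_le_sum_exp_two_mul hmean.ge
    _ = ∑ σ, Real.exp (4 * V σ) := Finset.sum_congr rfl fun σ _ => by ring_nf

end PermSum

section Gaussian

variable {ι : Type*} [Fintype ι]

theorem lintegral_exp_sum_mul_pi_gaussianReal (b : ι → ℝ) :
    ∫⁻ g, ENNReal.ofReal (Real.exp (∑ i, b i * g i)) ∂(Measure.pi fun _ => gaussianReal 0 1) =
      ENNReal.ofReal (Real.exp (∑ i, b i ^ 2 / 2)) := by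
  have hint : ∫ g, Real.exp (∑ i, b i * g i) ∂(Measure.pi fun _ => gaussianReal 0 1) =
      Real.exp (∑ i, b i ^ 2 / 2) := by
    simp only [Real.exp_sum]
    rw [integral_fintype_prod_eq_prod fun i x => Real.exp (b i * x)]
    refine Finset.prod_congr rfl fun i _ => ?_
    simpa [mgf] using congrFun (mgf_id_gaussianReal (μ := 0) (v := 1)) (b i)
  have hintegrable := Integrable.of_integral_ne_zero (hint.trans_ne (Real.exp_ne_zero _))
  rw [← hint, ofReal_integral_eq_lintegral_ofReal hintegrable
    (Filter.Eventually.of_forall fun g => (Real.exp_pos _).le)]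

theorem sum_exp_permSum_le_sum_lintegral [DecidableEq ι] {a : ι → ι → ℝ}
    (ha : ∑ i, ∑ j, a i j = 0) {c : ℝ} (hc : 8 ≤ c ^ 2) :
    ∑ σ, ENNReal.ofReal (Real.exp (permSum a σ)) ≤
      ∑ σ : Equiv.Perm ι, ∫⁻ g, ENNReal.ofReal (Real.exp (∑ i, c * a i (σ i) * g i))
        ∂(Measure.pi fun _ => gaussianReal 0 1) := by
  simp only [lintegral_exp_sum_mul_pi_gaussianReal]
  rw [← ENNReal.ofReal_sum_of_nonneg fun _ _ => (Real.exp_pos _).le,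
    ← ENNReal.ofReal_sum_of_nonneg fun _ _ => (Real.exp_pos _).le]
  refine ENNReal.ofReal_le_ofReal ((sum_exp_permSum_le_sum_exp_permSum_sq ha).trans ?_)
  gcongr with σ
  rw [permSum, Finset.mul_sum]
  gcongr with i
  nlinarith [sq_nonneg (a i (σ i))]

end Gaussian

theorem randomization_single_index_general
    {Ω ι : Type*} [MeasurableSpace Ω] [Fintype ι] [DecidableEq ι] (μ : Measure Ω)
    (A : Ω → ι → ι → ℝ) (hcent : ∀ᵐ ω ∂μ, ∑ i, ∑ j, A ω i j = 0)
    {c : ℝ} (hc : 8 ≤ c ^ 2) (lam : ℝ) :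
    (∫⁻ ω, (∑ σ : Equiv.Perm ι, ENNReal.ofReal (Real.exp (lam * ∑ i, A ω i (σ i))))
        / ((Fintype.card ι).factorial : ℝ≥0∞) ∂μ)
      ≤
    (∫⁻ ω, (∑ σ : Equiv.Perm ι,
        ∫⁻ g, ENNReal.ofReal (Real.exp (c * lam * ∑ i, A ω i (σ i) * g i))
          ∂(Measure.pi fun _ => gaussianReal 0 1))
        / ((Fintype.card ι).factorial : ℝ≥0∞) ∂μ) := by
  refine lintegral_mono_ae ?_
  filter_upwards [hcent] with ω hω
  have hω' : ∑ i, ∑ j, lam * A ω i j = 0 := by simp only [← Finset.mul_sum, hω, mul_zero]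
  have key := sum_exp_permSum_le_sum_lintegral hω' hc
  refine ENNReal.div_le_div_right ?_ _
  simpa only [permSum, Finset.mul_sum, mul_assoc] using key

/-- Randomization for single-indexed permutation statistics: a possibly random
matrix `A` on a probability space `(Ω, μ)`, independent of the uniform
permutation `π` and of the i.i.d. standard Gaussians `G₁, …, G_N`; the
independence is encoded by writing the expectation as the outer integral over
`Ω` of the average over permutations and the Gaussian product measure.
Expectations of the (nonnegative) exponentials are lower Lebesgue integrals. -/
theorem randomization_single_index
    {Ω : Type*} [MeasurableSpace Ω] (μ : Measure Ω) [IsProbabilityMeasure μ]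
    (N : ℕ) (hN : 0 < N)
    (A : Ω → Fin N → Fin N → ℝ) (hA : Measurable A)
    (hcent : ∀ᵐ ω ∂μ, ∑ i : Fin N, ∑ j : Fin N, A ω i j = 0)
    (lam : ℝ) :
    (∫⁻ ω, (∑ σ : Equiv.Perm (Fin N),
        ENNReal.ofReal (Real.exp (lam * ∑ i : Fin N, A ω i (σ i))))
        / (Nat.factorial N : ℝ≥0∞) ∂μ)
      ≤
    (∫⁻ ω, (∑ σ : Equiv.Perm (Fin N),
        ∫⁻ g, ENNReal.ofReal (Real.exp (2 * Real.sqrt 3 * lam *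
            ∑ i : Fin N, A ω i (σ i) * g i)) ∂(gaussPi N))
        / (Nat.factorial N : ℝ≥0∞) ∂μ) := by
  have hc : (8 : ℝ) ≤ (2 * Real.sqrt 3) ^ 2 := by norm_num [mul_pow]
  simpa only [gaussPi, Fintype.card_fin] using
    randomization_single_index_general μ A hcent hc lam
end
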